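/- Let K be a number field that is a Galois extension of ℚ, and let P_K(x) denote the number of rational primes p ≤ x that split completely in K. Then there exists a constant c₂ > 0 such that P_K(x) = Li(x)/[K:ℚ] + O(x·e^{−c₂√(log x)}), where Li(x) = ∫₂^x dt/log t. -/

import Mathlib

/-!
Write `ζ_K(s) = ∑ a_K(m) m⁻ˢ` and `-ζ_K'/ζ_K = ∑ Λ_K(m) m⁻ˢ`, where `Λ_K(m)` sums `log N P` over the
prime powers `P ^ k` of norm `m`. The proof is de la Vallée Poussin's, carried out for `ζ_K` with as
little analytic continuation as possible.

*Continuation* (`ideal_sum`, `zeta_continuation`). The integral ideals in a fixed class correspond to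
the principal ideals inside an ideal `J`, that is, to the nonzero elements of `J` up to units. Take a
weight on the Minkowski space that is a tent function of the logarithm of the norm times tent
functions of the coordinates dual to a system of fundamental units. Integer translates of the tent
sum to `1`, so the sum of the weight over a unit orbit depends on the norm only and no fundamental
domain is needed. The weight is Lipschitz with bounded support, hence comparing the sum over a
dilated lattice with an integral saves a power of the dilation factor. This gives
`∑ a_K(m) tent(log m - log X) = c X + O(X ^ (1 - 1/n))`, with `n = [K : ℚ]`. The Mellin transform of
the left side is `ζ_K(s)` times an explicit function decaying like `|s|⁻²`; therefore `(s - 1) ζ_K(s)`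
extends holomorphically past `Re s = 1` with polynomial growth.

*Zero-free region* (`zero_free_region`). The identity `Λ_K * a_K = a_K · log` shows that `ζ_K` is the
exponential of a Dirichlet series with nonnegative coefficients, which yields the 3-4-1 inequality and
`|ζ_K(s)| ≥ 1 / ζ_K(Re s)`. For an upper bound of `-Re ζ_K'/ζ_K` at the centre of a disc, zeros in the
disc are removed by Blaschke factors and the zero-free quotient is treated by Borel–Carathéodory
(`re_logDeriv_ge`). As usual a zero too close to `Re s = 1` contradicts 3-4-1, and in the resulting
region `-ζ_K'/ζ_K - 1/(s - 1)` is `O(log² (|t| + 4))`.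

*Riesz means* (`smoothed_psi`, `unsmooth`). Mellin inversion with the kernel `(1 - u)₊` expresses
`∑_{m ≤ x} Λ_K(m) (x - m)` as an absolutely convergent integral. Its main term is subtracted
beforehand by an explicit kernel, and the contour is moved into the zero-free region up to height
`exp √log x`. Convexity of the Riesz mean in `x` then gives `∑_{m ≤ x} Λ_K(m) = x + O(x exp(-c √log x))`.

*Split primes* (`split_theta`). As `K` is Galois, an unramified prime `p` with a prime ideal of norm
`p` above it splits completely; so `Λ_K(p)` is `n log p` if `p` splits completely, and `0` for every
other unramified `p`. Proper prime powers contribute `O(√x)`. Abel summation turns the resulting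
Chebyshev estimate into the estimate with `Li(x) / n`.
-/


open Polynomial Filter
open scoped Classical Pointwise

noncomputable section

/-- The reduction of a rational number mod `p`. -/
def ratRed (g : ℚ) (p : ℕ) : ZMod p := (g.num : ZMod p) * ((g.den : ℕ) : ZMod p)⁻¹

/-- `ord_p(g) = 0`: `p` divides neither the numerator nor the denominator of `g`. -/
def OrdZero (g : ℚ) (p : ℕ) : Prop := ¬ (p : ℤ) ∣ g.num ∧ ¬ p ∣ g.den

/-- The residual index `r_g(p) = [(ℤ/pℤ)^* : ⟨g mod p⟩]`. -/
def resIndex (g : ℚ) (p : ℕ) : ℕ := (p - 1) / orderOf (ratRed g p)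

/-- The decomposition `g = ± g₀ ^ h` with `g₀ > 0` not an exact power of a rational,
`h ≥ 1`, for `g ∈ ℚ ∖ {-1,0,1}`. -/
structure Decomp (g g₀ : ℚ) (h : ℕ) : Prop where
  ne_neg_one : g ≠ -1
  ne_zero : g ≠ 0
  ne_one : g ≠ 1
  g₀_pos : 0 < g₀
  not_power : ¬ ∃ (r : ℚ) (k : ℕ), 2 ≤ k ∧ r ^ k = g₀
  h_pos : 1 ≤ h
  eq : g = g₀ ^ h ∨ g = -(g₀ ^ h)

instance (f : ℚ[X]) : NumberField (SplittingField f) where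

/-- The splitting field `ℚ(ζ_m, g^{1/m})` of `X^m - g` over `ℚ`. -/
abbrev splitField (g : ℚ) (m : ℕ) : Type := SplittingField (X ^ m - C g)

/-- The quadratic field `ℚ(√g₀)`, realised as the splitting field of `X² - g₀`. -/
abbrev quadField (g₀ : ℚ) : Type := SplittingField (X ^ 2 - C g₀)

/-- `d(g₀)`, the discriminant of the quadratic field `ℚ(√g₀)`. -/
def discQuad (g₀ : ℚ) : ℤ := NumberField.discr (quadField g₀)

/-- The field `ℚ(ζ_m, √g₀)`. -/
abbrev cycQuadField (g₀ : ℚ) (m : ℕ) : Type :=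
  SplittingField ((X ^ m - 1) * (X ^ 2 - C g₀))

/-- A rational prime `p` splits completely in the number field `K`:
there are `[K:ℚ]` maximal ideals of the ring of integers above `p`. -/
def SplitsCompletely (K : Type*) [Field K] [NumberField K] (p : ℕ) : Prop :=
  Nat.card {P : Ideal (NumberField.RingOfIntegers K) //
      P.IsMaximal ∧ (p : NumberField.RingOfIntegers K) ∈ P} = Module.finrank ℚ K

/-- The number of primes `p ≤ x` satisfying the predicate `P`. -/
def countPrimes (x : ℝ) (P : ℕ → Prop) : ℕ :=
  ((Finset.range (⌊x⌋₊ + 1)).filter fun p => p.Prime ∧ P p).card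

/-- `N_{g,t}(x)`: the number of odd primes `p ≤ x` with `ord_p(g) = 0` and `r_g(p) = t`. -/
def Ngt (g : ℚ) (t : ℕ) (x : ℝ) : ℕ :=
  countPrimes x fun p => Odd p ∧ OrdZero g p ∧ resIndex g p = t

/-- `R_{g,t}(x)`: the number of odd primes `p ≤ x` with `ord_p(g) = 0` and `t ∣ r_g(p)`. -/
def Rgt (g : ℚ) (t : ℕ) (x : ℝ) : ℕ :=
  countPrimes x fun p => Odd p ∧ OrdZero g p ∧ t ∣ resIndex g p

/-- `π(x; m, 1)`: the number of odd primes `p ≤ x` with `ord_p(g) = 0` and `p ≡ 1 (mod m)`. -/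
def piCount (g : ℚ) (m : ℕ) (x : ℝ) : ℕ :=
  countPrimes x fun p => Odd p ∧ OrdZero g p ∧ p ≡ 1 [MOD m]

/-- `P_K(x)` restricted to odd primes `p` with `ord_p(g) = 0`. -/
def PKg (g : ℚ) (K : Type*) [Field K] [NumberField K] (x : ℝ) : ℕ :=
  countPrimes x fun p => Odd p ∧ OrdZero g p ∧ SplitsCompletely K p

/-- The logarithmic integral `Li(x) = ∫₂ˣ dt / log t`. -/
def Li (x : ℝ) : ℝ := ∫ t in (2:ℝ)..x, 1 / Real.log t

/-- `ψ_d(p) = Σ_{ord χ = d} χ(g mod p)`, the sum over the complex multiplicative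
characters of `(ℤ/pℤ)^*` of order exactly `d`. -/
def psiSum (g : ℚ) (p d : ℕ) : ℂ :=
  ∑ᶠ χ ∈ {χ : MulChar (ZMod p) ℂ | orderOf χ = d}, χ (ratRed g p)

/-- The finset of odd primes `p ≤ x` with `ord_p(g) = 0` and `p ≡ 1 (mod t)`. -/
def primesTo (g : ℚ) (t : ℕ) (x : ℝ) : Finset ℕ :=
  (Finset.range (⌊x⌋₊ + 1)).filter fun p => p.Prime ∧ Odd p ∧ OrdZero g p ∧ p ≡ 1 [MOD t]

/-- The `linear' contribution `L_{g,t}(x)`. -/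
def Lgt (g : ℚ) (h t : ℕ) (x : ℝ) : ℂ :=
  (1 / (t : ℂ)) * ∑ p ∈ primesTo g t x, ∑ d ∈ (Nat.gcd h t).divisors, psiSum g p d

/-- The `quadratic' contribution `Q_{g,t}(x)`. -/
def Qgt (g : ℚ) (h t : ℕ) (x : ℝ) : ℂ :=
  (1 / (t : ℂ)) * ∑ p ∈ primesTo g t x,
    ∑ d ∈ (Nat.gcd (2 * h) t).divisors.filter (fun d => ¬ d ∣ h), psiSum g p d

/-- `M_{g,t}(x) = L_{g,t}(x) + Q_{g,t}(x)`. -/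
def Mgt (g : ℚ) (h t : ℕ) (x : ℝ) : ℂ := Lgt g h t x + Qgt g h t x

/-- The weight `w_{g,t}(p)` of Theorem 1 of the paper. -/
def wgt (g g₀ : ℚ) (h t p : ℕ) : ℚ :=
  let e := padicValNat 2 h
  let τ := padicValNat 2 t
  let ht := h / Nat.gcd h t
  let ε₁ : ℚ := if τ < e then 0 else if τ = e then -1 else 1
  if 0 < g ∧ p ≡ 1 [MOD t] ∧ Nat.gcd ((p - 1) / t) ht = 1 then
    1 + ε₁ / 2 * (1 + (-1 : ℚ) ^ ((p - 1) / 2 ^ e)) * (jacobiSym (discQuad g₀) p : ℚ)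
  else if g < 0 ∧ ¬ 2 ∣ ht ∧ p ≡ 1 [MOD Nat.lcm (2 ^ (e + 1)) t] ∧
      Nat.gcd ((p - 1) / t) ht = 1 then
    1 + ε₁ * (-1 : ℚ) ^ ((p - 1) / 2 ^ (e + 1)) * (jacobiSym (discQuad g₀) p : ℚ)
  else if g < 0 ∧ 2 ∣ ht ∧ p ≡ 1 [MOD 2 * t] ∧ Nat.gcd ((p - 1) / (2 * t)) ht = 1 then 2
  else 0

/-- `G^m = {x^m : x ∈ G}`. -/
def powSet (G : Type*) [Monoid G] (m : ℕ) : Set G := Set.range fun x : G => x ^ m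

/-- `ρ`: the density `|a·G^{2h} ∩ G^t| / |G^{2h}|` in a group `G` of order `n`
(and `0` if `t ∤ n`). -/
def rhoDen (G : Type*) [Group G] (n : ℕ) (a : G) (h t : ℕ) : ℚ :=
  if t ∣ n then
    (((a • powSet G (2 * h)) ∩ powSet G t).ncard : ℚ) / ((powSet G (2 * h)).ncard : ℚ)
  else 0

/-- `r_{g,t}(p) = t_h · ρ_{sgn g, (d(g₀)/p), t}`, computed with respect to the
generator `γ` of `(ℤ/pℤ)^*`. -/
def rgt (g g₀ : ℚ) (h t p : ℕ) (γ : (ZMod p)ˣ) : ℚ :=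
  (t / Nat.gcd t h : ℕ) *
    rhoDen (ZMod p)ˣ (p - 1)
      ((if 0 < g then 1 else -1) * (if jacobiSym (discQuad g₀) p = 1 then 1 else γ ^ h)) h t

/-- The coefficients of the Dedekind zeta function of `K`: the number of ideals of
the ring of integers of `K` of absolute norm `n`. -/
def zetaCoeff (K : Type*) [Field K] [NumberField K] (n : ℕ) : ℂ :=
  (Nat.card {I : Ideal (NumberField.RingOfIntegers K) // Ideal.absNorm I = n} : ℂ)

/-- The Riemann Hypothesis for the Dedekind zeta function `ζ_K` of a number field `K`:
any analytic continuation of the Dirichlet series `Σ_I N(I)^{-s}` off `s = 1` has all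
its zeros in the critical strip on the line `Re s = 1/2`. -/
def DedekindRH (K : Type*) [Field K] [NumberField K] : Prop :=
  ∀ Z : ℂ → ℂ, (∀ s : ℂ, s ≠ 1 → AnalyticAt ℂ Z s) →
    (∀ s : ℂ, 1 < s.re → Z s = LSeries (zetaCoeff K) s) →
    ∀ s : ℂ, 0 < s.re → s.re < 1 → Z s = 0 → s.re = 1 / 2

/-- The Ramanujan sum `c_d(m)`. -/
def ramanujanSum (d m : ℕ) : ℂ :=
  ∑ k ∈ (Finset.Icc 1 d).filter (fun k => Nat.gcd k d = 1),
    Complex.exp (2 * Real.pi * Complex.I * k * m / d)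

/-- The sum `Σ_{ord χ = d} χ(γ)` over the complex characters of `G` of order exactly `d`. -/
def charOrdSum {G : Type*} [Group G] (d : ℕ) (γ : G) : ℂ :=
  ∑ᶠ χ ∈ {χ : G →* ℂˣ | orderOf χ = d}, ((χ γ : ℂˣ) : ℂ)

end

noncomputable section

/-! ### Lattice points -/

section LatticeSums

open MeasureTheory Module

/-- A ball of radius `r ≥ 1` contains `O(r ^ n)` points of a lattice of rank `n`: a lattice point is
determined by the integer parts of its coordinates. -/
lemma card_lattice_le {E ι : Type*} [NormedAddCommGroup E] [NormedSpace ℝ E] [Fintype ι]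
    (b : Basis ι ℝ E) : ∃ C : ℝ, ∀ r : ℝ, 1 ≤ r →
      ∀ s : Finset (Submodule.span ℤ (Set.range b)), (∀ v ∈ s, ‖(v : E)‖ ≤ r) →
        (s.card : ℝ) ≤ C * r ^ (Fintype.card ι) := by
  classical
  have : FiniteDimensional ℝ E := b.finiteDimensional_of_finite
  set N₀ := ‖(b.equivFunL : E →L[ℝ] (ι → ℝ))‖ with hN₀
  refine ⟨(2 * N₀ + 3) ^ (Fintype.card ι), fun r hr s hs => ?_⟩
  set M : ℤ := ⌈N₀ * r⌉ with hM
  have hrep : ∀ v : E, ∀ i, |b.repr v i| ≤ N₀ * ‖v‖ := fun v i => by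
    have h1 := (b.equivFunL : E →L[ℝ] (ι → ℝ)).le_opNorm v
    have h2 := norm_le_pi_norm ((b.equivFunL : E →L[ℝ] (ι → ℝ)) v) i
    exact h2.trans h1
  have hN0 : 0 ≤ N₀ := norm_nonneg _
  have hM0 : 0 ≤ M := Int.ceil_nonneg (by positivity)
  let f : Submodule.span ℤ (Set.range b) → (ι → ℤ) := fun v i => ⌊b.repr (v : E) i⌋
  have hinj : Function.Injective f := by
    intro v w h
    apply Subtype.ext
    rw [← ZSpan.floor_eq_self_of_mem b v v.2, ← ZSpan.floor_eq_self_of_mem b w w.2]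
    apply b.repr.injective
    ext i
    rw [ZSpan.repr_floor_apply, ZSpan.repr_floor_apply]
    exact_mod_cast congrFun h i
  have hmaps : ∀ v ∈ s, f v ∈ Finset.Icc (fun _ : ι => -M) (fun _ => M) := by
    intro v hv
    have h : ∀ i, |b.repr (v : E) i| ≤ M := fun i =>
      ((hrep v i).trans (mul_le_mul_of_nonneg_left (hs v hv) hN0)).trans (Int.le_ceil _)
    rw [Finset.mem_Icc]
    refine ⟨fun i => ?_, fun i => ?_⟩
    · refine Int.le_floor.mpr ?_
      push_cast
      exact (abs_le.mp (h i)).1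
    · refine Int.cast_le.mp ((Int.floor_le _).trans (abs_le.mp (h i)).2)
  have hcard := Finset.card_le_card_of_injOn f hmaps hinj.injOn
  rw [Pi.card_Icc] at hcard
  simp only [Int.card_Icc, Finset.prod_const, Finset.card_univ] at hcard
  rw [← mul_pow]
  have h3 : (((M + 1 - -M).toNat : ℕ) : ℝ) ≤ (2 * N₀ + 3) * r := by
    have : (((M + 1 - -M).toNat : ℕ) : ℤ) = 2 * M + 1 := by
      rw [Int.toNat_of_nonneg (by omega)]; ring
    have h4 : (((M + 1 - -M).toNat : ℕ) : ℝ) = 2 * M + 1 := by exact_mod_cast this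
    have h5 := (Int.ceil_lt_add_one (N₀ * r)).le
    rw [h4]
    nlinarith
  calc (s.card : ℝ) ≤ (((M + 1 - -M).toNat ^ Fintype.card ι : ℕ) : ℝ) := by exact_mod_cast hcard
    _ ≤ _ := by push_cast; exact pow_le_pow_left₀ (by positivity) h3 _

/-- Riemann sums of a Lipschitz function of bounded support over the dilates of a lattice, with
an error one power of the dilation factor below the main term. -/
lemma lattice_sum_lipschitz {E ι : Type*} [NormedAddCommGroup E] [NormedSpace ℝ E]
    [Fintype ι] (b : Basis ι ℝ E) (ρ L : ℝ) (hL0 : 0 ≤ L) (φ : E → ℝ)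
    (hL : ∀ x y, |φ x - φ y| ≤ L * ‖x - y‖) (hsupp : ∀ x, ρ ≤ ‖x‖ → φ x = 0) :
    ∃ c C : ℝ, ∀ t : ℝ, 1 ≤ t →
        |∑' v : Submodule.span ℤ (Set.range b), φ (t⁻¹ • (v : E)) - c * t ^ (Fintype.card ι)|
          ≤ C * t ^ (Fintype.card ι) / t := by
  classical
  have : FiniteDimensional ℝ E := b.finiteDimensional_of_finite
  let _ : MeasurableSpace E := borel E
  have : BorelSpace E := ⟨rfl⟩
  let μ : Measure E := Measure.addHaar
  set F := ZSpan.fundamentalDomain b with hF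
  have hFd : IsAddFundamentalDomain (Submodule.span ℤ (Set.range b)) F μ :=
    ZSpan.isAddFundamentalDomain b μ
  have hFm : MeasurableSet F := ZSpan.fundamentalDomain_measurableSet b
  obtain ⟨d, hd⟩ := (ZSpan.fundamentalDomain_isBounded b).exists_norm_le
  have hFfin : μ F ≠ ⊤ := (ZSpan.fundamentalDomain_isBounded b).measure_lt_top.ne
  have hF0 : μ F ≠ 0 := ZSpan.measure_fundamentalDomain_ne_zero b
  have hFpos : 0 < μ.real F := ENNReal.toReal_pos hF0 hFfin
  have hd0 : 0 ≤ d := by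
    have h0 : (0 : E) ∈ F := by
      rw [hF, ZSpan.mem_fundamentalDomain]; intro i; simp
    simpa using hd 0 h0
  obtain ⟨C₀, hC₀⟩ := card_lattice_le b
  set n := Fintype.card ι with hn
  have hfr : finrank ℝ E = n := Module.finrank_eq_card_basis b
  set R : ℝ := |ρ| + d + 1 with hR
  refine ⟨(∫ x, φ x ∂μ) / μ.real F, C₀ * R ^ n * (L * d), fun t ht => ?_⟩
  have ht0 : 0 < t := by linarith
  have hcont : Continuous φ := by
    refine (LipschitzWith.of_dist_le_mul (K := Real.toNNReal L) fun x y => ?_).continuous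
    rw [Real.dist_eq, dist_eq_norm]
    exact (hL x y).trans (mul_le_mul_of_nonneg_right (Real.le_coe_toNNReal L) (norm_nonneg _))
  have hcs : HasCompactSupport φ := HasCompactSupport.intro (isCompact_closedBall (0 : E) ρ)
    fun x hx => hsupp x (by simp at hx; exact hx.le)
  set ψ : E → ℝ := fun x => φ (t⁻¹ • x) with hψ
  have hψc : Continuous ψ := hcont.comp (continuous_const_smul _)
  have hψs : ∀ x, |ρ| * t ≤ ‖x‖ → ψ x = 0 := fun x hx => by
    refine hsupp _ ?_
    rw [norm_smul, norm_inv, Real.norm_of_nonneg ht0.le, ← div_eq_inv_mul, le_div_iff₀ ht0]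
    exact (mul_le_mul_of_nonneg_right (le_abs_self ρ) ht0.le).trans hx
  have hψcs : HasCompactSupport ψ := HasCompactSupport.intro
    (isCompact_closedBall (0 : E) (|ρ| * t)) fun x hx => hψs x (by simp at hx; exact hx.le)
  have hψi : Integrable ψ μ := hψc.integrable_of_hasCompactSupport hψcs
  have hψL : ∀ x y, |ψ x - ψ y| ≤ L / t * ‖x - y‖ := fun x y => by
    refine (hL _ _).trans (le_of_eq ?_)
    rw [← smul_sub, norm_smul, norm_inv, Real.norm_of_nonneg ht0.le]
    field_simp
  have hint : ∫ x, ψ x ∂μ = t ^ n * ∫ x, φ x ∂μ := by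
    rw [hψ, Measure.integral_comp_inv_smul_of_nonneg μ φ ht0.le, hfr, smul_eq_mul]
  have : Countable (Submodule.span ℤ (Set.range b)).toAddSubgroup :=
    inferInstanceAs (Countable (Submodule.span ℤ (Set.range b)))
  have hsum : ∫ x, ψ x ∂μ = ∑' v : Submodule.span ℤ (Set.range b), ∫ x in F, ψ ((v : E) + x) ∂μ :=
    (ZSpan.isAddFundamentalDomain' b μ).integral_eq_tsum'' ψ hψi
  have hWf : {v : Submodule.span ℤ (Set.range b) | ‖(v : E)‖ ≤ R * t}.Finite := by
    have h1 := ZSpan.setFinite_inter b (Metric.isBounded_closedBall (x := (0 : E)) (r := R * t))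
    refine Set.Finite.of_finite_image (f := Subtype.val) (h1.subset ?_) Subtype.val_injective.injOn
    rintro _ ⟨v, hv, rfl⟩
    exact ⟨by simpa using hv, v.2⟩
  set W := hWf.toFinset with hW
  have hWc : (W.card : ℝ) ≤ C₀ * (R * t) ^ n := hC₀ _ (by nlinarith [abs_nonneg ρ]) W
    fun v hv => by simpa [hW] using hv
  have hout : ∀ v ∉ W, |ρ| * t + d ≤ ‖(v : E)‖ := fun v hv => by
    have : R * t < ‖(v : E)‖ := by simpa [hW] using hv
    nlinarith [abs_nonneg ρ]
  have hS1 : ∑' v : Submodule.span ℤ (Set.range b), φ (t⁻¹ • (v : E)) = ∑ v ∈ W, ψ v :=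
    tsum_eq_sum fun v hv => hψs _ (by linarith [hout v hv])
  have hS2 : ∫ x, ψ x ∂μ = ∑ v ∈ W, ∫ x in F, ψ ((v : E) + x) ∂μ := by
    rw [hsum]
    refine tsum_eq_sum fun v hv => ?_
    refine setIntegral_eq_zero_of_forall_eq_zero fun x hx => hψs _ ?_
    have h1 := hout v hv
    have h2 := hd x hx
    have h3 := norm_sub_norm_le (v : E) (-x)
    rw [norm_neg, sub_neg_eq_add] at h3
    change _ ≤ ‖(v : E) + x‖
    linarith
  have hcell : ∀ v ∈ W, |μ.real F * ψ v - ∫ x in F, ψ ((v : E) + x) ∂μ| ≤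
      L / t * d * μ.real F := fun v _ => by
    have hi : IntegrableOn (fun x => ψ ((v : E) + x)) F μ :=
      (hψi.comp_add_left (v : E)).integrableOn
    have e1 : μ.real F * ψ v - ∫ x in F, ψ ((v : E) + x) ∂μ
        = ∫ x in F, (ψ v - ψ ((v : E) + x)) ∂μ := by
      rw [integral_sub (f := fun _ => ψ v) (integrableOn_const hFfin (by simp)) hi]
      simp
    rw [e1, ← Real.norm_eq_abs]
    refine norm_setIntegral_le_of_norm_le_const hFfin.lt_top fun x hx => ?_
    rw [Real.norm_eq_abs]
    refine (hψL _ _).trans ?_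
    rw [show (v : E) - ((v : E) + x) = -x by abel, norm_neg]
    exact mul_le_mul_of_nonneg_left (hd x hx) (by positivity)
  have hfin : |μ.real F * ∑ v ∈ W, ψ v - ∫ x, ψ x ∂μ| ≤
      (C₀ * (R * t) ^ n) * (L / t * d * μ.real F) := by
    rw [hS2, Finset.mul_sum, ← Finset.sum_sub_distrib]
    refine (Finset.abs_sum_le_sum_abs _ _).trans ((Finset.sum_le_sum hcell).trans ?_)
    rw [Finset.sum_const, nsmul_eq_mul]
    exact mul_le_mul_of_nonneg_right hWc (by positivity)
  rw [hS1]
  have e2 : ∑ v ∈ W, ψ v - (∫ x, φ x ∂μ) / μ.real F * t ^ n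
      = (μ.real F * ∑ v ∈ W, ψ v - ∫ x, ψ x ∂μ) / μ.real F := by
    rw [hint]; field_simp
  rw [e2, abs_div, abs_of_pos hFpos, div_le_iff₀ hFpos]
  refine hfin.trans (le_of_eq ?_)
  rw [mul_pow]; field_simp

end LatticeSums

/-! ### Units and a partition of unity -/

section Weight

open NumberField NumberField.InfinitePlace NumberField.Units NumberField.Units.dirichletUnitTheorem

variable (K : Type*) [Field K] [NumberField K]

/-- Linear coordinates on `ℝ^{infinite places}` that vanish on the diagonal and read off the
exponents of a unit in terms of a fundamental system from its logarithms. -/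
lemma exists_log_coords : ∃ c : (InfinitePlace K → ℝ) →ₗ[ℝ] (Fin (rank K) → ℝ),
    (c (fun _ => 1) = 0) ∧
    (∀ (ζ : torsion K) (k : Fin (rank K) → ℤ),
      c (fun w => Real.log (w (((ζ : (𝓞 K)ˣ) * ∏ i, (fundSystem K i) ^ (k i) : (𝓞 K)ˣ) : K)))
        = fun i => (k i : ℝ)) ∧
    ∀ y : InfinitePlace K → ℝ, c y = 0 → ∑ w, (mult w : ℝ) * y w = 0 → y = 0 := by
  have hn : (Module.finrank ℚ K : ℝ) ≠ 0 := by
    exact_mod_cast Module.finrank_pos.ne'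
  let S : (InfinitePlace K → ℝ) →ₗ[ℝ] ℝ := ∑ w, (mult w : ℝ) • LinearMap.proj w
  have hS : ∀ y, S y = ∑ w, (mult w : ℝ) * y w := fun y => by simp [S]
  let P : (InfinitePlace K → ℝ) →ₗ[ℝ] ({w : InfinitePlace K // w ≠ w₀} → ℝ) :=
    LinearMap.pi fun w => (mult w.1 : ℝ) •
      (LinearMap.proj w.1 - (Module.finrank ℚ K : ℝ)⁻¹ • S)
  have hP : ∀ y w, P y w = (mult w.1 : ℝ) * (y w.1 - (Module.finrank ℚ K : ℝ)⁻¹ * S y) :=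
    fun y w => by simp [P]
  let b := (basisUnitLattice K).ofZLatticeBasis ℝ (unitLattice K)
  refine ⟨b.equivFun.toLinearMap ∘ₗ P, ?_, ?_, ?_⟩
  · have h1 : P (fun _ => 1) = 0 := by
      ext w
      rw [hP, hS]
      have : ∑ w : InfinitePlace K, (mult w : ℝ) * 1 = Module.finrank ℚ K := by
        simp_rw [mul_one]
        exact_mod_cast sum_mult_eq (K := K)
      rw [this, inv_mul_cancel₀ hn]
      simp
    simp [h1]
  · intro ζ k
    set u : (𝓞 K)ˣ := (ζ : (𝓞 K)ˣ) * ∏ i, (fundSystem K i) ^ (k i) with hu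
    have h1 : P (fun w => Real.log (w (u : K))) = logEmbedding K (Additive.ofMul u) := by
      ext w
      rw [hP, hS, sum_mult_mul_log, logEmbedding_component]
      simp
    have h2 : logEmbedding K (Additive.ofMul u) = ∑ i, (k i : ℝ) • b i := by
      have h3 : logEmbedding K (Additive.ofMul (ζ : (𝓞 K)ˣ)) = 0 :=
        (logEmbedding_eq_zero_iff (K := K)).2 ζ.2
      rw [hu, ofMul_mul, map_add, h3, zero_add, ofMul_prod, map_sum]
      refine Finset.sum_congr rfl fun i _ => ?_
      rw [ofMul_zpow, map_zsmul, logEmbedding_fundSystem, Module.Basis.ofZLatticeBasis_apply,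
        Int.cast_smul_eq_zsmul]
    rw [LinearMap.comp_apply, h1, h2]
    ext i
    simp [Finsupp.single_apply]
  · intro y hy hSy
    have h1 : P y = 0 := b.equivFun.injective (by simpa using hy)
    have h2 : ∀ w, w ≠ w₀ → y w = 0 := fun w hw => by
      have h3 := hP y ⟨w, hw⟩
      rw [h1, hS, hSy] at h3
      simp only [Pi.zero_apply, mul_zero, sub_zero] at h3
      have : (mult w : ℝ) ≠ 0 := by exact_mod_cast mult_ne_zero
      exact (mul_eq_zero.1 h3.symm).resolve_left this
    ext w
    by_cases hw : w = w₀
    · subst hw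
      rw [Finset.sum_eq_single w₀ (fun w _ hw => by rw [h2 w hw, mul_zero]) (by simp)] at hSy
      have : (mult (w₀ : InfinitePlace K) : ℝ) ≠ 0 := by exact_mod_cast mult_ne_zero
      exact (mul_eq_zero.1 hSy).resolve_left this
    · exact h2 w hw

end Weight

/-- The tent function `max(0, 1 - |u|)`. -/
def tent (u : ℝ) : ℝ := max 0 (1 - |u|)

lemma tent_nonneg (u : ℝ) : 0 ≤ tent u := le_max_left _ _

lemma tent_le_one (u : ℝ) : tent u ≤ 1 := max_le zero_le_one (by linarith [abs_nonneg u])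

lemma tent_eq_zero {u : ℝ} (h : 1 ≤ |u|) : tent u = 0 := max_eq_left (by linarith)

lemma tent_lipschitz (u v : ℝ) : |tent u - tent v| ≤ |u - v| := by
  refine (abs_max_sub_max_le_max _ _ _ _).trans ?_
  rw [sub_self, abs_zero, max_eq_right (abs_nonneg _)]
  rw [show 1 - |u| - (1 - |v|) = -(|u| - |v|) by ring, abs_neg]
  exact abs_abs_sub_abs_le u v

lemma continuous_tent : Continuous tent := by unfold tent; fun_prop

lemma tent_support_int (u : ℝ) (k : ℤ) (hk : k ∉ ({-⌊u⌋, -⌊u⌋ - 1} : Finset ℤ)) :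
    tent (u + k) = 0 := by
  apply tent_eq_zero
  simp only [Finset.mem_insert, Finset.mem_singleton, not_or] at hk
  have h1 := Int.floor_le u
  have h2 := Int.lt_floor_add_one u
  rcases lt_or_gt_of_ne hk.1 with h | h
  · have h3 : k ≤ -⌊u⌋ - 2 := by omega
    have h4 : (k : ℝ) ≤ -⌊u⌋ - 2 := by exact_mod_cast h3
    exact le_abs.2 (Or.inr (by linarith))
  · have h3 : -⌊u⌋ + 1 ≤ k := by omega
    have h4 : -(⌊u⌋ : ℝ) + 1 ≤ k := by exact_mod_cast h3
    exact le_abs.2 (Or.inl (by linarith))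

/-- The integer translates of the tent function form a partition of unity. -/
lemma tent_sum_int (u : ℝ) : ∑ k ∈ ({-⌊u⌋, -⌊u⌋ - 1} : Finset ℤ), tent (u + k) = 1 := by
  have h1 := Int.floor_le u
  have h2 := Int.lt_floor_add_one u
  rw [Finset.sum_pair (by omega)]
  push_cast
  unfold tent
  rw [abs_of_nonneg (by linarith : 0 ≤ u + -(⌊u⌋ : ℝ)),
    abs_of_nonpos (by linarith : u + (-(⌊u⌋ : ℝ) - 1) ≤ 0), max_eq_right (by linarith),
    max_eq_right (by linarith)]
  ring

/-- The integer translates of a product of tents form a partition of unity of `ℝ ^ r`. -/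
lemma tent_partition {r : ℕ} (y : Fin r → ℝ) :
    ∑' k : Fin r → ℤ, ∏ i, tent (y i + k i) = 1 := by
  rw [tsum_eq_sum (s := Fintype.piFinset fun i => ({-⌊y i⌋, -⌊y i⌋ - 1} : Finset ℤ))]
  · rw [← Finset.prod_univ_sum (fun i => ({-⌊y i⌋, -⌊y i⌋ - 1} : Finset ℤ))
      (fun i k => tent (y i + k))]
    simp_rw [tent_sum_int, Finset.prod_const_one]
  · intro k hk
    rw [Fintype.mem_piFinset] at hk
    push Not at hk
    obtain ⟨i, hi⟩ := hk
    exact Finset.prod_eq_zero (Finset.mem_univ i) (tent_support_int _ _ hi)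

/-- A product of Lipschitz functions bounded by `1` is Lipschitz. -/
lemma abs_prod_sub_prod_le {ι : Type*} (s : Finset ι) (f g : ι → ℝ) (hf : ∀ i, |f i| ≤ 1)
    (hg : ∀ i, |g i| ≤ 1) : |∏ i ∈ s, f i - ∏ i ∈ s, g i| ≤ ∑ i ∈ s, |f i - g i| := by
  induction s using Finset.induction_on with
  | empty => simp
  | insert a s ha ih =>
    rw [Finset.prod_insert ha, Finset.prod_insert ha, Finset.sum_insert ha]
    have e : f a * ∏ i ∈ s, f i - g a * ∏ i ∈ s, g i
        = (f a - g a) * ∏ i ∈ s, f i + g a * (∏ i ∈ s, f i - ∏ i ∈ s, g i) := by ring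
    have h1 : |∏ i ∈ s, f i| ≤ 1 := by
      rw [Finset.abs_prod]; exact Finset.prod_le_one (fun i _ => abs_nonneg _) fun i _ => hf i
    rw [e]
    refine (abs_add_le _ _).trans ?_
    rw [abs_mul, abs_mul]
    have h2 := mul_le_mul_of_nonneg_left h1 (abs_nonneg (f a - g a))
    have h3 := mul_le_mul (hg a) ih (abs_nonneg _) zero_le_one
    linarith

/-! ### A Lipschitz weight on the mixed space -/

section Weight

open NumberField NumberField.InfinitePlace NumberField.Units NumberField.Units.dirichletUnitTheorem

variable (K : Type*) [Field K] [NumberField K]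

/-- The weight on logarithmic coordinates: a tent in the logarithm of the norm, times a tent in
each unit coordinate. -/
def logWeight (c : (InfinitePlace K → ℝ) →ₗ[ℝ] (Fin (rank K) → ℝ)) (y : InfinitePlace K → ℝ) : ℝ :=
  tent (∑ w, (mult w : ℝ) * y w) * ∏ i, tent (c y i)

/-- The logarithm is Lipschitz once its argument is truncated to `[exp (-R), exp R]`. -/
lemma clamp_log_lipschitz (R : ℝ) (u v : ℝ) :
    |Real.log (max (Real.exp (-R)) (min (Real.exp R) u)) -
      Real.log (max (Real.exp (-R)) (min (Real.exp R) v))| ≤ Real.exp R * |u - v| := by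
  have key : ∀ a b : ℝ, Real.exp (-R) ≤ a → Real.exp (-R) ≤ b →
      Real.log a - Real.log b ≤ Real.exp R * |a - b| := by
    intro a b ha hb
    have ha0 := (Real.exp_pos (-R)).trans_le ha
    have hb0 := (Real.exp_pos (-R)).trans_le hb
    rw [← Real.log_div ha0.ne' hb0.ne']
    have h1 := Real.log_le_sub_one_of_pos (div_pos ha0 hb0)
    have h2 : a / b - 1 = (a - b) / b := by field_simp
    rw [h2] at h1
    refine h1.trans ?_
    rw [div_le_iff₀ hb0]
    have h3 : 1 ≤ Real.exp R * b := by
      have := mul_le_mul_of_nonneg_left hb (Real.exp_pos R).le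
      rwa [← Real.exp_add, add_neg_cancel, Real.exp_zero] at this
    nlinarith [le_abs_self (a - b), abs_nonneg (a - b)]
  have h0 : |max (Real.exp (-R)) (min (Real.exp R) u) - max (Real.exp (-R)) (min (Real.exp R) v)|
      ≤ |u - v| := by
    refine (abs_max_sub_max_le_max _ _ _ _).trans ?_
    rw [sub_self, abs_zero, max_eq_right (abs_nonneg _)]
    refine (abs_min_sub_min_le_max _ _ _ _).trans ?_
    rw [sub_self, abs_zero, max_eq_right (abs_nonneg _)]
  refine le_trans ?_ (mul_le_mul_of_nonneg_left h0 (Real.exp_pos R).le)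
  rw [abs_sub_le_iff]
  refine ⟨key _ _ (le_max_left _ _) (le_max_left _ _), ?_⟩
  rw [abs_sub_comm]
  exact key _ _ (le_max_left _ _) (le_max_left _ _)

lemma normAtPlace_sub_le (w : InfinitePlace K) (x y : mixedEmbedding.mixedSpace K) :
    |mixedEmbedding.normAtPlace w x - mixedEmbedding.normAtPlace w y| ≤ ‖x - y‖ := by
  have key : ∀ x y : mixedEmbedding.mixedSpace K,
      mixedEmbedding.normAtPlace w x - mixedEmbedding.normAtPlace w y ≤ ‖x - y‖ := fun x y => by
    have h1 := mixedEmbedding.normAtPlace_add_le w (x - y) y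
    rw [sub_add_cancel] at h1
    have h2 : mixedEmbedding.normAtPlace w (x - y) ≤ ‖x - y‖ := by
      rw [mixedEmbedding.norm_eq_sup'_normAtPlace]
      exact Finset.le_sup' (fun w => mixedEmbedding.normAtPlace w (x - y)) (Finset.mem_univ w)
    linarith
  rw [abs_sub_le_iff]
  refine ⟨key x y, ?_⟩
  rw [norm_sub_rev]
  exact key y x

/-- The logarithmic weight extends to a Lipschitz function of bounded support on the mixed
space. -/
lemma exists_weight (c : (InfinitePlace K → ℝ) →ₗ[ℝ] (Fin (rank K) → ℝ))
    (hc : ∀ y : InfinitePlace K → ℝ, c y = 0 → ∑ w, (mult w : ℝ) * y w = 0 → y = 0) :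
    ∃ (φ : mixedEmbedding.mixedSpace K → ℝ) (L ρ : ℝ), 0 ≤ L ∧
      (∀ x y, |φ x - φ y| ≤ L * ‖x - y‖) ∧ (∀ x, ρ ≤ ‖x‖ → φ x = 0) ∧ φ 0 = 0 ∧
      ∀ x, (∀ w, 0 < mixedEmbedding.normAtPlace w x) →
        φ x = logWeight K c fun w => Real.log (mixedEmbedding.normAtPlace w x) := by
  obtain ⟨w₁⟩ : Nonempty (InfinitePlace K) := inferInstance
  let S : (InfinitePlace K → ℝ) →ₗ[ℝ] ℝ := ∑ w, (mult w : ℝ) • LinearMap.proj w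
  have hS : ∀ y, S y = ∑ w, (mult w : ℝ) * y w := fun y => by simp [S]
  -- the support of the weight is bounded because `(S, c)` is injective
  obtain ⟨A, -, hA⟩ := (LinearMap.injective_iff_antilipschitz (S.prod c)).1 (by
    rw [injective_iff_map_eq_zero]
    intro y hy
    have h1 : S y = 0 ∧ c y = 0 := by simpa using hy
    exact hc y h1.2 (by rw [← hS]; exact h1.1))
  set R : ℝ := A + 1 with hR
  have hW0 : ∀ y : InfinitePlace K → ℝ, R ≤ ‖y‖ → logWeight K c y = 0 := fun y hy => by
    have h1 := hA.le_mul_dist y 0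
    rw [dist_zero_right, map_zero, dist_zero_right] at h1
    have hA0 : (0 : ℝ) ≤ A := A.2
    have h2 : 1 ≤ ‖(S.prod c) y‖ := by
      by_contra h
      push Not at h
      nlinarith [mul_le_mul_of_nonneg_left h.le hA0]
    rw [show (S.prod c) y = (S y, c y) from rfl, Prod.norm_def, le_max_iff] at h2
    unfold logWeight
    rcases h2 with h2 | h2
    · rw [← hS, tent_eq_zero (by simpa using h2), zero_mul]
    · have h3 : ∃ i, 1 ≤ |c y i| := by
        by_contra h
        push Not at h
        exact absurd h2 (not_le.2 ((pi_norm_lt_iff zero_lt_one).2 fun i => h i))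
      obtain ⟨i, hi⟩ := h3
      rw [Finset.prod_eq_zero (Finset.mem_univ i) (tent_eq_zero hi), mul_zero]
  have hR0 : 0 < R := by have : (0 : ℝ) ≤ A := A.2; linarith
  let lam : mixedEmbedding.mixedSpace K → InfinitePlace K → ℝ := fun x w =>
    Real.log (max (Real.exp (-R)) (min (Real.exp R) (mixedEmbedding.normAtPlace w x)))
  have hlam : ∀ x y, ‖lam x - lam y‖ ≤ Real.exp R * ‖x - y‖ := fun x y => by
    rw [pi_norm_le_iff_of_nonneg (by positivity)]
    intro w
    exact (clamp_log_lipschitz R _ _).trans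
      (mul_le_mul_of_nonneg_left (normAtPlace_sub_le K w x y) (Real.exp_pos R).le)
  have hle : Real.exp (-R) ≤ Real.exp R := Real.exp_le_exp.2 (by linarith)
  have hbig : ∀ x w, Real.exp R ≤ mixedEmbedding.normAtPlace w x → lam x w = R := fun x w h => by
    simp only [lam]
    rw [min_eq_left h, max_eq_right hle, Real.log_exp]
  have hsmall : ∀ x w, mixedEmbedding.normAtPlace w x ≤ Real.exp (-R) → lam x w = -R :=
    fun x w h => by
      simp only [lam]
      rw [min_eq_right (h.trans hle), max_eq_left h, Real.log_exp]
  have hz : ∀ x w, |lam x w| = R → logWeight K c (lam x) = 0 := fun x w h => by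
    refine hW0 _ (le_trans (le_of_eq h.symm) ?_)
    exact norm_le_pi_norm (lam x) w
  refine ⟨fun x => logWeight K c (lam x), (‖S.toContinuousLinearMap‖ +
    rank K * ‖c.toContinuousLinearMap‖) * Real.exp R, Real.exp R, by positivity, ?_, ?_, ?_, ?_⟩
  · intro x y
    have hprod1 : ∀ z : InfinitePlace K → ℝ, |∏ i, tent (c z i)| ≤ 1 := fun z => by
      rw [Finset.abs_prod]
      exact Finset.prod_le_one (fun i _ => abs_nonneg _) fun i _ => by
        rw [abs_of_nonneg (tent_nonneg _)]; exact tent_le_one _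
    have h1 : |S (lam x) - S (lam y)| ≤ ‖S.toContinuousLinearMap‖ * ‖lam x - lam y‖ := by
      have := S.toContinuousLinearMap.le_opNorm (lam x - lam y)
      rwa [map_sub] at this
    have h2 : ∀ i, |c (lam x) i - c (lam y) i| ≤ ‖c.toContinuousLinearMap‖ * ‖lam x - lam y‖ :=
      fun i => by
        have h3 := c.toContinuousLinearMap.le_opNorm (lam x - lam y)
        rw [map_sub] at h3
        exact (norm_le_pi_norm (c (lam x) - c (lam y)) i).trans h3
    have ht : ∀ u, |tent u| ≤ 1 := fun u => by
      rw [abs_of_nonneg (tent_nonneg u)]; exact tent_le_one u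
    have h4 : |∏ i, tent (c (lam x) i) - ∏ i, tent (c (lam y) i)| ≤
        rank K * (‖c.toContinuousLinearMap‖ * ‖lam x - lam y‖) := by
      refine (abs_prod_sub_prod_le _ _ _ (fun i => ht _) fun i => ht _).trans ?_
      refine (Finset.sum_le_sum fun i _ => (tent_lipschitz _ _).trans (h2 i)).trans ?_
      simp
    have e : logWeight K c (lam x) - logWeight K c (lam y) =
        (tent (S (lam x)) - tent (S (lam y))) * ∏ i, tent (c (lam x) i) +
        tent (S (lam y)) * (∏ i, tent (c (lam x) i) - ∏ i, tent (c (lam y) i)) := by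
      unfold logWeight; rw [hS, hS]; ring
    rw [e]
    refine (abs_add_le _ _).trans ?_
    rw [abs_mul, abs_mul]
    have h5 := mul_le_mul ((tent_lipschitz _ _).trans h1) (hprod1 (lam x)) (abs_nonneg _)
      (by positivity)
    have h6 := mul_le_mul (ht (S (lam y))) h4 (abs_nonneg _) zero_le_one
    have h7 := mul_le_mul_of_nonneg_left (hlam x y)
      (by positivity : 0 ≤ ‖S.toContinuousLinearMap‖ + rank K * ‖c.toContinuousLinearMap‖)
    linarith
  · intro x hx
    rw [mixedEmbedding.norm_eq_sup'_normAtPlace] at hx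
    obtain ⟨w, -, hw⟩ := (Finset.le_sup'_iff _).1 hx
    exact hz x w (by rw [hbig x w hw, abs_of_pos hR0])
  · refine hz 0 w₁ ?_
    rw [hsmall 0 w₁ (by rw [map_zero]; exact (Real.exp_pos _).le), abs_neg, abs_of_pos hR0]
  · intro x hx
    by_cases h : ∀ w, |Real.log (mixedEmbedding.normAtPlace w x)| < R
    · have : lam x = fun w => Real.log (mixedEmbedding.normAtPlace w x) := by
        ext w
        have h1 := abs_lt.1 (h w)
        have h2 : Real.exp (-R) ≤ mixedEmbedding.normAtPlace w x := by
          rw [← Real.le_log_iff_exp_le (hx w)]; exact h1.1.le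
        have h3 : mixedEmbedding.normAtPlace w x ≤ Real.exp R := by
          rw [← Real.log_le_iff_le_exp (hx w)]; exact h1.2.le
        simp only [lam]
        rw [min_eq_right h3, max_eq_right h2]
      simp only [this]
    · push Not at h
      obtain ⟨w, hw⟩ := h
      rw [hW0 (fun w => Real.log (mixedEmbedding.normAtPlace w x)) (hw.trans
        (norm_le_pi_norm (fun w => Real.log (mixedEmbedding.normAtPlace w x)) w))]
      rcases le_abs.1 hw with h1 | h1
      · refine hz x w ?_
        rw [hbig x w (by rwa [← Real.le_log_iff_exp_le (hx w)]), abs_of_pos hR0]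
      · refine hz x w ?_
        rw [hsmall x w (by rw [← Real.log_le_iff_le_exp (hx w)]; linarith), abs_neg,
          abs_of_pos hR0]

end Weight

/-! ### Principal ideals -/

section Weight

open NumberField NumberField.InfinitePlace NumberField.Units NumberField.Units.dirichletUnitTheorem

variable (K : Type*) [Field K] [NumberField K]

lemma sum_mult_log (α : 𝓞 K) (hα : α ≠ 0) (τ : ℝ) :
    ∑ w : InfinitePlace K, (mult w : ℝ) * (Real.log (w (α : K)) - τ) =
      Real.log (Ideal.absNorm (Ideal.span {α})) - Module.finrank ℚ K * τ := by
  have hα' : (α : K) ≠ 0 := by simpa using hα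
  have h1 : ∑ w : InfinitePlace K, (mult w : ℝ) * τ = Module.finrank ℚ K * τ := by
    rw [← Finset.sum_mul]
    congr 1
    exact_mod_cast sum_mult_eq (K := K)
  simp_rw [mul_sub]
  rw [Finset.sum_sub_distrib, h1]
  congr 1
  have h2 := prod_eq_abs_norm (α : K)
  have h3 : ((|Algebra.norm ℚ (α : K)| : ℚ) : ℝ) = Ideal.absNorm (Ideal.span {α}) := by
    rw [Ideal.absNorm_span_singleton]
    have h4 := Algebra.coe_norm_int α
    rw [← h4]
    push_cast
    rw [Nat.cast_natAbs]
    push_cast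
    rfl
  rw [← h3, ← h2, Real.log_prod fun w _ => pow_ne_zero _ ((_root_.map_ne_zero _).2 hα')]
  simp_rw [Real.log_pow]

/-- Summing the logarithmic weight over a unit orbit leaves only the dependence on the norm. -/
lemma unit_sum (c : (InfinitePlace K → ℝ) →ₗ[ℝ] (Fin (rank K) → ℝ))
    (hc1 : c (fun _ => 1) = 0)
    (hc2 : ∀ (ζ : torsion K) (k : Fin (rank K) → ℤ),
      c (fun w => Real.log (w (((ζ : (𝓞 K)ˣ) * ∏ i, (fundSystem K i) ^ (k i) : (𝓞 K)ˣ) : K)))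
        = fun i => (k i : ℝ)) (α : 𝓞 K) (hα : α ≠ 0) (τ : ℝ) :
    ∑' u : (𝓞 K)ˣ, logWeight K c (fun w => Real.log (w (((u : 𝓞 K) * α : 𝓞 K) : K)) - τ) =
      torsionOrder K * tent (Real.log (Ideal.absNorm (Ideal.span {α})) -
        Module.finrank ℚ K * τ) := by
  have hα' : (α : K) ≠ 0 := by simpa using hα
  let e : torsion K × (Fin (rank K) → ℤ) → (𝓞 K)ˣ :=
    fun ζk => (ζk.1 : (𝓞 K)ˣ) * ∏ i, (fundSystem K i) ^ (ζk.2 i)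
  have he : Function.Bijective e := by
    rw [Function.bijective_iff_existsUnique]
    intro u
    obtain ⟨x, hx, hx'⟩ := exist_unique_eq_mul_prod K u
    exact ⟨x, hx.symm, fun y hy => hx' y hy.symm⟩
  rw [← (Equiv.ofBijective e he).tsum_eq]
  have hval : ∀ x, logWeight K c
      (fun w => Real.log (w ((((Equiv.ofBijective e he x : (𝓞 K)ˣ) : 𝓞 K) * α : 𝓞 K) : K)) - τ) =
      tent (Real.log (Ideal.absNorm (Ideal.span {α})) - Module.finrank ℚ K * τ) *
        ∏ i, tent (c (fun w => Real.log (w (α : K))) i + x.2 i) := by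
    intro x
    rw [Equiv.ofBijective_apply]
    unfold logWeight
    have hu : ((e x : (𝓞 K)ˣ) : 𝓞 K) * α ≠ 0 := mul_ne_zero (Units.ne_zero _) hα
    rw [sum_mult_log K _ hu, Ideal.span_singleton_mul_left_unit (e x).isUnit]
    congr 1
    refine Finset.prod_congr rfl fun i _ => ?_
    congr 1
    have h1 : (fun w : InfinitePlace K =>
        Real.log (w ((((e x : (𝓞 K)ˣ) : 𝓞 K) * α : 𝓞 K) : K)) - τ) =
        (fun w => Real.log (w ((e x : (𝓞 K)ˣ) : K))) + (fun w => Real.log (w (α : K)))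
          - τ • (fun _ => (1 : ℝ)) := by
      ext w
      have h2 : w ((e x : (𝓞 K)ˣ) : K) ≠ 0 := (Units.pos_at_place _ _).ne'
      simp only [map_mul, Pi.sub_apply, Pi.add_apply, Pi.smul_apply, smul_eq_mul, mul_one]
      rw [Real.log_mul h2 ((_root_.map_ne_zero _).2 hα')]
    rw [h1, map_sub, map_add, map_smul, hc1, hc2]
    simp [add_comm]
  simp_rw [hval]
  rw [tsum_mul_left]
  have hs : Summable fun x : torsion K × (Fin (rank K) → ℤ) =>
      ∏ i, tent (c (fun w => Real.log (w (α : K))) i + x.2 i) := by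
    apply summable_of_hasFiniteSupport
    set y := c (fun w => Real.log (w (α : K))) with hy
    refine ((Set.finite_univ (α := torsion K)).prod (Finset.finite_toSet (Fintype.piFinset
      fun i => ({-⌊y i⌋, -⌊y i⌋ - 1} : Finset ℤ)))).subset ?_
    intro x hx
    refine ⟨Set.mem_univ _, ?_⟩
    rw [Finset.mem_coe, Fintype.mem_piFinset]
    intro i
    by_contra hi
    exact hx (Finset.prod_eq_zero (Finset.mem_univ i) (tent_support_int _ _ hi))
  rw [hs.tsum_prod]
  simp_rw [tent_partition]
  rw [tsum_const, nsmul_eq_mul, mul_one, torsionOrder, mul_comm]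

/-- Principal ideals inside a fixed ideal `J`, counted with a smooth weight in the norm. -/
lemma principal_sum (J : Ideal (𝓞 K)) (hJ : J ≠ ⊥) : ∃ c₀ C₀ : ℝ, ∀ t : ℝ, 1 ≤ t →
    |∑' I : {I : Ideal (𝓞 K) // I ≠ ⊥ ∧ J ∣ I ∧ ∃ α, I = Ideal.span {α}},
      tent (Real.log (Ideal.absNorm I.1) - Module.finrank ℚ K * Real.log t) -
        c₀ * t ^ (Module.finrank ℚ K)| ≤ C₀ * t ^ (Module.finrank ℚ K) / t := by
  obtain ⟨c, hc1, hc2, hc3⟩ := exists_log_coords K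
  obtain ⟨φ, L, ρ, hL0, hL, hsupp, hφ0, hφ⟩ := exists_weight K c hc3
  let I₀ : (FractionalIdeal (nonZeroDivisors (𝓞 K)) K)ˣ :=
    FractionalIdeal.mk0 K ⟨J, mem_nonZeroDivisors_iff_ne_zero.2 hJ⟩
  obtain ⟨c₀, C₀, hmain⟩ := lattice_sum_lipschitz
    (mixedEmbedding.fractionalIdealLatticeBasis K I₀) ρ L hL0 φ hL hsupp
  have hcard : Fintype.card (Module.Free.ChooseBasisIndex ℤ I₀) = Module.finrank ℚ K := by
    rw [← Module.finrank_eq_card_basis (mixedEmbedding.fractionalIdealLatticeBasis K I₀),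
      mixedEmbedding.finrank]
  rw [hcard] at hmain
  have hw : (0 : ℝ) < torsionOrder K := by exact_mod_cast (torsionOrder K).pos_of_ne_zero (by
    exact torsionOrder_ne_zero K)
  refine ⟨c₀ / torsionOrder K, C₀ / torsionOrder K, fun t ht => ?_⟩
  have ht0 : 0 < t := by linarith
  have h1 := hmain t ht
  set Λ := Submodule.span ℤ (Set.range (mixedEmbedding.fractionalIdealLatticeBasis K I₀)) with hΛ
  have hmem : ∀ x, x ∈ Λ ↔ ∃ α : 𝓞 K, α ∈ J ∧ mixedEmbedding K (α : K) = x := fun x => by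
    rw [hΛ, mixedEmbedding.mem_span_fractionalIdealLatticeBasis]
    constructor
    · rintro ⟨y, hy, rfl⟩
      have hy' : y ∈ ((J : FractionalIdeal (nonZeroDivisors (𝓞 K)) K)) := hy
      obtain ⟨α, hα, rfl⟩ := (FractionalIdeal.mem_coeIdeal _).1 hy'
      exact ⟨α, hα, rfl⟩
    · rintro ⟨α, hα, rfl⟩
      refine ⟨(α : K), ?_, rfl⟩
      exact (FractionalIdeal.mem_coeIdeal _).2 ⟨α, hα, rfl⟩
  let e : {α : 𝓞 K // α ∈ J ∧ α ≠ 0} → Λ := fun α =>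
    ⟨mixedEmbedding K (α.1 : K), (hmem _).2 ⟨α.1, α.2.1, rfl⟩⟩
  have he : Function.Injective e := fun α β h => by
    have := mixedEmbedding_injective K (Subtype.ext_iff.1 h)
    exact Subtype.ext (RingOfIntegers.ext this)
  have hval : ∀ α : {α : 𝓞 K // α ∈ J ∧ α ≠ 0}, φ (t⁻¹ • (e α : mixedEmbedding.mixedSpace K)) =
      logWeight K c (fun w => Real.log (w (α.1 : K)) - Real.log t) := fun α => by
    have hα' : (α.1 : K) ≠ 0 := by simpa using α.2.2
    have hn : ∀ w, mixedEmbedding.normAtPlace w (t⁻¹ • mixedEmbedding K (α.1 : K)) =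
        t⁻¹ * w (α.1 : K) := fun w => by
      rw [mixedEmbedding.normAtPlace_smul, mixedEmbedding.normAtPlace_apply,
        abs_of_pos (inv_pos.2 ht0)]
    have hpos : ∀ w : InfinitePlace K, 0 < w (α.1 : K) := fun w => pos_iff.2 hα'
    change φ (t⁻¹ • mixedEmbedding K (α.1 : K)) = _
    rw [hφ _ fun w => by rw [hn]; exact mul_pos (inv_pos.2 ht0) (hpos w)]
    congr 1
    ext w
    rw [hn, Real.log_mul (inv_pos.2 ht0).ne' (hpos w).ne', Real.log_inv]
    ring
  have hsum1 : ∑' v : Λ, φ (t⁻¹ • (v : mixedEmbedding.mixedSpace K)) =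
      ∑' α : {α : 𝓞 K // α ∈ J ∧ α ≠ 0},
        logWeight K c (fun w => Real.log (w (α.1 : K)) - Real.log t) := by
    simp_rw [← hval]
    symm
    refine he.tsum_eq (f := fun v : Λ => φ (t⁻¹ • (v : mixedEmbedding.mixedSpace K))) ?_
    intro v hv
    obtain ⟨α, hα, hαv⟩ := (hmem _).1 v.2
    refine ⟨⟨α, hα, ?_⟩, Subtype.ext hαv⟩
    rintro rfl
    apply hv
    change φ (t⁻¹ • (v : mixedEmbedding.mixedSpace K)) = 0
    rw [← hαv]
    simp [hφ0]
  have hsummable : Summable fun α : {α : 𝓞 K // α ∈ J ∧ α ≠ 0} =>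
        logWeight K c (fun w => Real.log (w (α.1 : K)) - Real.log t) := by
    simp_rw [← hval]
    refine (summable_of_hasFiniteSupport ?_ : Summable fun v : Λ =>
      φ (t⁻¹ • (v : mixedEmbedding.mixedSpace K))).comp_injective he
    have h2 := ZSpan.setFinite_inter (mixedEmbedding.fractionalIdealLatticeBasis K I₀)
      (Metric.isBounded_closedBall (x := (0 : mixedEmbedding.mixedSpace K)) (r := ρ * t))
    refine Set.Finite.of_finite_image (f := Subtype.val) (h2.subset ?_) Subtype.val_injective.injOn
    rintro _ ⟨v, hv, rfl⟩
    refine ⟨?_, v.2⟩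
    rw [mem_closedBall_zero_iff]
    by_contra h
    push Not at h
    refine hv (hsupp _ ?_)
    rw [norm_smul, norm_inv, Real.norm_of_nonneg ht0.le, ← div_eq_inv_mul, le_div_iff₀ ht0]
    exact h.le
  let f : {α : 𝓞 K // α ∈ J ∧ α ≠ 0} →
      {I : Ideal (𝓞 K) // I ≠ ⊥ ∧ J ∣ I ∧ ∃ α, I = Ideal.span {α}} := fun α =>
    ⟨Ideal.span {α.1}, by simpa using α.2.2, by
      rw [Ideal.dvd_iff_le, Ideal.span_singleton_le_iff_mem]; exact α.2.1, α.1, rfl⟩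
  have hsum2 : ∑' α : {α : 𝓞 K // α ∈ J ∧ α ≠ 0},
        logWeight K c (fun w => Real.log (w (α.1 : K)) - Real.log t) =
      ∑' I : {I : Ideal (𝓞 K) // I ≠ ⊥ ∧ J ∣ I ∧ ∃ α, I = Ideal.span {α}}, torsionOrder K *
        tent (Real.log (Ideal.absNorm I.1) - Module.finrank ℚ K * Real.log t) := by
    rw [← (Equiv.sigmaFiberEquiv f).tsum_eq]
    refine ((Equiv.sigmaFiberEquiv f).summable_iff.2 hsummable).tsum_sigma.trans ?_
    refine tsum_congr fun I => ?_
    obtain ⟨I, hI0, hJI, α, rfl⟩ := I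
    have hα0 : α ≠ 0 := by simpa using hI0
    rw [← unit_sum K c hc1 hc2 α hα0]
    have hαJ : α ∈ J := by
      rwa [Ideal.dvd_iff_le, Ideal.span_singleton_le_iff_mem] at hJI
    let q : (𝓞 K)ˣ → {x // f x = ⟨Ideal.span {α}, hI0, hJI, α, rfl⟩} := fun u =>
      ⟨⟨(u : 𝓞 K) * α, J.mul_mem_left _ hαJ, mul_ne_zero (Units.ne_zero _) hα0⟩, by
        apply Subtype.ext
        exact Ideal.span_singleton_mul_left_unit u.isUnit α⟩
    have hq : Function.Bijective q := by
      constructor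
      · intro u v h
        have h3 : (u : 𝓞 K) * α = v * α := congrArg (fun x => x.1.1) h
        exact Units.ext (mul_right_cancel₀ hα0 h3)
      · rintro ⟨⟨β, hβ⟩, hf⟩
        have h3 : Ideal.span {β} = Ideal.span {α} := congrArg Subtype.val hf
        rw [Ideal.span_singleton_eq_span_singleton] at h3
        obtain ⟨u, hu⟩ := h3.symm
        refine ⟨u, ?_⟩
        apply Subtype.ext
        apply Subtype.ext
        change (u : 𝓞 K) * α = β
        rw [← hu, mul_comm]
    rw [← (Equiv.ofBijective q hq).tsum_eq]
    rfl
  rw [hsum1, hsum2, tsum_mul_left] at h1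
  set Y := ∑' I : {I : Ideal (𝓞 K) // I ≠ ⊥ ∧ J ∣ I ∧ ∃ α, I = Ideal.span {α}},
        tent (Real.log (Ideal.absNorm I.1) - Module.finrank ℚ K * Real.log t) with hY
  have e3 : Y - c₀ / torsionOrder K * t ^ (Module.finrank ℚ K) =
      (torsionOrder K * Y - c₀ * t ^ (Module.finrank ℚ K)) / torsionOrder K := by
    field_simp
  rw [e3, abs_div, abs_of_pos hw, div_le_iff₀ hw]
  refine h1.trans (le_of_eq ?_)
  field_simp

end Weight

/-! ### Counting ideals by norm -/

section IdealCount

open NumberField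

variable (K : Type*) [Field K] [NumberField K]

/-- The number of integral ideals of norm `m`, set to `0` at `m = 0`. -/
def idealCoeff (m : ℕ) : ℝ := if m = 0 then 0 else Nat.card {I : Ideal (𝓞 K) // Ideal.absNorm I = m}

lemma idealCoeff_nonneg (m : ℕ) : 0 ≤ idealCoeff K m := by
  unfold idealCoeff; split_ifs <;> positivity

/-- Ideals in a class `C`: multiplication by an ideal `J` in the inverse class maps them bijectively
to the principal ideals divisible by `J`. -/
lemma class_sum (C : ClassGroup (𝓞 K)) : ∃ c₀ C₀ : ℝ, ∀ X : ℝ, 1 ≤ X →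
    |∑' I : {I : nonZeroDivisors (Ideal (𝓞 K)) // ClassGroup.mk0 I = C},
      tent (Real.log (Ideal.absNorm (I.1 : Ideal (𝓞 K))) - Real.log X) - c₀ * X| ≤
        C₀ * X ^ (1 - 1 / (Module.finrank ℚ K : ℝ)) := by
  obtain ⟨J, hJ⟩ := ClassGroup.mk0_surjective C⁻¹
  have hJ0 : (J : Ideal (𝓞 K)) ≠ ⊥ := nonZeroDivisors.coe_ne_zero J
  obtain ⟨c₀, C₀, h⟩ := principal_sum K J hJ0
  set n := Module.finrank ℚ K with hn
  have hn0 : (n : ℝ) ≠ 0 := by exact_mod_cast Module.finrank_pos.ne'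
  have hN : (1 : ℝ) ≤ Ideal.absNorm (J : Ideal (𝓞 K)) := by
    have : Ideal.absNorm (J : Ideal (𝓞 K)) ≠ 0 := Ideal.absNorm_eq_zero_iff.not.2 hJ0
    exact_mod_cast Nat.one_le_iff_ne_zero.2 this
  set N : ℝ := (Ideal.absNorm (J : Ideal (𝓞 K)) : ℝ) with hNdef
  refine ⟨c₀ * N, C₀ * N ^ (1 - 1 / (n : ℝ)), fun X hX => ?_⟩
  have hX0 : 0 < X := by linarith
  have hN0 : 0 < N := by linarith
  set t : ℝ := (X * N) ^ (1 / (n : ℝ)) with ht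
  have hXN : 1 ≤ X * N := one_le_mul_of_one_le_of_one_le hX hN
  have hXN0 : 0 < X * N := by positivity
  have ht1 : 1 ≤ t := Real.one_le_rpow hXN (by positivity)
  have htn : t ^ n = X * N := by
    rw [ht, ← Real.rpow_natCast, ← Real.rpow_mul hXN0.le, one_div, inv_mul_cancel₀ hn0,
      Real.rpow_one]
  have hlog : n * Real.log t = Real.log X + Real.log N := by
    rw [← Real.log_mul hX0.ne' hN0.ne', ← htn, Real.log_pow]
  have h1 := h t ht1
  have hdiv : t ^ n / t = N ^ (1 - 1 / (n : ℝ)) * X ^ (1 - 1 / (n : ℝ)) := by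
    rw [htn, ht, ← Real.mul_rpow hN0.le hX0.le, mul_comm N X, Real.rpow_sub hXN0, Real.rpow_one]
  rw [mul_div_assoc, hdiv, htn, hlog] at h1
  let q : {I : nonZeroDivisors (Ideal (𝓞 K)) // ClassGroup.mk0 I = C} →
      {I : Ideal (𝓞 K) // I ≠ ⊥ ∧ (J : Ideal (𝓞 K)) ∣ I ∧ ∃ α, I = Ideal.span {α}} := fun I =>
    ⟨(J * I.1 : nonZeroDivisors (Ideal (𝓞 K))), nonZeroDivisors.coe_ne_zero _,
      ⟨I.1, rfl⟩, by
        have h2 : ClassGroup.mk0 (J * I.1) = 1 := by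
          rw [map_mul, hJ, I.2, inv_mul_cancel]
        have h3 := (ClassGroup.mk0_eq_one_iff (J * I.1).2).1 h2
        obtain ⟨α, hα⟩ := h3.principal
        exact ⟨α, hα⟩⟩
  have hq : Function.Bijective q := by
    constructor
    · intro I I' hII
      have h2 : (J : Ideal (𝓞 K)) * I.1 = J * I'.1 := congrArg Subtype.val hII
      exact Subtype.ext (Subtype.ext (mul_left_cancel₀ hJ0 h2))
    · rintro ⟨I, hI0, ⟨I', rfl⟩, α, hα⟩
      have hI'0 : I' ≠ 0 := right_ne_zero_of_mul hI0
      refine ⟨⟨⟨I', mem_nonZeroDivisors_iff_ne_zero.2 hI'0⟩, ?_⟩, rfl⟩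
      let I₁ : nonZeroDivisors (Ideal (𝓞 K)) := ⟨I', mem_nonZeroDivisors_iff_ne_zero.2 hI'0⟩
      have h2 : ClassGroup.mk0 (J * I₁) = 1 :=
        (ClassGroup.mk0_eq_one_iff (J * I₁).2).2 ⟨α, hα⟩
      rw [map_mul, hJ] at h2
      exact (inv_mul_eq_one.1 h2).symm
  rw [← (Equiv.ofBijective q hq).tsum_eq] at h1
  have e : ∀ I : {I : nonZeroDivisors (Ideal (𝓞 K)) // ClassGroup.mk0 I = C},
      tent (Real.log (Ideal.absNorm ((Equiv.ofBijective q hq) I).1) -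
        (Real.log X + Real.log N)) =
      tent (Real.log (Ideal.absNorm (I.1 : Ideal (𝓞 K))) - Real.log X) := fun I => by
    have h2 : ((Equiv.ofBijective q hq) I).1 = (J : Ideal (𝓞 K)) * I.1 := rfl
    have h3 : (Ideal.absNorm (I.1 : Ideal (𝓞 K)) : ℝ) ≠ 0 := by
      exact_mod_cast Ideal.absNorm_eq_zero_iff.not.2 (nonZeroDivisors.coe_ne_zero I.1)
    rw [h2, map_mul, Nat.cast_mul, Real.log_mul hN0.ne' h3]
    congr 1; ring
  simp_rw [e] at h1
  rw [mul_assoc c₀, mul_comm N X, mul_assoc C₀]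
  exact h1

lemma tent_log_eq_zero {X y : ℝ} (hX : 0 < X) (hy : Real.exp 1 * X ≤ y) :
    tent (Real.log y - Real.log X) = 0 := by
  apply tent_eq_zero
  have h1 : 0 < Real.exp 1 * X := by positivity
  have h2 := Real.log_le_log h1 hy
  rw [Real.log_mul (Real.exp_pos 1).ne' hX.ne', Real.log_exp] at h2
  exact le_abs.2 (Or.inl (by linarith))

/-- A count of ideals by norm, smooth on the logarithmic scale, with a power-saving error. -/
lemma ideal_sum : ∃ c₀ C₀ : ℝ, ∀ X : ℝ, 1 ≤ X →
    |∑' m : ℕ, idealCoeff K m * tent (Real.log m - Real.log X) - c₀ * X| ≤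
        C₀ * X ^ (1 - 1 / (Module.finrank ℚ K : ℝ)) := by
  choose c₀ C₀ h using class_sum K
  refine ⟨∑ C, c₀ C, ∑ C, C₀ C, fun X hX => ?_⟩
  have hX0 : 0 < X := by linarith
  set F : nonZeroDivisors (Ideal (𝓞 K)) → ℝ := fun I =>
    tent (Real.log (Ideal.absNorm (I : Ideal (𝓞 K))) - Real.log X) with hF
  have hsummable : Summable F := by
    refine summable_of_hasFiniteSupport ?_
    have h1 := Ideal.finite_setOfPred_absNorm_le (S := 𝓞 K) ⌈Real.exp 1 * X⌉₊
    refine Set.Finite.of_finite_image (f := Subtype.val) (h1.subset ?_) Subtype.val_injective.injOn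
    rintro _ ⟨I, hI, rfl⟩
    by_contra h2
    refine hI (tent_log_eq_zero hX0 ?_)
    simp only [Set.mem_ofPred_eq, not_le] at h2
    exact (Nat.le_ceil _).trans (by exact_mod_cast h2.le)
  have hA : ∑' I, F I = ∑ C, ∑' I : {I : nonZeroDivisors (Ideal (𝓞 K)) // ClassGroup.mk0 I = C},
      F I.1 := by
    rw [← (Equiv.sigmaFiberEquiv (fun I : nonZeroDivisors (Ideal (𝓞 K)) =>
      ClassGroup.mk0 I)).tsum_eq]
    refine ((Equiv.sigmaFiberEquiv _).summable_iff.2 hsummable).tsum_sigma.trans ?_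
    rw [tsum_fintype]
    rfl
  have hB : ∑' I, F I = ∑' m : ℕ, idealCoeff K m * tent (Real.log m - Real.log X) := by
    rw [← (Equiv.sigmaFiberEquiv (fun I : nonZeroDivisors (Ideal (𝓞 K)) =>
      Ideal.absNorm (I : Ideal (𝓞 K)))).tsum_eq]
    refine ((Equiv.sigmaFiberEquiv _).summable_iff.2 hsummable).tsum_sigma.trans ?_
    refine tsum_congr fun m => ?_
    have e : ∀ I : {I : nonZeroDivisors (Ideal (𝓞 K)) // Ideal.absNorm (I : Ideal (𝓞 K)) = m},
        F I.1 = tent (Real.log m - Real.log X) := fun I => by simp only [hF, I.2]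
    refine (tsum_congr e).trans ?_
    rw [tsum_const, nsmul_eq_mul]
    congr 1
    unfold idealCoeff
    split_ifs with hm
    · subst hm
      have : IsEmpty {I : nonZeroDivisors (Ideal (𝓞 K)) // Ideal.absNorm (I : Ideal (𝓞 K)) = 0} :=
        ⟨fun I => nonZeroDivisors.coe_ne_zero I.1 (Ideal.absNorm_eq_zero_iff.1 I.2)⟩
      simp
    · congr 1
      refine Nat.card_congr ⟨fun I => ⟨I.1, I.2⟩, fun I => ⟨⟨I.1, ?_⟩, I.2⟩, fun _ => rfl,
        fun _ => rfl⟩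
      rw [mem_nonZeroDivisors_iff_ne_zero]
      intro h0
      apply hm
      rw [← I.2, h0]
      exact Ideal.absNorm_eq_zero_iff.2 rfl
  rw [← hB, hA, Finset.sum_mul, Finset.sum_mul, ← Finset.sum_sub_distrib]
  exact (Finset.abs_sum_le_sum_abs _ _).trans (Finset.sum_le_sum fun C _ => h C X hX)

end IdealCount

/-! ### Mellin transforms and Dirichlet series -/

section Continuation

open MeasureTheory

/-- The Mellin transform of a superposition of dilates of a kernel is the product of a Dirichlet
series with the Mellin transform of the kernel. -/
lemma mellin_dirichlet (a : ℕ → ℂ) (T : ℝ → ℂ) (s : ℂ) (ha0 : a 0 = 0)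
    (hT : MellinConvergent T s) (ha : LSeriesSummable a s) :
    mellin (fun t => ∑' m : ℕ, a m * T (m * t)) s = LSeries a s * mellin T s := by
  set F : ℕ → ℝ → ℂ := fun m t => (t : ℂ) ^ (s - 1) • (a m * T (m * t)) with hF
  have hF0 : F 0 = fun _ => 0 := by ext t; simp [hF, ha0]
  have hconv : ∀ m : ℕ, 0 < m → MellinConvergent (fun t => T (m * t)) s := fun m hm =>
    (MellinConvergent.comp_mul_left (by exact_mod_cast hm)).2 hT
  have hint : ∀ m, Integrable (F m) (volume.restrict (Set.Ioi 0)) := fun m => by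
    rcases Nat.eq_zero_or_pos m with rfl | hm
    · rw [hF0]; exact integrable_zero _ _ _
    · have h1 := (hconv m hm).const_smul (a m)
      exact h1
  have hnorm : ∀ m, ∫ t in Set.Ioi (0 : ℝ), ‖F m t‖ =
      ‖LSeries.term a s m‖ * ∫ u in Set.Ioi (0 : ℝ), ‖(u : ℂ) ^ (s - 1) • T u‖ := fun m => by
    rcases Nat.eq_zero_or_pos m with rfl | hm
    · rw [hF0]; simp
    · have hm' : (0 : ℝ) < m := by exact_mod_cast hm
      have h1 : ∀ t ∈ Set.Ioi (0 : ℝ), ‖F m t‖ = (‖a m‖ * (m : ℝ) ^ (1 - s.re)) *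
          ‖((m * t : ℝ) : ℂ) ^ (s - 1) • T (m * t)‖ := fun t ht => by
        have ht' : 0 < t := ht
        simp only [hF, norm_smul, norm_mul]
        rw [Complex.norm_cpow_eq_rpow_re_of_pos ht',
          Complex.norm_cpow_eq_rpow_re_of_pos (mul_pos hm' ht')]
        rw [Real.mul_rpow hm'.le ht'.le]
        have : (m : ℝ) ^ (1 - s.re) * (m : ℝ) ^ (s - 1).re = 1 := by
          rw [← Real.rpow_add hm']; simp
        linear_combination (-‖a m‖ * ‖T (m * t)‖ * t ^ (s - 1).re) * this
      rw [setIntegral_congr_fun measurableSet_Ioi h1, integral_const_mul,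
        integral_comp_mul_left_Ioi (fun u => ‖(u : ℂ) ^ (s - 1) • T u‖) 0 hm', mul_zero,
        LSeries.norm_term_eq, if_neg hm.ne', smul_eq_mul, ← mul_assoc]
      congr 1
      rw [mul_assoc, div_eq_mul_inv]
      congr 1
      rw [← Real.rpow_neg_one (m : ℝ), ← Real.rpow_add hm', ← Real.rpow_neg hm'.le]
      congr 1; ring
  have hsum : Summable fun m => ∫ t in Set.Ioi (0 : ℝ), ‖F m t‖ := by
    simp_rw [hnorm]
    exact ha.norm.mul_right _
  have h2 := hasSum_integral_of_summable_integral_norm hint hsum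
  have h3 : ∀ m, ∫ t in Set.Ioi (0 : ℝ), F m t = LSeries.term a s m * mellin T s := fun m => by
    rcases Nat.eq_zero_or_pos m with rfl | hm
    · rw [hF0]; simp
    · have h4 := mellin_comp_mul_left T s (a := (m : ℝ)) (by exact_mod_cast hm)
      have h5 := mellin_const_smul (fun t => T (m * t)) s (a m)
      change mellin (fun t => a m • T (m * t)) s = _
      rw [h5, h4, LSeries.term_of_ne_zero hm.ne']
      simp only [smul_eq_mul]
      rw [Complex.cpow_neg]
      push_cast
      ring
  simp_rw [h3] at h2
  rw [mellin, LSeries, ← tsum_mul_right, h2.tsum_eq]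
  refine setIntegral_congr_fun measurableSet_Ioi fun t _ => ?_
  simp only [hF, smul_eq_mul]
  rw [tsum_mul_left]

end Continuation

section Continuation

open MeasureTheory

/-- The kernel `u ↦ max(0, 1 - |log u|)` as a complex-valued function. -/
def tentLog (u : ℝ) : ℂ := (tent (Real.log u) : ℂ)

lemma tentLog_eq_zero {u : ℝ} (hu0 : 0 < u) (hu : u ∉ Set.Ioc (Real.exp (-1)) (Real.exp 1)) :
    tentLog u = 0 := by
  have : 1 ≤ |Real.log u| := by
    by_contra h
    push Not at h
    have h1 := abs_lt.1 h
    exact hu ⟨(Real.lt_log_iff_exp_lt hu0).1 h1.1, ((Real.log_lt_iff_lt_exp hu0).1 h1.2).le⟩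
  rw [tentLog, tent_eq_zero this, Complex.ofReal_zero]

lemma continuousOn_tentLog : ContinuousOn tentLog (Set.Ioi 0) := by
  unfold tentLog
  refine Complex.continuous_ofReal.comp_continuousOn (continuous_tent.comp_continuousOn ?_)
  exact Real.continuousOn_log.mono fun x hx => (ne_of_gt hx)

lemma mellinConvergent_tentLog (s : ℂ) : MellinConvergent tentLog s := by
  have h1 : IntegrableOn (fun t : ℝ => (t : ℂ) ^ (s - 1) • tentLog t)
      (Set.Icc (Real.exp (-1)) (Real.exp 1)) := by
    refine ContinuousOn.integrableOn_Icc fun x hx => ?_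
    have hx0 : 0 < x := (Real.exp_pos _).trans_le hx.1
    refine ContinuousAt.continuousWithinAt ?_
    refine ContinuousAt.mul (f := fun t : ℝ => (t : ℂ) ^ (s - 1)) ?_ (continuousOn_tentLog.continuousAt (Ioi_mem_nhds hx0))
    exact Complex.continuousAt_ofReal_cpow_const _ _ (Or.inr hx0.ne')
  refine h1.of_forall_sdiff_eq_zero measurableSet_Ioi fun x hx => ?_
  rw [tentLog_eq_zero hx.1 fun h => hx.2 ⟨h.1.le, h.2⟩, smul_zero]

lemma mellin_tentLog (s : ℂ) (hs : s ≠ 0) :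
    mellin tentLog s = (Complex.exp s + Complex.exp (-s) - 2) / s ^ 2 := by
  have hle1 : Real.exp (-1) ≤ 1 := Real.exp_le_one_iff.2 (by norm_num)
  have hle2 : (1 : ℝ) ≤ Real.exp 1 := Real.one_le_exp (by norm_num)
  have hint : ∀ p q : ℝ, 0 < p → p ≤ q →
      IntervalIntegrable (fun t : ℝ => (t : ℂ) ^ (s - 1) • tentLog t) volume p q := by
    intro p q hp hpq
    refine ContinuousOn.intervalIntegrable fun x hx => ?_
    rw [Set.uIcc_of_le hpq] at hx
    have hx0 : 0 < x := hp.trans_le hx.1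
    refine ContinuousAt.continuousWithinAt ?_
    refine ContinuousAt.mul (f := fun t : ℝ => (t : ℂ) ^ (s - 1)) ?_ (continuousOn_tentLog.continuousAt (Ioi_mem_nhds hx0))
    exact Complex.continuousAt_ofReal_cpow_const _ _ (Or.inr hx0.ne')
  have h1 : mellin tentLog s =
      ∫ t in Set.Ioc (Real.exp (-1)) (Real.exp 1), (t : ℂ) ^ (s - 1) • tentLog t := by
    rw [mellin]
    refine (setIntegral_eq_of_subset_of_forall_sdiff_eq_zero measurableSet_Ioi ?_ ?_)
    · intro x hx; exact (Real.exp_pos _).trans hx.1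
    · intro x hx
      rw [tentLog_eq_zero hx.1 hx.2, smul_zero]
  rw [h1, ← intervalIntegral.integral_of_le (hle1.trans hle2),
    ← intervalIntegral.integral_add_adjacent_intervals (hint _ 1 (Real.exp_pos _) hle1)
      (hint 1 _ one_pos hle2)]
  have hlogd : ∀ x : ℝ, 0 < x → HasDerivAt (fun u : ℝ => (Real.log u : ℂ)) ((x⁻¹ : ℝ) : ℂ) x :=
    fun x hx => (Real.hasDerivAt_log hx.ne').ofReal_comp
  have hpowd : ∀ x : ℝ, 0 < x → HasDerivAt (fun u : ℝ => (u : ℂ) ^ s) (s * (x : ℂ) ^ (s - 1)) x :=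
    fun x hx => by
      have := (hasDerivAt_ofReal_cpow_const' hx.ne' (r := s - 1) (by
        intro h; exact hs (by linear_combination h))).const_mul s
      simp only [sub_add_cancel] at this
      have e : (fun u : ℝ => (u : ℂ) ^ s) = fun y : ℝ => s * ((y : ℂ) ^ s / s) := by
        ext u; field_simp
      rw [e]
      exact this
  have hx1 : ∀ x : ℝ, 0 < x → (x : ℂ) ^ s * ((x⁻¹ : ℝ) : ℂ) = (x : ℂ) ^ (s - 1) := fun x hx => by
    have hx' : (x : ℂ) ≠ 0 := by exact_mod_cast hx.ne'
    rw [Complex.cpow_sub _ _ hx', Complex.cpow_one]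
    push_cast
    rw [div_eq_mul_inv]
  have hexp : ∀ r : ℝ, ((Real.exp r : ℝ) : ℂ) ^ s = Complex.exp (r * s) := fun r => by
    rw [Complex.cpow_def_of_ne_zero (by exact_mod_cast (Real.exp_pos r).ne'),
      ← Complex.ofReal_log (Real.exp_pos r).le, Real.log_exp]
  have hA : ∫ t in (Real.exp (-1))..1, (t : ℂ) ^ (s - 1) • tentLog t =
      1 / s - 1 / s ^ 2 + Complex.exp (-s) / s ^ 2 := by
    rw [intervalIntegral.integral_eq_sub_of_hasDerivAt
      (f := fun u : ℝ => (u : ℂ) ^ s * ((1 + (Real.log u : ℂ)) / s - 1 / s ^ 2)) ?_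
      (hint _ 1 (Real.exp_pos _) hle1)]
    · rw [hexp, Real.log_one, Real.log_exp]
      push_cast
      rw [Complex.one_cpow, neg_one_mul]
      ring
    · intro x hx
      rw [Set.uIcc_of_le hle1] at hx
      have hx0 : 0 < x := (Real.exp_pos _).trans_le hx.1
      have hd := (hpowd x hx0).mul ((((hlogd x hx0).const_add 1).div_const s).sub_const (1 / s ^ 2))
      have hlog0 : Real.log x ≤ 0 := Real.log_nonpos hx0.le hx.2
      have hlog1 : -1 ≤ Real.log x := (Real.le_log_iff_exp_le hx0).2 hx.1
      have ht : tentLog x = 1 + (Real.log x : ℂ) := by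
        simp only [tentLog, tent]
        rw [abs_of_nonpos hlog0, max_eq_right (by linarith)]
        push_cast; ring
      refine hd.congr_deriv ?_
      rw [ht, smul_eq_mul, ← hx1 x hx0]
      have hx' : (x : ℂ) ≠ 0 := by exact_mod_cast hx0.ne'
      push_cast
      field_simp
      ring
  have hB : ∫ t in 1..(Real.exp 1), (t : ℂ) ^ (s - 1) • tentLog t =
      Complex.exp s / s ^ 2 - 1 / s - 1 / s ^ 2 := by
    rw [intervalIntegral.integral_eq_sub_of_hasDerivAt
      (f := fun u : ℝ => (u : ℂ) ^ s * ((1 - (Real.log u : ℂ)) / s + 1 / s ^ 2)) ?_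
      (hint 1 _ one_pos hle2)]
    · rw [hexp, Real.log_one, Real.log_exp]
      push_cast
      rw [Complex.one_cpow, one_mul]
      ring
    · intro x hx
      rw [Set.uIcc_of_le hle2] at hx
      have hx0 : 0 < x := one_pos.trans_le hx.1
      have hd := (hpowd x hx0).mul ((((hlogd x hx0).const_sub 1).div_const s).add_const (1 / s ^ 2))
      have hlog0 : 0 ≤ Real.log x := Real.log_nonneg hx.1
      have hlog1 : Real.log x ≤ 1 := (Real.log_le_iff_le_exp hx0).2 hx.2
      have ht : tentLog x = 1 - (Real.log x : ℂ) := by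
        simp only [tentLog, tent]
        rw [abs_of_nonneg hlog0, max_eq_right (by linarith)]
        push_cast; ring
      refine hd.congr_deriv ?_
      rw [ht, smul_eq_mul, ← hx1 x hx0]
      have hx' : (x : ℂ) ≠ 0 := by exact_mod_cast hx0.ne'
      push_cast
      field_simp
      ring
  rw [hA, hB]
  ring

/-- The Mellin transform of the kernel decays no faster than `|s|⁻²` in the right half-plane. -/
lemma norm_mellin_tentLog_ge (s : ℂ) (hs : 0 < s.re) :
    s.re ^ 2 / ‖s‖ ^ 2 ≤ ‖mellin tentLog s‖ := by
  have hs0 : s ≠ 0 := by rintro rfl; simp at hs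
  have e : Complex.exp s + Complex.exp (-s) - 2 =
      (Complex.exp (s / 2) - Complex.exp (-(s / 2))) ^ 2 := by
    have h1 : Complex.exp s = Complex.exp (s / 2) ^ 2 := by
      rw [← Complex.exp_nat_mul]; congr 1; push_cast; ring
    have h2 : Complex.exp (-s) = Complex.exp (-(s / 2)) ^ 2 := by
      rw [← Complex.exp_nat_mul]; congr 1; push_cast; ring
    have h3 : Complex.exp (s / 2) * Complex.exp (-(s / 2)) = 1 := by
      rw [← Complex.exp_add, add_neg_cancel, Complex.exp_zero]
    rw [h1, h2]; linear_combination 2 * h3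
  rw [mellin_tentLog s hs0, e, norm_div, norm_pow, norm_pow]
  refine div_le_div_of_nonneg_right (pow_le_pow_left₀ hs.le ?_ 2) (by positivity)
  have h4 := norm_sub_norm_le (Complex.exp (s / 2)) (Complex.exp (-(s / 2)))
  rw [Complex.norm_exp, Complex.norm_exp] at h4
  refine le_trans ?_ h4
  have h5 : (s / 2).re = s.re / 2 := by simp
  rw [Complex.neg_re, h5]
  have h6 : s.re / 2 ≤ Real.sinh (s.re / 2) := Real.self_le_sinh_iff.2 (by positivity)
  rw [Real.sinh_eq] at h6
  linarith

lemma differentiableAt_mellin_tentLog (s : ℂ) (hs : s ≠ 0) :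
    DifferentiableAt ℂ (mellin tentLog) s := by
  have h1 : DifferentiableAt ℂ (fun s : ℂ => (Complex.exp s + Complex.exp (-s) - 2) / s ^ 2) s := by
    have : s ^ 2 ≠ 0 := pow_ne_zero 2 hs
    fun_prop (disch := assumption)
  refine h1.congr_of_eventuallyEq ?_
  filter_upwards [isOpen_ne.mem_nhds hs] with z hz using mellin_tentLog z hz

end Continuation

section Continuation

open MeasureTheory

/-- A locally integrable function which is `O(t ^ (-θ))` on `(0, e]` and vanishes beyond `e` has a
Mellin transform that is holomorphic on `Re s > θ`, with an explicit bound. -/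
lemma mellin_of_bound (E : ℝ → ℂ) (hloc : LocallyIntegrableOn E (Set.Ioi 0)) (θ C : ℝ)
    (hE0 : ∀ t ∈ Set.Ioc 0 (Real.exp 1), ‖E t‖ ≤ C * t ^ (-θ))
    (hE1 : ∀ t, Real.exp 1 < t → E t = 0) (s : ℂ) (hs : θ < s.re) :
    MellinConvergent E s ∧ DifferentiableAt ℂ (mellin E) s ∧
      ‖mellin E s‖ ≤ C * (Real.exp 1 ^ (s.re - θ) / (s.re - θ)) := by
  have htop : E =O[atTop] (· ^ (-(s.re + 1)) : ℝ → ℝ) := by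
    refine Asymptotics.IsBigO.of_bound 0 ?_
    filter_upwards [eventually_gt_atTop (Real.exp 1)] with t ht
    rw [hE1 t ht]; simp
  have hbot : E =O[nhdsWithin 0 (Set.Ioi 0)] (· ^ (-θ) : ℝ → ℝ) := by
    refine Asymptotics.IsBigO.of_bound C ?_
    filter_upwards [Ioc_mem_nhdsGT (Real.exp_pos 1)] with t ht
    refine (hE0 t ht).trans_eq ?_
    rw [Real.norm_of_nonneg (Real.rpow_nonneg ht.1.le _)]
  have hconv := mellinConvergent_of_isBigO_rpow hloc htop (lt_add_one _) hbot hs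
  refine ⟨hconv, mellin_differentiableAt_of_isBigO_rpow hloc htop (lt_add_one _) hbot hs, ?_⟩
  have h1 : mellin E s = ∫ t in Set.Ioc 0 (Real.exp 1), (t : ℂ) ^ (s - 1) • E t := by
    rw [mellin]
    refine setIntegral_eq_of_subset_of_forall_sdiff_eq_zero measurableSet_Ioi
      (fun x hx => hx.1) fun x hx => ?_
    have : Real.exp 1 < x := by
      by_contra h
      exact hx.2 ⟨hx.1, not_lt.1 h⟩
    rw [hE1 x this, smul_zero]
  have hii : IntervalIntegrable (fun t : ℝ => t ^ (s.re - θ - 1)) volume 0 (Real.exp 1) :=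
    intervalIntegral.intervalIntegrable_rpow' (by linarith)
  have h2 : ∫ t in Set.Ioc 0 (Real.exp 1), C * t ^ (s.re - θ - 1) =
      C * (Real.exp 1 ^ (s.re - θ) / (s.re - θ)) := by
    rw [integral_const_mul, ← intervalIntegral.integral_of_le (Real.exp_pos 1).le,
      integral_rpow (Or.inl (by linarith)), sub_add_cancel,
      Real.zero_rpow (by linarith), sub_zero]
  rw [h1, ← h2]
  refine norm_integral_le_of_norm_le ?_ ?_
  · exact ((intervalIntegrable_iff_integrableOn_Ioc_of_le (Real.exp_pos 1).le).1 hii).const_mul C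
  · refine (ae_restrict_mem measurableSet_Ioc).mono fun t ht => ?_
    rw [norm_smul, Complex.norm_cpow_eq_rpow_re_of_pos ht.1]
    calc t ^ (s - 1).re * ‖E t‖ ≤ t ^ (s - 1).re * (C * t ^ (-θ)) :=
          mul_le_mul_of_nonneg_left (hE0 t ht) (Real.rpow_nonneg ht.1.le _)
      _ = C * t ^ (s.re - θ - 1) := by
          rw [mul_left_comm, ← Real.rpow_add ht.1]
          congr 2
          simp; ring

/-- Power-saving asymptotics for the smoothed summatory function of a nonnegative sequence give a
holomorphic continuation of `(s - 1) L(a, s)` to `Re s > θ`, of polynomial growth. -/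
lemma exists_continuation (a : ℕ → ℝ) (ha : ∀ m, 0 ≤ a m) (ha0 : a 0 = 0)
    (hsum : ∀ s : ℂ, 1 < s.re → LSeriesSummable (fun m => (a m : ℂ)) s) (c C θ : ℝ)
    (hθ0 : 0 ≤ θ) (hθ1 : θ < 1)
    (h : ∀ X : ℝ, 1 ≤ X → |∑' m : ℕ, a m * tent (Real.log m - Real.log X) - c * X| ≤ C * X ^ θ) :
    ∃ g : ℂ → ℂ, (∀ s, θ < s.re → DifferentiableAt ℂ g s) ∧
      (∀ s, 1 < s.re → g s = (s - 1) * LSeries (fun m => (a m : ℂ)) s) ∧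
      ∀ θ', θ < θ' → ∃ B, 0 < B ∧ ∀ s : ℂ, θ' ≤ s.re → s.re ≤ 3 → ‖g s‖ ≤ B * ‖s‖ ^ 3 := by
  set f : ℝ → ℂ := fun t => ∑' m : ℕ, (a m : ℂ) * tentLog (m * t) with hf
  have hC : 0 ≤ C := by
    have := h 1 le_rfl
    rw [Real.one_rpow, mul_one, mul_one] at this
    exact (abs_nonneg _).trans this
  have hterm0 : ∀ (m : ℕ) (t δ : ℝ), 0 < δ → δ ≤ t → Real.exp 1 / δ < m →
      (a m : ℂ) * tentLog (m * t) = 0 := fun m t δ hδ ht hm => by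
    have : Real.exp 1 < m * t := by
      rw [div_lt_iff₀ hδ] at hm
      exact hm.trans_le (mul_le_mul_of_nonneg_left ht (Nat.cast_nonneg _))
    rw [tentLog_eq_zero ((Real.exp_pos _).trans this) fun h => absurd h.2 (not_le.2 this), mul_zero]
  have htl : ∀ u, ‖tentLog u‖ ≤ 1 := fun u => by
    rw [tentLog, Complex.norm_real, Real.norm_of_nonneg (tent_nonneg _)]
    exact tent_le_one _
  have hbd : ∀ (m : ℕ) (t δ : ℝ), 0 < δ → δ ≤ t →
      ‖(a m : ℂ) * tentLog (m * t)‖ ≤ if (m : ℝ) ≤ Real.exp 1 / δ then a m else 0 :=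
    fun m t δ hδ ht => by
    split_ifs with hm
    · rw [norm_mul, Complex.norm_real, Real.norm_of_nonneg (ha m)]
      exact mul_le_of_le_one_right (ha m) (htl _)
    · rw [hterm0 m t δ hδ ht (not_le.1 hm), norm_zero]
  have hbs : ∀ δ : ℝ, Summable fun m : ℕ => if (m : ℝ) ≤ Real.exp 1 / δ then a m else 0 :=
    fun δ => by
    refine summable_of_hasFiniteSupport ?_
    refine (Set.finite_Iic ⌊Real.exp 1 / δ⌋₊).subset fun m hm => ?_
    by_contra h1
    refine hm (if_neg ?_)
    intro h2
    exact h1 (Nat.le_floor h2)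
  have hcont : ContinuousOn f (Set.Ioi 0) := by
    intro t ht
    have ht : 0 < t := ht
    have h1 : ContinuousOn f (Set.Ioi (t / 2)) := by
      refine continuousOn_tsum (u := fun m : ℕ => if (m : ℝ) ≤ Real.exp 1 / (t / 2) then a m else 0)
        (fun m => ?_) (hbs _) fun m x hx => hbd m x (t / 2) (by positivity) (le_of_lt hx)
      rcases Nat.eq_zero_or_pos m with rfl | hm
      · simp only [ha0, Complex.ofReal_zero, zero_mul]
        exact continuousOn_const
      · refine continuousOn_const.mul (continuousOn_tentLog.comp (by fun_prop) fun x hx => ?_)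
        have hx : t / 2 < x := hx
        have : (0 : ℝ) < m := by exact_mod_cast hm
        exact mul_pos this (by linarith)
    exact (h1.continuousAt (Ioi_mem_nhds (by linarith))).continuousWithinAt
  have hfloc : LocallyIntegrableOn f (Set.Ioi 0) := hcont.locallyIntegrableOn measurableSet_Ioi
  -- `c / t` on `(0, 1]` is the main term of `f`; its Mellin transform is `c / (s - 1)`.
  set p : ℝ → ℂ := Set.indicator (Set.Ioc 0 1) (fun t : ℝ => (t : ℂ) ^ (-1 : ℂ)) with hp
  have hploc : LocallyIntegrableOn p (Set.Ioi 0) := by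
    have h1 : LocallyIntegrableOn (fun t : ℝ => (t : ℂ) ^ (-1 : ℂ)) (Set.Ioi 0) := by
      refine ContinuousOn.locallyIntegrableOn (fun x hx => ?_) measurableSet_Ioi
      have hx : 0 < x := hx
      exact (Complex.continuousAt_ofReal_cpow_const _ _ (Or.inr hx.ne')).continuousWithinAt
    intro x hx
    obtain ⟨u, hu, hi⟩ := h1 x hx
    exact ⟨u, hu, Integrable.indicator hi measurableSet_Ioc⟩
  set E : ℝ → ℂ := fun t => f t - (c : ℂ) * p t with hE
  have hEloc : LocallyIntegrableOn E (Set.Ioi 0) := hfloc.sub (hploc.smul (c : ℂ))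
  obtain ⟨D, hDC, hD⟩ : ∃ D, 0 ≤ D ∧ ∀ t ∈ Set.Ioc 0 (Real.exp 1), ‖E t‖ ≤ D * t ^ (-θ) := by
    set S := ∑' m : ℕ, if (m : ℝ) ≤ Real.exp 1 / 1 then a m else 0 with hS
    have hS0 : 0 ≤ S := tsum_nonneg fun m => by split_ifs; exacts [ha m, le_rfl]
    refine ⟨C + S * Real.exp 1 ^ θ, by positivity, fun t ht => ?_⟩
    have hpos : 0 ≤ t ^ (-θ) := Real.rpow_nonneg ht.1.le _
    rcases le_or_gt t 1 with ht1 | ht1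
    · have h1 := h t⁻¹ ((one_le_inv₀ ht.1).2 ht1)
      have h2 : E t = ((∑' m : ℕ, a m * tent (Real.log m - Real.log t⁻¹) - c * t⁻¹ : ℝ) : ℂ) := by
        simp only [hE, hf, hp]
        rw [Set.indicator_of_mem (show t ∈ Set.Ioc (0:ℝ) 1 from ⟨ht.1, ht1⟩)]
        push_cast
        rw [Complex.cpow_neg_one]
        congr 1
        refine tsum_congr fun m => ?_
        rcases Nat.eq_zero_or_pos m with rfl | hm
        · simp [ha0]
        · have : (m : ℝ) ≠ 0 := by exact_mod_cast hm.ne'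
          rw [tentLog, Real.log_mul this ht.1.ne', Real.log_inv, sub_neg_eq_add]
      rw [h2, Complex.norm_real, Real.norm_eq_abs]
      refine h1.trans ?_
      rw [Real.inv_rpow ht.1.le, ← Real.rpow_neg ht.1.le]
      exact mul_le_mul_of_nonneg_right (le_add_of_nonneg_right (by positivity)) hpos
    · have h2 : E t = f t := by
        simp only [hE, hp]
        rw [Set.indicator_of_notMem (fun h => absurd h.2 (not_le.2 ht1)), mul_zero, sub_zero]
      have h3 : ‖f t‖ ≤ S :=
        tsum_of_norm_bounded (hbs 1).hasSum fun m => hbd m t 1 one_pos ht1.le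
      rw [h2]
      refine h3.trans ?_
      have h4 : 1 ≤ Real.exp 1 ^ θ * t ^ (-θ) := by
        rw [Real.rpow_neg ht.1.le, ← div_eq_mul_inv, one_le_div (Real.rpow_pos_of_pos ht.1 _)]
        exact Real.rpow_le_rpow ht.1.le ht.2 hθ0
      nlinarith [mul_nonneg hC hpos]
  have hE1 : ∀ t, Real.exp 1 < t → E t = 0 := fun t ht => by
    have ht1 : 1 < t := (Real.one_lt_exp_iff.2 one_pos).trans ht
    simp only [hE, hp, hf]
    rw [Set.indicator_of_notMem (fun h => absurd h.2 (not_le.2 ht1)), mul_zero, sub_zero]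
    rw [← tsum_zero (β := ℕ)]
    refine tsum_congr fun m => ?_
    rcases Nat.eq_zero_or_pos m with rfl | hm
    · simp [ha0]
    · refine hterm0 m t t (by linarith) le_rfl ?_
      have : (1 : ℝ) ≤ m := by exact_mod_cast hm
      rw [div_lt_iff₀ (by linarith)]
      nlinarith
  have hM := mellin_of_bound E hEloc θ D hD hE1
  have hτ : ∀ s : ℂ, θ < s.re → mellin tentLog s ≠ 0 := fun s hs h0 => by
    have h1 := norm_mellin_tentLog_ge s (hθ0.trans_lt hs)
    rw [h0, norm_zero] at h1
    have hs' : s ≠ 0 := by rintro rfl; simp at hs; linarith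
    have : 0 < s.re ^ 2 / ‖s‖ ^ 2 :=
      div_pos (pow_pos (hθ0.trans_lt hs) 2) (pow_pos (norm_pos_iff.2 hs') 2)
    linarith
  refine ⟨fun s => ((s - 1) * mellin E s + c) / mellin tentLog s, fun s hs => ?_, fun s hs => ?_,
    fun θ' hθ' => ?_⟩
  · refine DifferentiableAt.div ?_ (differentiableAt_mellin_tentLog s ?_) (hτ s hs)
    · have := (hM s hs).2.1
      fun_prop
    · rintro rfl; simp at hs; linarith
  · have hs' : θ < s.re := hθ1.trans hs
    have h1 : mellin f s = LSeries (fun m => (a m : ℂ)) s * mellin tentLog s := by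
      have := mellin_dirichlet (fun m => (a m : ℂ)) tentLog s (by simp [ha0])
        (mellinConvergent_tentLog s) (hsum s hs)
      exact this
    have h2 := hasMellin_cpow_Ioc (-1) (s := s) (by simpa using hs)
    have h3 : mellin f s = mellin E s + c * (1 / (s + -1)) := by
      have e : f = fun t => E t + (c : ℂ) * p t := by
        ext t; simp only [hE]; ring
      have h4 := hasMellin_add (hM s hs').1 (h2.1.const_smul (c : ℂ))
      have h5 := mellin_const_smul p s (c : ℂ)
      rw [← h2.2]
      conv_lhs => rw [e]
      refine h4.2.trans ?_
      rw [h5]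
      rfl
    have hs1 : s - 1 ≠ 0 := by
      intro h0
      have := congrArg Complex.re h0
      simp at this; linarith
    rw [div_eq_iff (hτ s hs'), mul_assoc, ← h1, h3, ← sub_eq_add_neg]
    field_simp
  · have hθ'0 : 0 < θ' := hθ0.trans_lt hθ'
    set B1 := D * (Real.exp 1 ^ (3 - θ) / (θ' - θ)) with hB1
    have hB10 : 0 ≤ B1 := mul_nonneg hDC (div_nonneg (Real.rpow_nonneg (Real.exp_pos _).le _) (by linarith))
    refine ⟨((1 + 1 / θ') * B1 + |c| / θ' + 1) / θ' ^ 2, by positivity, fun s hs hs3 => ?_⟩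
    have hns : θ' ≤ ‖s‖ := hs.trans ((le_abs_self _).trans (Complex.abs_re_le_norm s))
    have hns0 : 0 < ‖s‖ := hθ'0.trans_le hns
    have h1 : ‖mellin E s‖ ≤ B1 := by
      refine (hM s (hθ'.trans_le hs)).2.2.trans ?_
      refine mul_le_mul_of_nonneg_left ?_ hDC
      refine div_le_div₀ (Real.rpow_nonneg (Real.exp_pos _).le _) ?_ (by linarith) (by linarith)
      exact Real.rpow_le_rpow_of_exponent_le (Real.one_le_exp (by norm_num)) (by linarith)
    have h2 : ‖(s - 1) * mellin E s + c‖ ≤ ((1 + 1 / θ') * B1 + |c| / θ' + 1) * ‖s‖ := by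
      have h3 : 1 ≤ ‖s‖ / θ' := (one_le_div hθ'0).2 hns
      have h4 : ‖s - 1‖ ≤ (1 + 1 / θ') * ‖s‖ := by
        refine (norm_sub_le _ _).trans ?_
        rw [norm_one]
        have : ‖s‖ / θ' = 1 / θ' * ‖s‖ := by ring
        linarith
      calc ‖(s - 1) * mellin E s + c‖ ≤ ‖s - 1‖ * ‖mellin E s‖ + |c| := by
            refine (norm_add_le _ _).trans_eq ?_
            rw [norm_mul, Complex.norm_real, Real.norm_eq_abs]
        _ ≤ ((1 + 1 / θ') * ‖s‖) * B1 + |c| * (‖s‖ / θ') := by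
            refine add_le_add (mul_le_mul h4 h1 (norm_nonneg _) (by positivity)) ?_
            exact le_mul_of_one_le_right (abs_nonneg _) h3
        _ ≤ _ := by
            have : |c| * (‖s‖ / θ') = |c| / θ' * ‖s‖ := by ring
            nlinarith
    have h5 : θ' ^ 2 / ‖s‖ ^ 2 ≤ ‖mellin tentLog s‖ := by
      refine le_trans ?_ (norm_mellin_tentLog_ge s (hθ'0.trans_le hs))
      gcongr
    rw [norm_div]
    calc _ ≤ (((1 + 1 / θ') * B1 + |c| / θ' + 1) * ‖s‖) / (θ' ^ 2 / ‖s‖ ^ 2) :=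
          div_le_div₀ (by positivity) h2 (by positivity) h5
      _ = _ := by field_simp

end Continuation

/-! ### Continuation of the Dedekind zeta function -/

section DedekindZeta

open NumberField

variable (K : Type*) [Field K] [NumberField K]

lemma idealCoeff_of_ne_zero {m : ℕ} (hm : m ≠ 0) :
    idealCoeff K m = Nat.card {I : Ideal (𝓞 K) // Ideal.absNorm I = m} := if_neg hm

/-- The mean value of `idealCoeff` is the residue of `ζ_K` at `1`; only its existence and its
nonvanishing matter below. -/
lemma tendsto_sum_idealCoeff :
    Tendsto (fun n : ℕ => (∑ k ∈ Finset.Icc 1 n, idealCoeff K k) / n) atTop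
      (nhds (dedekindZeta_residue K)) := by
  refine ((Ideal.tendsto_norm_le_div_atTop₀ K).comp tendsto_natCast_atTop_atTop).congr fun n ↦ ?_
  have h0 : ∑ k ∈ Finset.Icc 1 n, idealCoeff K k =
      ∑ k ∈ Finset.Icc 1 n, (Nat.card {I : Ideal (𝓞 K) // Ideal.absNorm I = k} : ℝ) :=
    Finset.sum_congr rfl fun k hk =>
      idealCoeff_of_ne_zero K (Nat.one_le_iff_ne_zero.1 (Finset.mem_Icc.1 hk).1)
  simp only [Function.comp_apply, Nat.cast_le]
  rw [h0]
  simp only [← Nat.cast_sum]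
  congr
  rw [← add_left_inj 1, ← Ideal.card_norm_le_eq_card_norm_le_add_one,
    show Finset.Icc 1 n = Finset.Ioc 0 n from Finset.Icc_succ_left_eq_Ioc _ _,
    show 1 = Nat.card {I : Ideal (𝓞 K) // Ideal.absNorm I = 0} by simp [Ideal.absNorm_eq_zero_iff],
    Finset.sum_Ioc_add_eq_sum_Icc (n.zero_le),
    ← Finset.card_preimage_eq_sum_card_image_eq (fun k _ ↦ Ideal.finite_setOfPred_absNorm_eq k)]
  simp [Set.coe_eq_subtype]

lemma idealCoeff_summable (s : ℂ) (hs : 1 < s.re) :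
    LSeriesSummable (fun m => (idealCoeff K m : ℂ)) s := by
  refine LSeriesSummable_of_sum_norm_bigO_and_nonneg (r := 1) ?_ (idealCoeff_nonneg K)
    zero_le_one hs
  have h1 := (tendsto_sum_idealCoeff K).isBigO_one ℝ
  have h2 := h1.mul (Asymptotics.isBigO_refl (fun n : ℕ => (n : ℝ)) atTop)
  refine h2.congr' ?_ ?_
  · filter_upwards [eventually_ne_atTop 0] with n hn
    have : (n : ℝ) ≠ 0 := by exact_mod_cast hn
    field_simp
  · exact Eventually.of_forall fun n => by simp

/-- `(s - 1) ζ_K(s)` continues holomorphically past the line `Re s = 1`, with polynomial growth,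
and does not vanish at `s = 1`. -/
lemma zeta_continuation : ∃ θ : ℝ, θ < 1 ∧ 0 ≤ θ ∧ ∃ g : ℂ → ℂ,
    (∀ s, θ < s.re → DifferentiableAt ℂ g s) ∧
    (∀ s, 1 < s.re → g s = (s - 1) * LSeries (fun m => (idealCoeff K m : ℂ)) s) ∧
    (∀ θ', θ < θ' → ∃ B, 0 < B ∧ ∀ s : ℂ, θ' ≤ s.re → s.re ≤ 3 → ‖g s‖ ≤ B * ‖s‖ ^ 3) ∧
    g 1 ≠ 0 := by
  obtain ⟨c₀, C₀, h⟩ := ideal_sum K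
  have hn : (1 : ℝ) ≤ (Module.finrank ℚ K : ℝ) := by exact_mod_cast Module.finrank_pos
  have hθ0 : 0 ≤ 1 - 1 / (Module.finrank ℚ K : ℝ) := by
    rw [sub_nonneg, div_le_one (by linarith)]; exact hn
  have hθ1 : 1 - 1 / (Module.finrank ℚ K : ℝ) < 1 := by
    have : 0 < 1 / (Module.finrank ℚ K : ℝ) := by positivity
    linarith
  obtain ⟨g, hg1, hg2, hg3⟩ := exists_continuation (idealCoeff K) (idealCoeff_nonneg K)
    (by simp [idealCoeff]) (idealCoeff_summable K) c₀ C₀ _ hθ0 hθ1 h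
  refine ⟨_, hθ1, hθ0, g, hg1, hg2, hg3, ?_⟩
  have h1 : Tendsto (fun s : ℝ => (s - 1 : ℂ) * LSeries (fun m => (idealCoeff K m : ℂ)) s)
      (nhdsWithin 1 (Set.Ioi 1)) (nhds (dedekindZeta_residue K)) := by
    refine (LSeries_tendsto_sub_mul_nhds_one_of_tendsto_sum_div_and_nonneg _
      (tendsto_sum_idealCoeff K) (idealCoeff_nonneg K))
  have h2 : Tendsto (fun s : ℝ => g s) (nhdsWithin 1 (Set.Ioi 1)) (nhds (g 1)) := by
    have h3 : ContinuousAt g ((1 : ℝ) : ℂ) := (hg1 _ (by simpa using hθ1)).continuousAt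
    have h4 : ContinuousAt (fun s : ℝ => g s) 1 :=
      ContinuousAt.comp (f := fun s : ℝ => (s : ℂ)) h3 Complex.continuous_ofReal.continuousAt
    have := h4.tendsto.mono_left (nhdsWithin_le_nhds (s := Set.Ioi 1))
    simpa using this
  have h5 : g 1 = dedekindZeta_residue K := by
    refine tendsto_nhds_unique h2 (h1.congr' ?_)
    filter_upwards [self_mem_nhdsWithin] with s hs
    exact (hg2 s (by simpa using hs)).symm
  rw [h5]
  exact_mod_cast dedekindZeta_residue_ne_zero K

end DedekindZeta

/-! ### The von Mangoldt coefficients of the Dedekind zeta function -/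

section IdealMangoldt

open NumberField IsDedekindDomain

variable (K : Type*) [Field K] [NumberField K]

/-- Nontrivial prime powers `P ^ (j + 1)` of `𝓞 K`, encoded by the pair `(P, j)`. -/
abbrev primePow (x : HeightOneSpectrum (𝓞 K) × ℕ) : Ideal (𝓞 K) := x.1.asIdeal ^ (x.2 + 1)

/-- The von Mangoldt coefficients of `-ζ_K'/ζ_K`: the sum of `log N P` over all prime powers
`P ^ j`, `j ≥ 1`, of norm `m`. -/
def idealMangoldt (m : ℕ) : ℝ :=
  ∑ᶠ x ∈ {x : HeightOneSpectrum (𝓞 K) × ℕ | Ideal.absNorm (primePow K x) = m},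
    Real.log (Ideal.absNorm x.1.asIdeal)

variable {K}

lemma one_lt_absNorm (P : HeightOneSpectrum (𝓞 K)) : 1 < Ideal.absNorm P.asIdeal := by
  have h0 : Ideal.absNorm P.asIdeal ≠ 0 := Ideal.absNorm_eq_zero_iff.not.2 P.ne_bot
  have h1 : Ideal.absNorm P.asIdeal ≠ 1 := Ideal.absNorm_eq_one_iff.not.2 P.isPrime.ne_top
  omega

lemma primePow_injective : Function.Injective (primePow K) := by
  rintro ⟨P, a⟩ ⟨Q, b⟩ h
  simp only [primePow] at h
  have h1 : P = Q := by
    have : P.asIdeal ∣ Q.asIdeal ^ (b + 1) := h ▸ dvd_pow_self _ (Nat.succ_ne_zero a)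
    have h2 : P.asIdeal ∣ Q.asIdeal := P.prime.dvd_of_dvd_pow this
    exact HeightOneSpectrum.ext ((associated_iff_eq.1
      ((P.prime.dvd_prime_iff_associated Q.prime).1 h2)))
  subst h1
  have := (Ideal.pow_right_strictAnti P.asIdeal P.ne_bot P.isPrime.ne_top).injective h
  simp only [add_left_inj] at this
  rw [this]

lemma finite_primePow_norm (m : ℕ) :
    {x : HeightOneSpectrum (𝓞 K) × ℕ | Ideal.absNorm (primePow K x) = m}.Finite :=
  (Ideal.finite_setOfPred_absNorm_eq (S := 𝓞 K) m).preimage primePow_injective.injOn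

lemma finite_primePow_dvd {I : Ideal (𝓞 K)} (hI : I ≠ 0) :
    {x : HeightOneSpectrum (𝓞 K) × ℕ | primePow K x ∣ I}.Finite := by
  have h1 : {J : Ideal (𝓞 K) | J ∣ I}.Finite := by
    have := UniqueFactorizationMonoid.fintypeSubtypeDvd I hI
    refine (Set.finite_range (Subtype.val : {J // J ∣ I} → Ideal (𝓞 K))).subset fun J hJ => ?_
    exact ⟨⟨J, hJ⟩, rfl⟩
  exact Set.Finite.preimage (s := {J : Ideal (𝓞 K) | J ∣ I}) primePow_injective.injOn h1

lemma sum_primePow_dvd (I : Ideal (𝓞 K)) : I ≠ 0 →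
    ∑ᶠ x ∈ {x : HeightOneSpectrum (𝓞 K) × ℕ | primePow K x ∣ I},
      Real.log (Ideal.absNorm x.1.asIdeal) = Real.log (Ideal.absNorm I) := by
  refine UniqueFactorizationMonoid.induction_on_prime I (fun h => absurd rfl h) ?_ ?_
  · intro J hJ _
    have h1 : {x : HeightOneSpectrum (𝓞 K) × ℕ | primePow K x ∣ J} = ∅ := by
      refine Set.eq_empty_of_forall_notMem fun x hx => ?_
      have h2 : IsUnit (primePow K x) := isUnit_of_dvd_unit hx hJ
      exact x.1.prime.not_isUnit ((isUnit_pow_iff (Nat.succ_ne_zero _)).1 h2)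
    rw [h1, finsum_mem_empty, Ideal.isUnit_iff.1 hJ]
    simp
  · intro J p hJ hp ih _
    let P : HeightOneSpectrum (𝓞 K) := ⟨p, Ideal.isPrime_of_prime hp, hp.ne_zero⟩
    have hfin := FiniteMultiplicity.of_prime_left hp hJ
    have h1 : {x : HeightOneSpectrum (𝓞 K) × ℕ | primePow K x ∣ p * J} =
        insert (P, multiplicity p J) {x | primePow K x ∣ J} := by
      ext ⟨Q, j⟩
      simp only [Set.mem_insert_iff, Set.mem_ofPred_eq, primePow]
      constructor
      · intro h
        by_cases hQ : Q = P
        · subst hQ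
          change p ^ (j + 1) ∣ p * J at h
          change _ ∨ p ^ (j + 1) ∣ J
          rw [pow_succ', mul_dvd_mul_iff_left hp.ne_zero, hfin.pow_dvd_iff_le_multiplicity] at h
          rw [hfin.pow_dvd_iff_le_multiplicity]
          rcases h.eq_or_lt with h | h
          · left; rw [h]
          · right; exact h
        · right
          refine Q.prime.pow_dvd_of_dvd_mul_left _ ?_ h
          intro h2
          exact hQ (HeightOneSpectrum.ext (associated_iff_eq.1
            ((Q.prime.dvd_prime_iff_associated hp).1 h2)))
      · rintro (h | h)
        · obtain ⟨rfl, rfl⟩ := Prod.mk.inj h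
          change p ^ (_ + 1) ∣ p * J
          rw [pow_succ']
          exact mul_dvd_mul_left _ (pow_multiplicity_dvd _ _)
        · exact h.mul_left _
    have h2 : (P, multiplicity p J) ∉ {x : HeightOneSpectrum (𝓞 K) × ℕ | primePow K x ∣ J} := by
      intro h
      have h3 : p ^ (multiplicity p J + 1) ∣ J := h
      rw [hfin.pow_dvd_iff_le_multiplicity] at h3
      omega
    rw [h1, finsum_mem_insert _ h2 (finite_primePow_dvd hJ), ih hJ, map_mul, Nat.cast_mul,
      Real.log_mul]
    · exact_mod_cast Ideal.absNorm_eq_zero_iff.not.2 hp.ne_zero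
    · exact_mod_cast Ideal.absNorm_eq_zero_iff.not.2 hJ

variable (K)

lemma idealMangoldt_nonneg (m : ℕ) : 0 ≤ idealMangoldt K m := by
  rw [idealMangoldt, finsum_mem_eq_finite_toFinset_sum _ (finite_primePow_norm m)]
  exact Finset.sum_nonneg fun x _ => Real.log_natCast_nonneg _

/-- The Dirichlet convolution identity `Λ_K * a_K = a_K · log`. -/
lemma idealMangoldt_convolution (m : ℕ) :
    ∑ d ∈ m.divisorsAntidiagonal, idealMangoldt K d.1 * idealCoeff K d.2 =
      idealCoeff K m * Real.log m := by
  rcases Nat.eq_zero_or_pos m with rfl | hm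
  · simp
  set w : HeightOneSpectrum (𝓞 K) × ℕ → ℝ := fun x => Real.log (Ideal.absNorm x.1.asIdeal) with hw
  let A : ℕ → Finset (Ideal (𝓞 K)) := fun k => (Ideal.finite_setOfPred_absNorm_eq (S := 𝓞 K) k).toFinset
  let Y : ℕ → Finset (HeightOneSpectrum (𝓞 K) × ℕ) := fun k => (finite_primePow_norm k).toFinset
  let D : Ideal (𝓞 K) → Finset (HeightOneSpectrum (𝓞 K) × ℕ) := fun I =>
    if hI : I ≠ 0 then (finite_primePow_dvd hI).toFinset else ∅
  have hA : ∀ k I, I ∈ A k ↔ Ideal.absNorm I = k := fun k I => by simp [A]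
  have hY : ∀ k x, x ∈ Y k ↔ Ideal.absNorm (primePow K x) = k := fun k x => by simp [Y]
  have hD : ∀ I, I ≠ 0 → ∀ x, x ∈ D I ↔ primePow K x ∣ I := fun I hI x => by
    simp only [D]
    rw [dif_pos hI]
    simp
  have hΛ : ∀ k, idealMangoldt K k = ∑ x ∈ Y k, w x := fun k =>
    finsum_mem_eq_finite_toFinset_sum _ _
  have ha : ∀ k, k ≠ 0 → idealCoeff K k = (A k).card := fun k hk => by
    rw [idealCoeff, if_neg hk]
    norm_cast
    exact Nat.card_coe_set_eq _ |>.trans (Set.ncard_eq_toFinset_card _ _)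
  have hne : ∀ I, I ∈ A m → I ≠ 0 := fun I hI h0 => by
    rw [hA, h0] at hI
    simp at hI
    omega
  have hlog : ∀ I ∈ A m, ∑ x ∈ D I, w x = Real.log m := fun I hI => by
    have h0 := hne I hI
    rw [← (hA m I).1 hI, ← sum_primePow_dvd I h0, finsum_mem_eq_finite_toFinset_sum _ (finite_primePow_dvd h0)]
    simp only [D, w]
    rw [dif_pos h0]
  have hR : idealCoeff K m * Real.log m = ∑ I ∈ A m, ∑ x ∈ D I, w x := by
    rw [Finset.sum_congr rfl hlog, Finset.sum_const, nsmul_eq_mul, ha m hm.ne']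
  have hL : ∑ d ∈ m.divisorsAntidiagonal, idealMangoldt K d.1 * idealCoeff K d.2 =
      ∑ d ∈ m.divisorsAntidiagonal, ∑ y ∈ Y d.1 ×ˢ A d.2, w y.1 := by
    refine Finset.sum_congr rfl fun d hd => ?_
    have : d.2 ≠ 0 := by
      rintro h
      have := (Nat.mem_divisorsAntidiagonal.1 hd).1
      rw [h] at this; omega
    rw [hΛ, ha _ this, Finset.sum_product, Finset.sum_mul]
    refine Finset.sum_congr rfl fun x _ => ?_
    simp only [Finset.sum_const, nsmul_eq_mul]
    ring
  rw [hL, hR, Finset.sum_sigma', Finset.sum_sigma']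
  have hmem : ∀ z ∈ m.divisorsAntidiagonal.sigma (fun d => Y d.1 ×ˢ A d.2),
      z.1.1 * z.1.2 = m ∧ Ideal.absNorm (primePow K z.2.1) = z.1.1 ∧
        Ideal.absNorm z.2.2 = z.1.2 := fun z hz => by
    rw [Finset.mem_sigma, Finset.mem_product, hY, hA, Nat.mem_divisorsAntidiagonal] at hz
    exact ⟨hz.1.1, hz.2.1, hz.2.2⟩
  refine Finset.sum_bij (fun z _ => ⟨primePow K z.2.1 * z.2.2, z.2.1⟩) ?_ ?_ ?_ ?_
  · intro z hz
    obtain ⟨h1, h2, h3⟩ := hmem z hz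
    have h4 : primePow K z.2.1 * z.2.2 ∈ A m := by rw [hA, map_mul, h2, h3, h1]
    rw [Finset.mem_sigma]
    exact ⟨h4, (hD _ (hne _ h4) _).2 (dvd_mul_right _ _)⟩
  · rintro ⟨⟨d, e⟩, x, J⟩ hz ⟨⟨d', e'⟩, x', J'⟩ hz' h
    obtain ⟨-, h2, h3⟩ := hmem _ hz
    obtain ⟨-, h2', h3'⟩ := hmem _ hz'
    simp only [Sigma.mk.injEq, heq_eq_eq] at h h2 h3 h2' h3'
    obtain ⟨h4, rfl⟩ := h
    have h5 : primePow K x ≠ 0 := pow_ne_zero _ x.1.prime.ne_zero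
    have h6 := mul_left_cancel₀ h5 h4
    subst h6 h2 h3
    rw [← h2', ← h3']
  · rintro ⟨I, x⟩ hz
    rw [Finset.mem_sigma] at hz
    obtain ⟨J, hJ⟩ := (hD I (hne I hz.1) x).1 hz.2
    have h1 := (hA m I).1 hz.1
    rw [hJ, map_mul] at h1
    refine ⟨⟨(Ideal.absNorm (primePow K x), Ideal.absNorm J), x, J⟩, ?_, ?_⟩
    · rw [Finset.mem_sigma, Finset.mem_product, hY, hA, Nat.mem_divisorsAntidiagonal]
      exact ⟨⟨h1, hm.ne'⟩, rfl, rfl⟩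
    · rw [hJ]
  · intro z _; rfl

/-- The norms of distinct primes above `p` multiply to a divisor of `p ^ [K : ℚ]`. -/
lemma prod_absNorm_dvd (p : ℕ) (s : Finset (HeightOneSpectrum (𝓞 K)))
    (hs : ∀ P ∈ s, (p : 𝓞 K) ∈ P.asIdeal) :
    ∏ P ∈ s, Ideal.absNorm P.asIdeal ∣ p ^ Module.finrank ℚ K := by
  rw [← RingOfIntegers.rank, ← Ideal.absNorm_span_natCast (S := 𝓞 K), ← map_prod]
  refine Ideal.absNorm_dvd_absNorm_of_le (Ideal.le_of_dvd ?_)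
  have h1 : ∏ P ∈ s, P.asIdeal = ∏ I ∈ s.map ⟨fun P => P.asIdeal, fun P Q h => HeightOneSpectrum.ext h⟩, I := by
    rw [Finset.prod_map]; rfl
  rw [h1]
  refine Finset.prod_primes_dvd _ ?_ ?_
  · intro I hI
    obtain ⟨P, hP, rfl⟩ := Finset.mem_map.1 hI
    exact P.prime
  · intro I hI
    obtain ⟨P, hP, rfl⟩ := Finset.mem_map.1 hI
    rw [Ideal.dvd_iff_le, Ideal.span_singleton_le_iff_mem]
    exact hs P hP

variable {K}

lemma absNorm_of_mem {p : ℕ} (hp : p.Prime) {P : HeightOneSpectrum (𝓞 K)}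
    (h : (p : 𝓞 K) ∈ P.asIdeal) : ∃ f, 0 < f ∧ Ideal.absNorm P.asIdeal = p ^ f := by
  have h1 := prod_absNorm_dvd K p {P} (by simpa using h)
  rw [Finset.prod_singleton] at h1
  obtain ⟨f, -, hf⟩ := (Nat.dvd_prime_pow hp).1 h1
  refine ⟨f, Nat.pos_of_ne_zero ?_, hf⟩
  rintro rfl
  have := one_lt_absNorm P
  rw [hf, pow_zero] at this
  omega

lemma exists_prime_mem (P : HeightOneSpectrum (𝓞 K)) :
    ∃ p : ℕ, p.Prime ∧ (p : 𝓞 K) ∈ P.asIdeal := by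
  have h1 := Ideal.absNorm_mem P.asIdeal
  by_contra! h
  have h2 : ∀ m : ℕ, m ≠ 0 → (m : 𝓞 K) ∉ P.asIdeal := by
    intro m
    induction m using Nat.recOnMul with
    | zero => simp
    | one =>
      intro _ h3
      rw [Nat.cast_one] at h3
      exact P.isPrime.ne_top ((Ideal.eq_top_iff_one _).2 h3)
    | prime p hp => exact fun _ => h p hp
    | mul a b ha hb =>
      intro hab h3
      rw [Nat.cast_mul] at h3
      rcases P.isPrime.mem_or_mem h3 with h4 | h4
      · exact ha (left_ne_zero_of_mul hab) h4
      · exact hb (right_ne_zero_of_mul hab) h4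
  exact h2 _ (by have := one_lt_absNorm P; omega) h1

/-- A prime ideal is above `p` as soon as one of its powers has norm divisible by `p`. -/
lemma mem_of_dvd_absNorm {p j : ℕ} (hp : p.Prime) {P : HeightOneSpectrum (𝓞 K)}
    (h : p ∣ Ideal.absNorm (primePow K (P, j))) : (p : 𝓞 K) ∈ P.asIdeal := by
  obtain ⟨q, hq, hqP⟩ := exists_prime_mem P
  obtain ⟨f, -, hf⟩ := absNorm_of_mem hq hqP
  rw [map_pow, hf] at h
  have := (Nat.prime_dvd_prime_iff_eq hp hq).1 (hp.dvd_of_dvd_pow (hp.dvd_of_dvd_pow h))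
  rwa [this]

variable (K)

/-- Coefficientwise comparison with the rational case: at a power of `p` the coefficient is the sum of
`log N P` over certain `P` above `p`, which is at most `[K : ℚ] log p`. -/
lemma idealMangoldt_le (m : ℕ) :
    idealMangoldt K m ≤ Module.finrank ℚ K * ArithmeticFunction.vonMangoldt m := by
  have hv := ArithmeticFunction.vonMangoldt_nonneg (n := m)
  rw [idealMangoldt, finsum_mem_eq_finite_toFinset_sum _ (finite_primePow_norm m)]
  set X := (finite_primePow_norm (K := K) m).toFinset with hX
  rcases X.eq_empty_or_nonempty with he | ⟨x, hx⟩
  · rw [he, Finset.sum_empty]; positivity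
  have hXm : ∀ y ∈ X, Ideal.absNorm (primePow K y) = m := fun y hy => by simpa [hX] using hy
  obtain ⟨p, hp, hpx⟩ := exists_prime_mem x.1
  obtain ⟨f, hf0, hf⟩ := absNorm_of_mem hp hpx
  have hm : m = p ^ (f * (x.2 + 1)) := by rw [← hXm x hx, map_pow, hf, pow_mul]
  have hm0 : f * (x.2 + 1) ≠ 0 := by positivity
  have hΛ : ArithmeticFunction.vonMangoldt m = Real.log p := by
    rw [hm, ArithmeticFunction.vonMangoldt_apply_pow hm0,
      ArithmeticFunction.vonMangoldt_apply_prime hp]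
  have hmem : ∀ y ∈ X, (p : 𝓞 K) ∈ y.1.asIdeal := fun y hy => by
    refine mem_of_dvd_absNorm (j := y.2) hp ?_
    rw [hXm y hy, hm]
    exact dvd_pow_self _ hm0
  have hinj : Set.InjOn Prod.fst (X : Set (HeightOneSpectrum (𝓞 K) × ℕ)) := by
    rintro ⟨P, a⟩ ha ⟨Q, b⟩ hb h
    simp only at h
    subst h
    have h1 := (hXm _ ha).trans (hXm _ hb).symm
    simp only [primePow, map_pow] at h1
    have := Nat.pow_right_injective (one_lt_absNorm P) h1
    simp only [add_left_inj] at this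
    rw [this]
  have h1 : ∑ y ∈ X, Real.log (Ideal.absNorm y.1.asIdeal) =
      ∑ P ∈ X.image Prod.fst, Real.log (Ideal.absNorm P.asIdeal) :=
    (Finset.sum_image (f := fun P : HeightOneSpectrum (𝓞 K) =>
      Real.log (Ideal.absNorm P.asIdeal)) hinj).symm
  rw [h1, hΛ, ← Real.log_prod]
  · rw [← Real.log_pow]
    have h2 := prod_absNorm_dvd K p (X.image Prod.fst) fun P hP => by
      obtain ⟨y, hy, rfl⟩ := Finset.mem_image.1 hP
      exact hmem y hy
    have h3 := Nat.le_of_dvd (pow_pos hp.pos _) h2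
    refine Real.log_le_log ?_ (by exact_mod_cast h3)
    exact Finset.prod_pos fun P _ => by exact_mod_cast (one_lt_absNorm P).le
  · intro P _
    have := one_lt_absNorm P
    have : Ideal.absNorm P.asIdeal ≠ 0 := by omega
    exact_mod_cast this

lemma idealMangoldt_summable (s : ℂ) (hs : 1 < s.re) :
    LSeriesSummable (fun m => (idealMangoldt K m : ℂ)) s := by
  refine Summable.of_norm_bounded
    ((ArithmeticFunction.LSeriesSummable_vonMangoldt hs).norm.mul_left (Module.finrank ℚ K : ℝ))
    fun m => ?_
  rw [LSeries.norm_term_eq, LSeries.norm_term_eq]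
  split_ifs
  · simp
  · rw [Complex.norm_real, Complex.norm_real, Real.norm_of_nonneg (idealMangoldt_nonneg K m),
      Real.norm_of_nonneg ArithmeticFunction.vonMangoldt_nonneg, ← mul_div_assoc]
    exact div_le_div_of_nonneg_right (idealMangoldt_le K m) (Real.rpow_nonneg (Nat.cast_nonneg _) _)

end IdealMangoldt

/-! ### The logarithm of the Dedekind zeta function and the 3-4-1 inequality -/

section ZetaLog

open NumberField

variable (K : Type*) [Field K] [NumberField K]

lemma idealCoeff_one : idealCoeff K 1 = 1 := by
  rw [idealCoeff_of_ne_zero K one_ne_zero]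
  have : ∀ I : Ideal (𝓞 K), Ideal.absNorm I = 1 ↔ I = ⊤ := fun I => Ideal.absNorm_eq_one_iff
  simp [this]

lemma idealMangoldt_one : idealMangoldt K 1 = 0 := by
  have := idealMangoldt_convolution K 1
  simpa [idealCoeff_one K] using this

/-- A Dirichlet series converging for `Re s > 1` has abscissa of absolute convergence at most `1`. -/
lemma abscissa_lt {f : ℕ → ℂ} (h : ∀ s : ℂ, 1 < s.re → LSeriesSummable f s) {s : ℂ}
    (hs : 1 < s.re) : LSeries.abscissaOfAbsConv f < s.re := by
  refine lt_of_le_of_lt (LSeries.abscissaOfAbsConv_le_of_forall_lt_LSeriesSummable (x := 1)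
    fun y hy => h y (by simpa using hy)) (by exact_mod_cast hs)

/-- Coefficients of `log ζ_K`. -/
def logCoeff (m : ℕ) : ℂ := ((idealMangoldt K m / Real.log m : ℝ) : ℂ)

lemma logCoeff_summable (s : ℂ) (hs : 1 < s.re) : LSeriesSummable (logCoeff K) s := by
  refine Summable.of_norm_bounded ((idealMangoldt_summable K s hs).norm.mul_left (Real.log 2)⁻¹)
    fun m => ?_
  rw [LSeries.norm_term_eq, LSeries.norm_term_eq]
  split_ifs with h0
  · simp
  rw [← mul_div_assoc]
  refine div_le_div_of_nonneg_right ?_ (Real.rpow_nonneg (Nat.cast_nonneg _) _)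
  have hΛ := idealMangoldt_nonneg K m
  rcases Nat.lt_or_ge m 2 with h1 | h2
  · obtain rfl : m = 1 := by omega
    simp [logCoeff, idealMangoldt_one]
  · have h2' : (2 : ℝ) ≤ m := by exact_mod_cast h2
    have hl2 : 0 < Real.log 2 := Real.log_pos (by norm_num)
    have hl : Real.log 2 ≤ Real.log m := Real.log_le_log (by norm_num) h2'
    rw [logCoeff, Complex.norm_real, Complex.norm_real, Real.norm_of_nonneg hΛ,
      Real.norm_of_nonneg (div_nonneg hΛ (hl2.le.trans hl)), div_eq_inv_mul]
    exact mul_le_mul_of_nonneg_right (inv_anti₀ hl2 hl) hΛ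

lemma hasDerivAt_log (s : ℂ) (hs : 1 < s.re) : HasDerivAt (LSeries (logCoeff K))
    (-LSeries (fun m => (idealMangoldt K m : ℂ)) s) s := by
  have h := LSeries_hasDerivAt (abscissa_lt (logCoeff_summable K) hs)
  refine h.congr_deriv ?_
  congr 1
  refine LSeries_congr (fun {m} hm => ?_) s
  rcases Nat.lt_or_ge m 2 with h1 | h2
  · obtain rfl : m = 1 := by omega
    simp [LSeries.logMul, idealMangoldt_one]
  · have h2' : (1 : ℝ) < m := by exact_mod_cast h2
    have hl : Real.log m ≠ 0 := (Real.log_pos h2').ne'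
    rw [LSeries.logMul, logCoeff, ← Complex.natCast_log, ← Complex.ofReal_mul,
      mul_div_cancel₀ _ hl]

lemma hasDerivAt_zeta (s : ℂ) (hs : 1 < s.re) :
    HasDerivAt (LSeries (fun m => (idealCoeff K m : ℂ)))
    (-(LSeries (fun m => (idealMangoldt K m : ℂ)) s * LSeries (fun m => (idealCoeff K m : ℂ)) s))
    s := by
  have h := LSeries_hasDerivAt (abscissa_lt (idealCoeff_summable K) hs)
  refine h.congr_deriv ?_
  congr 1
  rw [← LSeries_convolution' (idealMangoldt_summable K s hs) (idealCoeff_summable K s hs),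
    LSeries.convolution_def]
  refine LSeries_congr (fun {m} hm => ?_) s
  rw [LSeries.logMul, ← Complex.natCast_log, mul_comm, ← Complex.ofReal_mul,
    ← idealMangoldt_convolution K m]
  push_cast
  rfl

/-- The Euler product in logarithmic form, obtained by integrating `ζ_K'/ζ_K`. -/
lemma zeta_eq_exp (s : ℂ) (hs : 1 < s.re) :
    LSeries (fun m => (idealCoeff K m : ℂ)) s = Complex.exp (LSeries (logCoeff K) s) := by
  set Z := LSeries (fun m => (idealCoeff K m : ℂ)) with hZ
  set l := LSeries (logCoeff K) with hl
  set H : ℂ → ℂ := fun s => Z s * Complex.exp (-l s) with hH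
  have hd : ∀ s : ℂ, 1 < s.re → HasDerivAt H 0 s := fun s hs => by
    refine ((hasDerivAt_zeta K s hs).mul (hasDerivAt_log K s hs).neg.cexp).congr_deriv ?_
    ring
  have hconv : Convex ℝ {s : ℂ | 1 < s.re} := convex_halfSpace_re_gt 1
  have hopen : IsOpen {s : ℂ | 1 < s.re} := isOpen_lt continuous_const Complex.continuous_re
  have hconst : ∀ w : ℂ, 1 < w.re → H w = H s := fun w hw =>
    hopen.is_const_of_deriv_eq_zero hconv.isPreconnected
      (fun z hz => (hd z hz).differentiableAt.differentiableWithinAt)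
      (fun z hz => (hd z hz).deriv) hw hs
  have hlim : Tendsto (fun x : ℝ => H x) atTop (nhds 1) := by
    have h2 : (1 : ℝ) < ((2 : ℂ)).re := by norm_num
    have t1 := LSeries.tendsto_atTop ((abscissa_lt (idealCoeff_summable K) h2).trans_le le_top)
    have t2 := LSeries.tendsto_atTop ((abscissa_lt (logCoeff_summable K) h2).trans_le le_top)
    have t3 := t1.mul (Complex.continuous_exp.continuousAt.tendsto.comp t2.neg)
    simpa [idealCoeff_one, logCoeff] using t3
  have hlim' : Tendsto (fun x : ℝ => H x) atTop (nhds (H s)) := by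
    refine tendsto_const_nhds.congr' ?_
    filter_upwards [eventually_gt_atTop 1] with x hx
    exact (hconst x (by simpa using hx)).symm
  have h1 : H s = 1 := tendsto_nhds_unique hlim' hlim
  simp only [hH, Complex.exp_neg] at h1
  exact eq_of_mul_inv_eq_one h1

lemma LSeries_ofReal_eq {f : ℕ → ℝ} (σ : ℝ) :
    LSeries (fun m => (f m : ℂ)) σ = ((∑' m : ℕ, if m = 0 then 0 else f m / (m : ℝ) ^ σ : ℝ) : ℂ) := by
  rw [LSeries, Complex.ofReal_tsum]
  congr 1 with m
  rw [LSeries.term_def]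
  split_ifs
  · simp
  · rw [Complex.ofReal_div, Complex.ofReal_cpow (Nat.cast_nonneg _)]; simp

/-- For nonnegative coefficients the Dirichlet series is largest on the real axis. -/
lemma norm_LSeries_le {f : ℕ → ℝ} (hf : ∀ m, 0 ≤ f m) (s : ℂ)
    (h : LSeriesSummable (fun m => (f m : ℂ)) s) :
    ‖LSeries (fun m => (f m : ℂ)) s‖ ≤ (LSeries (fun m => (f m : ℂ)) (s.re : ℂ)).re := by
  rw [LSeries_ofReal_eq, Complex.ofReal_re, LSeries]
  refine (norm_tsum_le_tsum_norm h.norm).trans (le_of_eq ?_)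
  congr 1 with m
  rw [LSeries.norm_term_eq, Complex.norm_real, Real.norm_of_nonneg (hf m)]

lemma zeta_ne_zero (s : ℂ) (hs : 1 < s.re) : LSeries (fun m => (idealCoeff K m : ℂ)) s ≠ 0 := by
  rw [zeta_eq_exp K s hs]; exact Complex.exp_ne_zero _

/-- `|ζ_K(s)| ≥ 1 / ζ_K(Re s)`. -/
lemma zeta_lower (s : ℂ) (hs : 1 < s.re) : 1 ≤ ‖LSeries (fun m => (idealCoeff K m : ℂ)) s‖ *
    ‖LSeries (fun m => (idealCoeff K m : ℂ)) (s.re : ℂ)‖ := by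
  rw [zeta_eq_exp K s hs, zeta_eq_exp K _ (by simpa using hs), Complex.norm_exp, Complex.norm_exp,
    ← Real.exp_add]
  refine Real.one_le_exp ?_
  have h1 : ‖LSeries (logCoeff K) s‖ ≤ (LSeries (logCoeff K) (s.re : ℂ)).re :=
    norm_LSeries_le (f := fun m => idealMangoldt K m / Real.log m)
    (fun m => div_nonneg (idealMangoldt_nonneg K m) (Real.log_natCast_nonneg m)) s
    (logCoeff_summable K s hs)
  have h2 := Complex.abs_re_le_norm (LSeries (logCoeff K) s)
  have h3 := neg_abs_le (LSeries (logCoeff K) s).re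
  linarith

/-- The inequality `3 + 4 cos θ + cos 2θ ≥ 0` applied termwise. -/
lemma three_four_one {f : ℕ → ℝ} (hf : ∀ m, 0 ≤ f m)
    (h : ∀ s : ℂ, 1 < s.re → LSeriesSummable (fun m => (f m : ℂ)) s) (σ t : ℝ) (hσ : 1 < σ) :
    0 ≤ 3 * (LSeries (fun m => (f m : ℂ)) (σ : ℂ)).re +
      4 * (LSeries (fun m => (f m : ℂ)) (σ + t * Complex.I)).re +
      (LSeries (fun m => (f m : ℂ)) (σ + (2 * t : ℝ) * Complex.I)).re := by
  have hs : ∀ u : ℝ, LSeriesSummable (fun m => (f m : ℂ)) (σ + u * Complex.I) := fun u =>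
    h _ (by simpa using hσ)
  have hs0 : LSeriesSummable (fun m => (f m : ℂ)) (σ : ℂ) := h _ (by simpa using hσ)
  have hr : ∀ u : ℝ, (LSeries (fun m => (f m : ℂ)) (σ + u * Complex.I)).re =
      ∑' m, (LSeries.term (fun m => (f m : ℂ)) (σ + u * Complex.I) m).re := fun u =>
    Complex.re_tsum (hs u)
  have hr0 : (LSeries (fun m => (f m : ℂ)) (σ : ℂ)).re =
      ∑' m, (LSeries.term (fun m => (f m : ℂ)) (σ : ℂ) m).re := Complex.re_tsum hs0
  rw [hr t, hr (2 * t), hr0, ← tsum_mul_left, ← tsum_mul_left, ← Summable.tsum_add,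
    ← Summable.tsum_add]
  · refine tsum_nonneg fun m => ?_
    rcases Nat.eq_zero_or_pos m with rfl | hm
    · simp
    have hm0 : (m : ℂ) ≠ 0 := by exact_mod_cast hm.ne'
    have hterm : ∀ u : ℝ, (LSeries.term (fun m => (f m : ℂ)) (σ + u * Complex.I) m).re =
        f m / (m : ℝ) ^ σ * Real.cos (u * Real.log m) := fun u => by
      rw [LSeries.term_of_ne_zero hm.ne', Complex.cpow_add _ _ hm0, div_eq_mul_inv, mul_inv,
        ← Complex.cpow_neg _ (u * Complex.I), Complex.cpow_def_of_ne_zero hm0 (-(u * Complex.I)),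
        ← Complex.natCast_log]
      have e1 : (m : ℂ) ^ (σ : ℂ) = (((m : ℝ) ^ σ : ℝ) : ℂ) := by
        rw [Complex.ofReal_cpow (Nat.cast_nonneg _)]; simp
      have e2 : (Real.log m : ℂ) * -(u * Complex.I) = ((-(u * Real.log m) : ℝ) : ℂ) * Complex.I := by
        push_cast; ring
      rw [e1, e2, ← Complex.ofReal_inv, ← mul_assoc, ← Complex.ofReal_mul, Complex.re_ofReal_mul,
        Complex.exp_ofReal_mul_I_re, Real.cos_neg, div_eq_mul_inv]
    have h0 := hterm 0
    simp only [Complex.ofReal_zero, zero_mul, add_zero, Real.cos_zero, mul_one] at h0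
    rw [hterm, hterm, h0, show 2 * t * Real.log m = 2 * (t * Real.log m) by ring, Real.cos_two_mul]
    have : 0 ≤ f m / (m : ℝ) ^ σ := div_nonneg (hf m) (Real.rpow_nonneg (Nat.cast_nonneg _) _)
    nlinarith [mul_nonneg this (sq_nonneg (Real.cos (t * Real.log m) + 1))]
  · exact ((Complex.hasSum_re hs0.hasSum).summable.mul_left _).add
      ((Complex.hasSum_re (hs t).hasSum).summable.mul_left _)
  · exact (Complex.hasSum_re (hs _).hasSum).summable
  · exact (Complex.hasSum_re hs0.hasSum).summable.mul_left _
  · exact (Complex.hasSum_re (hs t).hasSum).summable.mul_left _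

end ZetaLog

/-! ### Logarithmic derivatives on discs -/

section LogDerivative

open Metric

/-- Borel–Carathéodory for the logarithmic derivative of a zero-free function. -/
lemma norm_logDeriv_le {f : ℂ → ℂ} {R A : ℝ} (hR : 0 < R) (hA : 0 < A)
    (hf : DifferentiableOn ℂ f (ball 0 R)) (h0 : ∀ z ∈ ball (0 : ℂ) R, f z ≠ 0)
    (hb : ∀ z ∈ ball (0 : ℂ) R, ‖f z‖ ≤ Real.exp A * ‖f 0‖) {z : ℂ} (hz : ‖z‖ ≤ R / 2) :
    ‖deriv f z / f z‖ ≤ 24 * A / R := by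
  have hd : ∀ z ∈ ball (0 : ℂ) R, HasDerivAt f (deriv f z) z := fun z hz =>
    (hf.differentiableAt (isOpen_ball.mem_nhds hz)).hasDerivAt
  have h00 : (0 : ℂ) ∈ ball (0 : ℂ) R := mem_ball_self hR
  have hL : DifferentiableOn ℂ (fun z => deriv f z / f z) (ball 0 R) :=
    (hf.deriv isOpen_ball).div hf h0
  obtain ⟨F, hF0, hF⟩ := hL.isExactOn_ball.with_val_at 0 0
  have hconst : ∀ w ∈ ball (0 : ℂ) R, f w * Complex.exp (-F w) = f 0 := fun w hw => by
    have hH : ∀ z ∈ ball (0 : ℂ) R, HasDerivAt (fun z => f z * Complex.exp (-F z)) 0 z :=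
      fun z hz => by
        refine ((hd z hz).mul (hF z hz).neg.cexp).congr_deriv ?_
        have := h0 z hz
        field_simp
        ring
    have := isOpen_ball.is_const_of_deriv_eq_zero (convex_ball (0 : ℂ) R).isPreconnected
      (fun z hz => (hH z hz).differentiableAt.differentiableWithinAt)
      (fun z hz => (hH z hz).deriv) hw h00
    simpa [hF0] using this
  have hre : Set.MapsTo F (ball 0 R) {z | z.re ≤ A} := fun w hw => by
    have h1 := hconst w hw
    have h2 : ‖f w‖ = ‖f 0‖ * Real.exp (F w).re := by
      rw [← h1, norm_mul, Complex.norm_exp, mul_assoc, ← Real.exp_add]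
      simp
    have h3 := hb w hw
    have h4 : 0 < ‖f 0‖ := norm_pos_iff.2 (h0 0 h00)
    rw [h2, mul_comm] at h3
    exact Real.exp_le_exp.1 (le_of_mul_le_mul_right h3 h4)
  have hFd : DifferentiableOn ℂ F (ball 0 R) := fun w hw =>
    (hF w hw).differentiableAt.differentiableWithinAt
  have hFb : ∀ w : ℂ, ‖w‖ ≤ 3 * R / 4 → ‖F w‖ ≤ 6 * A := fun w hw => by
    have hwb : w ∈ ball (0 : ℂ) R := by rw [mem_ball_zero_iff]; linarith
    refine (Complex.borelCaratheodory_zero hA hFd hre hR hwb hF0).trans ?_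
    rw [div_le_iff₀ (by linarith)]
    nlinarith [norm_nonneg w]
  have hzb : z ∈ ball (0 : ℂ) R := by rw [mem_ball_zero_iff]; linarith
  have hsub : closedBall z (R / 4) ⊆ ball (0 : ℂ) R := fun w hw => by
    rw [mem_closedBall, dist_eq_norm] at hw
    rw [mem_ball_zero_iff]
    have := norm_le_norm_add_norm_sub' w z
    linarith
  have hc := Complex.norm_deriv_le_of_forall_mem_sphere_norm_le (f := F) (c := z) (R := R / 4)
    (C := 6 * A) (by positivity)
    ((hFd.mono (by rw [closure_ball z (by positivity)]; exact hsub)).diffContOnCl)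
    fun w hw => hFb w (by
      rw [mem_sphere, dist_eq_norm] at hw
      have := norm_le_norm_add_norm_sub' w z
      linarith)
  rw [(hF z hzb).deriv] at hc
  refine hc.trans (le_of_eq ?_)
  field_simp
  ring

/-- Dividing out one zero by a Blaschke factor for the disc of radius `r`. -/
lemma exists_blaschke_quotient {f : ℂ → ℂ} {r C : ℝ} {a : ℂ} (hr : 0 < r)
    (hf : ∀ z, ‖z‖ ≤ r → DifferentiableAt ℂ f z) (hC : ∀ z, ‖z‖ ≤ r → ‖f z‖ ≤ C)
    (h0 : f 0 ≠ 0) (ha : ‖a‖ < r) (hfa : f a = 0) :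
    ∃ f₁ : ℂ → ℂ, (∀ z, ‖z‖ ≤ r → DifferentiableAt ℂ f₁ z) ∧ (∀ z, ‖z‖ ≤ r → ‖f₁ z‖ ≤ C) ∧
      ‖f₁ 0‖ * ‖a‖ = ‖f 0‖ * r ∧ (∀ z, ‖z‖ ≤ r → f₁ z = 0 → f z = 0) ∧
      deriv f 0 / f 0 = deriv f₁ 0 / f₁ 0 + (-1 / a + (starRingEnd ℂ) a / (r : ℂ) ^ 2) := by
  have ha0 : a ≠ 0 := fun h => h0 (h ▸ hfa)
  have hrC : (r : ℂ) ≠ 0 := by exact_mod_cast hr.ne'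
  set D := dslope f a with hD
  have hfD : ∀ z, f z = (z - a) * D z := fun z => by
    have := sub_smul_dslope f a z
    rw [hfa, sub_zero, smul_eq_mul] at this
    exact this.symm
  have hDd : ∀ z, ‖z‖ ≤ r → DifferentiableAt ℂ D z := fun z hz => by
    rcases eq_or_ne z a with rfl | hza
    · have hU : ball (0 : ℂ) r ∈ nhds z := isOpen_ball.mem_nhds (by simpa using ha)
      have h1 : DifferentiableOn ℂ f (ball 0 r) := fun w hw =>
        (hf w (by simpa using (mem_ball_zero_iff.1 hw).le)).differentiableWithinAt
      exact ((Complex.differentiableOn_dslope hU).2 h1).differentiableAt hU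
    · exact (differentiableAt_dslope_of_ne hza).2 (hf z hz)
  set f₁ : ℂ → ℂ := fun z => D z * (((r : ℂ) ^ 2 - (starRingEnd ℂ) a * z) / r) with hf₁
  have hf₁d : ∀ z, ‖z‖ ≤ r → DifferentiableAt ℂ f₁ z := fun z hz => by
    have := hDd z hz
    fun_prop
  have hfac : ∀ z : ℂ, ‖z‖ ≤ r → (r : ℂ) ^ 2 - (starRingEnd ℂ) a * z ≠ 0 := fun z hz h => by
    have h1 : ‖(r : ℂ) ^ 2‖ = ‖(starRingEnd ℂ) a * z‖ := by rw [sub_eq_zero.1 h]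
    rw [norm_pow, Complex.norm_real, Real.norm_of_nonneg hr.le, norm_mul, RCLike.norm_conj] at h1
    have h2 : ‖a‖ * ‖z‖ ≤ ‖a‖ * r := mul_le_mul_of_nonneg_left hz (norm_nonneg _)
    nlinarith
  have hD0 : D 0 ≠ 0 := fun h => h0 (by rw [hfD, h, mul_zero])
  refine ⟨f₁, hf₁d, ?_, ?_, ?_, ?_⟩
  · intro z hz
    refine Complex.norm_le_of_forall_mem_frontier_norm_le (U := ball (0 : ℂ) r) isBounded_ball
      ?_ ?_ (by rw [closure_ball _ hr.ne']; simpa using hz)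
    · refine DifferentiableOn.diffContOnCl fun w hw => ?_
      rw [closure_ball _ hr.ne'] at hw
      exact (hf₁d w (by simpa using hw)).differentiableWithinAt
    · intro w hw
      rw [frontier_ball _ hr.ne', mem_sphere_zero_iff_norm] at hw
      refine le_of_eq_of_le ?_ (hC w hw.le)
      have hww : (starRingEnd ℂ) w * w = (r : ℂ) ^ 2 := by
        rw [mul_comm, Complex.mul_conj, Complex.normSq_eq_norm_sq, hw]; push_cast; rfl
      rw [hfD w]
      simp only [hf₁]
      rw [← hww, ← sub_mul, ← map_sub, norm_mul, norm_mul, norm_div, norm_mul, RCLike.norm_conj,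
        hw, Complex.norm_real, Real.norm_of_nonneg hr.le]
      field_simp
  · rw [hfD 0]
    simp only [hf₁, mul_zero, sub_zero, zero_sub, norm_mul, norm_neg, norm_div, norm_pow,
      Complex.norm_real, Real.norm_of_nonneg hr.le]
    field_simp
  · intro z hz h
    rcases mul_eq_zero.1 h with h | h
    · rw [hfD, h, mul_zero]
    · exact absurd h (div_ne_zero (hfac z hz) hrC)
  · have hd := (hDd 0 (by simpa using hr.le)).hasDerivAt
    have h1 : HasDerivAt f (1 * D 0 + (0 - a) * deriv D 0) 0 := by
      have : f = fun z => (z - a) * D z := funext hfD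
      rw [this]
      exact ((hasDerivAt_id (0 : ℂ)).sub_const a).mul hd
    have h2 : HasDerivAt f₁ (deriv D 0 * (((r : ℂ) ^ 2 - (starRingEnd ℂ) a * 0) / r) +
        D 0 * ((0 - (starRingEnd ℂ) a * 1) / r)) 0 :=
      hd.mul (((hasDerivAt_const (0 : ℂ) ((r : ℂ) ^ 2)).sub
        ((hasDerivAt_id (0 : ℂ)).const_mul _)).div_const _)
    rw [h1.deriv, h2.deriv, hfD 0]
    simp only [hf₁]
    field_simp
    ring

/-- Lower bound for the real part of `f'/f` at the centre of a disc when all zeros of `f` lie to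
the left of the centre: zeros near the centre are removed one by one by Blaschke factors, each of
which at least doubles the central value, so the process stops. -/
lemma re_logDeriv_ge {r A C : ℝ} (hr : 0 < r) (hA : 0 < A) (n : ℕ) (f : ℂ → ℂ)
    (hf : ∀ z, ‖z‖ ≤ r → DifferentiableAt ℂ f z) (hC : ∀ z, ‖z‖ ≤ r → ‖f z‖ ≤ C)
    (h0 : f 0 ≠ 0) (hz : ∀ z, ‖z‖ ≤ r → f z = 0 → z.re ≤ 0)
    (hCA : C ≤ Real.exp A * ‖f 0‖) (hn : C ≤ 2 ^ n * ‖f 0‖) :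
    -(48 * A / r) ≤ (deriv f 0 / f 0).re := by
  induction n generalizing f with
  -- Here `‖f‖ ≤ ‖f 0‖` on the disc, so removing a zero would double the central value beyond `C`.
  | zero =>
    by_cases hex : ∃ a, ‖a‖ < r / 2 ∧ f a = 0
    · obtain ⟨a, ha, hfa⟩ := hex
      obtain ⟨f₁, -, h2, h3, -, -⟩ := exists_blaschke_quotient hr hf hC h0 (by linarith) hfa
      have h4 := h2 0 (by simpa using hr.le)
      have h5 : 0 < ‖f 0‖ := norm_pos_iff.2 h0
      have h6 : ‖f₁ 0‖ * ‖a‖ ≤ ‖f 0‖ * (r / 2) := by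
        refine mul_le_mul ?_ ha.le (norm_nonneg _) h5.le
        linarith
      nlinarith
    · push Not at hex
      have h1 := norm_logDeriv_le (f := f) (R := r / 2) (half_pos hr) hA
        (fun z hz => (hf z (by rw [mem_ball_zero_iff] at hz; linarith)).differentiableWithinAt)
        (fun z hz => hex z (by simpa using hz))
        (fun z hz => (hC z (by rw [mem_ball_zero_iff] at hz; linarith)).trans hCA)
        (z := 0) (by rw [norm_zero]; positivity)
      have h2 := neg_le_of_abs_le ((Complex.abs_re_le_norm _).trans h1)
      have h3 : 24 * A / (r / 2) = 48 * A / r := by field_simp; ring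
      rwa [h3] at h2
  | succ n ih =>
    by_cases hex : ∃ a, ‖a‖ < r / 2 ∧ f a = 0
    · obtain ⟨a, ha, hfa⟩ := hex
      obtain ⟨f₁, h1, h2, h3, h4, h5⟩ := exists_blaschke_quotient hr hf hC h0 (by linarith) hfa
      have h6 : 0 < ‖f 0‖ := norm_pos_iff.2 h0
      have h7 : 2 * ‖f 0‖ ≤ ‖f₁ 0‖ := by
        by_contra hlt
        push Not at hlt
        have : ‖f₁ 0‖ * ‖a‖ ≤ (2 * ‖f 0‖) * ‖a‖ :=
          mul_le_mul_of_nonneg_right hlt.le (norm_nonneg _)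
        nlinarith
      have h8 : f₁ 0 ≠ 0 := norm_pos_iff.1 (by linarith)
      have h9 := ih f₁ h1 h2 h8 (fun z hz' h => hz z hz' (h4 z hz' h))
        (hCA.trans (mul_le_mul_of_nonneg_left (by linarith) (Real.exp_pos _).le))
        (hn.trans (by rw [pow_succ, mul_assoc]; gcongr))
      have h10 : 0 ≤ (-1 / a + (starRingEnd ℂ) a / (r : ℂ) ^ 2).re := by
        have ha0 : a ≠ 0 := fun h => h0 (h ▸ hfa)
        have ha1 : 0 < Complex.normSq a := Complex.normSq_pos.2 ha0
        have hre := hz a (by linarith) hfa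
        have e1 : (-1 / a).re = -a.re / Complex.normSq a := by
          rw [neg_div, one_div, Complex.neg_re, Complex.inv_re, neg_div]
        have e2 : ((starRingEnd ℂ) a / (r : ℂ) ^ 2).re = a.re / r ^ 2 := by
          rw [← Complex.ofReal_pow, Complex.div_ofReal_re, Complex.conj_re]
        have h11 : Complex.normSq a ≤ r ^ 2 := by
          rw [Complex.normSq_eq_norm_sq]
          exact pow_le_pow_left₀ (norm_nonneg _) (by linarith) 2
        rw [Complex.add_re, e1, e2, neg_div]
        have := div_le_div_of_nonneg_left (a := -a.re) (by linarith) ha1 h11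
        rw [neg_div, neg_div] at this
        linarith
      rw [h5, Complex.add_re]
      linarith
    · push Not at hex
      have h1 := norm_logDeriv_le (f := f) (R := r / 2) (half_pos hr) hA
        (fun z hz => (hf z (by rw [mem_ball_zero_iff] at hz; linarith)).differentiableWithinAt)
        (fun z hz => hex z (by simpa using hz))
        (fun z hz => (hC z (by rw [mem_ball_zero_iff] at hz; linarith)).trans hCA)
        (z := 0) (by rw [norm_zero]; positivity)
      have h2 := neg_le_of_abs_le ((Complex.abs_re_le_norm _).trans h1)
      have h3 : 24 * A / (r / 2) = 48 * A / r := by field_simp; ring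
      rwa [h3] at h2

/-- `re_logDeriv_ge` centred at `s₀` with a bound `‖f‖ ≤ exp A ‖f s₀‖`. -/
lemma re_logDeriv_ge' {r A : ℝ} (hr : 0 < r) (hA : 0 < A) (f : ℂ → ℂ) (s₀ : ℂ)
    (hf : ∀ z, ‖z - s₀‖ ≤ r → DifferentiableAt ℂ f z)
    (hC : ∀ z, ‖z - s₀‖ ≤ r → ‖f z‖ ≤ Real.exp A * ‖f s₀‖)
    (h0 : f s₀ ≠ 0) (hz : ∀ z, ‖z - s₀‖ ≤ r → f z = 0 → z.re ≤ s₀.re) :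
    -(48 * A / r) ≤ (deriv f s₀ / f s₀).re ∧ ∀ d : ℝ, 0 < d → d < r → f (s₀ - d) = 0 →
      1 / d - d / r ^ 2 - 48 * A / r ≤ (deriv f s₀ / f s₀).re := by
  set F : ℂ → ℂ := fun z => f (z + s₀) with hF
  have hFd : ∀ z, ‖z‖ ≤ r → DifferentiableAt ℂ F z := fun z hz =>
    (differentiableAt_comp_add_const (a := z) (b := s₀)).2 (hf (z + s₀) (by simpa using hz))
  have hFC : ∀ z, ‖z‖ ≤ r → ‖F z‖ ≤ Real.exp A * ‖f s₀‖ := fun z hz =>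
    hC (z + s₀) (by simpa using hz)
  have hF0 : F 0 = f s₀ := by simp [hF]
  have hFder : deriv F 0 = deriv f s₀ := by
    rw [hF, deriv_comp_add_const, zero_add]
  have hFz : ∀ z, ‖z‖ ≤ r → F z = 0 → z.re ≤ 0 := fun z hz' h => by
    have := hz (z + s₀) (by simpa using hz') h
    simpa using this
  obtain ⟨n, hn⟩ := pow_unbounded_of_one_lt (Real.exp A) (one_lt_two (α := ℝ))
  have hpos : 0 < ‖f s₀‖ := norm_pos_iff.2 h0
  rw [← hF0, ← hFder]
  rw [← hF0] at h0 hFC hpos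
  refine ⟨re_logDeriv_ge hr hA n F hFd hFC h0 hFz le_rfl
    (mul_le_mul_of_nonneg_right hn.le hpos.le), fun d hd hdr hfd => ?_⟩
  have hfd' : F (-d) = 0 := by rw [hF]; simp only; rw [← hfd]; congr 1; ring
  have hnd : ‖-(d : ℂ)‖ = d := by rw [norm_neg, Complex.norm_real, Real.norm_of_nonneg hd.le]
  obtain ⟨f₁, h1, h2, h3, h4, h5⟩ := exists_blaschke_quotient hr hFd hFC h0
    (a := -(d : ℂ)) (by rw [hnd]; exact hdr) hfd'
  rw [hnd] at h3
  have h6 : ‖F 0‖ ≤ ‖f₁ 0‖ := by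
    by_contra hlt
    push Not at hlt
    nlinarith [norm_nonneg (f₁ 0)]
  have h7 : f₁ 0 ≠ 0 := norm_pos_iff.1 (hpos.trans_le h6)
  have h9 := re_logDeriv_ge hr hA n f₁ h1 h2 h7 (fun z hz' h => hFz z hz' (h4 z hz' h))
    (mul_le_mul_of_nonneg_left h6 (Real.exp_pos _).le)
    (mul_le_mul hn.le h6 hpos.le (by positivity))
  have e : (-1 / (-(d : ℂ)) + (starRingEnd ℂ) (-(d : ℂ)) / (r : ℂ) ^ 2) =
      ((1 / d - d / r ^ 2 : ℝ) : ℂ) := by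
    rw [map_neg, Complex.conj_ofReal]; push_cast; rw [neg_div_neg_eq]; ring
  rw [h5, e, Complex.add_re, Complex.ofReal_re]
  linarith

/-- `norm_logDeriv_le` on a disc centred at `s₀`. -/
lemma norm_logDeriv_le' {f : ℂ → ℂ} {R A : ℝ} (s₀ : ℂ) (hR : 0 < R) (hA : 0 < A)
    (hf : ∀ z, ‖z - s₀‖ < R → DifferentiableAt ℂ f z) (h0 : ∀ z, ‖z - s₀‖ < R → f z ≠ 0)
    (hb : ∀ z, ‖z - s₀‖ < R → ‖f z‖ ≤ Real.exp A * ‖f s₀‖) {z : ℂ} (hz : ‖z - s₀‖ ≤ R / 2) :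
    ‖deriv f z / f z‖ ≤ 24 * A / R := by
  have h := norm_logDeriv_le (f := fun z => f (z + s₀)) hR hA
    (fun z hz => ((differentiableAt_comp_add_const (a := z) (b := s₀)).2
      (hf (z + s₀) (by simpa using hz))).differentiableWithinAt)
    (fun z hz => h0 _ (by simpa using hz)) (fun z hz => by
      simpa using hb (z + s₀) (by simpa using hz)) hz
  rw [deriv_comp_add_const] at h
  simpa using h

end LogDerivative

/-! ### The classical zero-free region -/

section ZeroFree

open NumberField

variable (K : Type*) [Field K] [NumberField K]

/-- The Dirichlet series `∑ Λ_K(m) m⁻ˢ = -ζ_K'/ζ_K`. -/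
def mangoldtSeries (s : ℂ) : ℂ := LSeries (fun m => (idealMangoldt K m : ℂ)) s

/-- Quantitative data on `g(s) = (s - 1) ζ_K(s)` near and to the right of `Re s = 1`. -/
lemma zeta_package : ∃ (r B C : ℝ) (g : ℂ → ℂ), 0 < r ∧ r ≤ 1 / 2 ∧ 1 ≤ B ∧ 0 < C ∧
    (∀ s : ℂ, 1 - 2 * r ≤ s.re → DifferentiableAt ℂ g s) ∧
    (∀ s : ℂ, 1 - 2 * r ≤ s.re → s.re ≤ 3 → ‖g s‖ ≤ B * ‖s‖ ^ 3) ∧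
    (∀ s : ℂ, 1 < s.re → g s ≠ 0) ∧
    (∀ s : ℂ, 1 < s.re → deriv g s / g s = 1 / (s - 1) - mangoldtSeries K s) ∧
    (∀ s : ℂ, 1 < s.re → s.re ≤ 3 → ‖s - 1‖ * (s.re - 1) ≤ 27 * B * ‖g s‖) ∧
    (∀ s : ℂ, ‖s - 1‖ ≤ 2 * r → g s ≠ 0) ∧
    (∀ s : ℂ, 1 < s.re → s.re ≤ 3 → ‖mangoldtSeries K s‖ ≤ 1 / (s.re - 1) + C) ∧
    (∀ σ : ℝ, 1 < σ → (mangoldtSeries K σ).re = ‖mangoldtSeries K σ‖) := by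
  obtain ⟨θ, hθ1, hθ0, g, hgd, hg, hgb, hg1⟩ := zeta_continuation K
  have hcont : ContinuousAt g 1 := (hgd 1 (by simpa using hθ1)).continuousAt
  obtain ⟨τ, hτ, hτg⟩ := Metric.eventually_nhds_iff.1 (hcont.eventually_ne hg1)
  set r := min ((1 - θ) / 4) (min (1 / 2) (τ / 4)) with hr
  have hr0 : 0 < r := lt_min (by linarith) (lt_min (by norm_num) (by linarith))
  have hr1 : r ≤ (1 - θ) / 4 := min_le_left _ _
  have hr2 : r ≤ 1 / 2 := (min_le_right _ _).trans (min_le_left _ _)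
  have hr3 : r ≤ τ / 4 := (min_le_right _ _).trans (min_le_right _ _)
  obtain ⟨B, hB0, hB⟩ := hgb (1 - 2 * r) (by linarith)
  have hne : ∀ s : ℂ, 1 < s.re → g s ≠ 0 := fun s hs => by
    rw [hg s hs]
    refine mul_ne_zero (fun h => ?_) (zeta_ne_zero K s hs)
    rw [sub_eq_zero.1 h] at hs
    simp at hs
  have hbd : ∀ s : ℂ, 1 - 2 * r ≤ s.re → s.re ≤ 3 → ‖g s‖ ≤ max 1 B * ‖s‖ ^ 3 :=
    fun s h1 h2 => (hB s h1 h2).trans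
      (mul_le_mul_of_nonneg_right (le_max_right _ _) (by positivity))
  have hlog : ∀ s : ℂ, 1 < s.re → deriv g s / g s = 1 / (s - 1) - mangoldtSeries K s :=
    fun s hs => by
    have hs1 : s - 1 ≠ 0 := fun h => by rw [sub_eq_zero.1 h] at hs; simp at hs
    have hz := zeta_ne_zero K s hs
    have hev : g =ᶠ[nhds s] fun s => (s - 1) * LSeries (fun m => (idealCoeff K m : ℂ)) s := by
      filter_upwards [(isOpen_lt continuous_const Complex.continuous_re).mem_nhds hs] with w hw
      exact hg w hw
    have hd : HasDerivAt (fun s => (s - 1) * LSeries (fun m => (idealCoeff K m : ℂ)) s) _ s :=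
      ((hasDerivAt_id s).sub_const 1).mul (hasDerivAt_zeta K s hs)
    rw [hev.deriv_eq, hg s hs, hd.deriv]
    simp only [id, mangoldtSeries]
    field_simp
    ring
  have hreal : ∀ σ : ℝ, 1 < σ → (mangoldtSeries K σ).re = ‖mangoldtSeries K σ‖ := fun σ hσ => by
    rw [mangoldtSeries, LSeries_ofReal_eq, Complex.norm_real, Complex.ofReal_re,
      Real.norm_of_nonneg]
    refine tsum_nonneg fun m => ?_
    have := idealMangoldt_nonneg K m
    split_ifs <;> positivity
  have hlow : ∀ s : ℂ, 1 < s.re → s.re ≤ 3 → ‖s - 1‖ * (s.re - 1) ≤ 27 * max 1 B * ‖g s‖ := by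
    intro s hs hs3
    have h1 := zeta_lower K s hs
    have hσ : 1 < ((s.re : ℂ)).re := by simpa using hs
    have h2 := hbd (s.re : ℂ) (by simp; linarith) (by simpa using hs3)
    have h3 : ‖(s.re : ℂ)‖ ^ 3 ≤ 27 := by
      rw [Complex.norm_real, Real.norm_of_nonneg (by linarith)]
      calc s.re ^ 3 ≤ 3 ^ 3 := pow_le_pow_left₀ (by linarith) hs3 3
        _ = 27 := by norm_num
    have h4 : ‖g (s.re : ℂ)‖ ≤ 27 * max 1 B := by
      refine h2.trans ?_
      have : (0 : ℝ) < max 1 B := lt_max_of_lt_left one_pos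
      nlinarith
    have h5 : ‖g (s.re : ℂ)‖ = (s.re - 1) *
        ‖LSeries (fun m => (idealCoeff K m : ℂ)) (s.re : ℂ)‖ := by
      rw [hg _ hσ, norm_mul]
      congr 1
      rw [← Complex.ofReal_one, ← Complex.ofReal_sub, Complex.norm_real,
        Real.norm_of_nonneg (by linarith)]
    calc ‖s - 1‖ * (s.re - 1) ≤ ‖s - 1‖ * (s.re - 1) *
        (‖LSeries (fun m => (idealCoeff K m : ℂ)) s‖ *
          ‖LSeries (fun m => (idealCoeff K m : ℂ)) (s.re : ℂ)‖) :=
          le_mul_of_one_le_right (mul_nonneg (norm_nonneg _) (by linarith)) h1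
      _ = ‖g s‖ * ‖g (s.re : ℂ)‖ := by rw [h5, hg s hs, norm_mul]; ring
      _ ≤ ‖g s‖ * (27 * max 1 B) := mul_le_mul_of_nonneg_left h4 (norm_nonneg _)
      _ = _ := by ring
  -- `g'/g` is bounded on the compact segment `[1, 3]`, where `g` has no zero.
  have hcomp : ∃ C, ∀ σ ∈ Set.Icc (1 : ℝ) 3, ‖deriv g σ / g σ‖ ≤ C := by
    refine isCompact_Icc.exists_bound_of_continuousOn fun σ hσ => ?_
    have hσθ : θ < ((σ : ℂ)).re := by simpa using hθ1.trans_le hσ.1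
    have hgσ : g σ ≠ 0 := by
      rcases hσ.1.eq_or_lt with h | h
      · rw [← h]; simpa using hg1
      · exact hne _ (by simpa using h)
    have hU : IsOpen {s : ℂ | θ < s.re} := isOpen_lt continuous_const Complex.continuous_re
    have hD : DifferentiableOn ℂ g {s : ℂ | θ < s.re} := fun s hs =>
      (hgd s hs).differentiableWithinAt
    have h1 : ContinuousAt (deriv g) σ :=
      ((hD.deriv hU).differentiableAt (hU.mem_nhds hσθ)).continuousAt
    have h2 : ContinuousAt (fun s => deriv g s / g s) (σ : ℂ) :=
      h1.div (hgd _ hσθ).continuousAt hgσ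
    exact (ContinuousAt.comp (f := fun x : ℝ => (x : ℂ)) h2
      Complex.continuous_ofReal.continuousAt).continuousWithinAt
  obtain ⟨C, hC⟩ := hcomp
  refine ⟨r, max 1 B, max 1 C, g, hr0, hr2, le_max_left _ _, lt_max_of_lt_left one_pos,
    fun s hs => hgd s (by linarith), hbd, hne, hlog, hlow, fun s hs => ?_, ?_, hreal⟩
  · exact hτg (by rw [dist_eq_norm]; linarith)
  · intro s hs hs3
    have h1 : ‖mangoldtSeries K s‖ ≤ (mangoldtSeries K (s.re : ℂ)).re :=
      norm_LSeries_le (idealMangoldt_nonneg K) s (idealMangoldt_summable K s hs)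
    have h2 := hlog (s.re : ℂ) (by simpa using hs)
    have h3 := hC s.re ⟨hs.le, hs3⟩
    have h4 : mangoldtSeries K (s.re : ℂ) = ((1 / (s.re - 1) : ℝ) : ℂ) -
        deriv g (s.re : ℂ) / g (s.re : ℂ) := by rw [h2]; push_cast; ring
    rw [h4, Complex.sub_re, Complex.ofReal_re] at h1
    have h5 := neg_le_of_abs_le ((Complex.abs_re_le_norm _).trans h3)
    have h6 := le_max_right 1 C
    linarith

set_option maxHeartbeats 2000000 in
/-- The classical zero-free region, together with the resulting bound for the regular part of
`-ζ_K'/ζ_K` there. -/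
lemma zero_free_region : ∃ (c C : ℝ) (F : ℂ → ℂ), 0 < c ∧ 0 < C ∧ c ≤ 1 / 2 ∧
    (∀ s : ℂ, 1 - c / Real.log (|s.im| + 4) ≤ s.re → DifferentiableAt ℂ F s) ∧
    (∀ s : ℂ, 1 - c / Real.log (|s.im| + 4) ≤ s.re → s.re ≤ 2 →
      ‖F s‖ ≤ C * Real.log (|s.im| + 4) ^ 2) ∧
    (∀ s : ℂ, 1 < s.re → F s = mangoldtSeries K s - 1 / (s - 1)) := by
  obtain ⟨r, B, C, g, hr0, hr2, hB1, hC0, hgd, hgb, hne, hlog, hlow, hnear, hMb, hMre⟩ :=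
    zeta_package K
  have hL1 : ∀ t : ℝ, 1 ≤ Real.log (|t| + 4) := fun t => by
    rw [Real.le_log_iff_exp_le (by positivity)]
    have := Real.exp_one_lt_d9
    have := abs_nonneg t
    linarith
  -- Size of `g` on discs around points just to the right of the line `Re s = 1`.
  have hdisc : ∀ s₀ z : ℂ, 1 ≤ s₀.re → s₀.re ≤ 3 / 2 → ‖z - s₀‖ ≤ r →
      ‖g z‖ ≤ B * (|s₀.im| + 4) ^ 3 := fun s₀ z h1 h2 hz => by
    have hre := (Complex.abs_re_le_norm (z - s₀)).trans hz
    rw [Complex.sub_re, abs_le] at hre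
    refine (hgb z (by linarith) (by linarith)).trans ?_
    have h3 := norm_le_norm_add_norm_sub' z s₀
    have h4 := Complex.norm_le_abs_re_add_abs_im s₀
    rw [abs_of_nonneg (by linarith : (0 : ℝ) ≤ s₀.re)] at h4
    gcongr
    linarith
  have hA : ∀ t η : ℝ, 0 < η → η ≤ 1 / 2 → r ≤ |t| → ∃ A, 0 < A ∧
      A ≤ 4 * Real.log (|t| + 4) + Real.log (27 * B ^ 2 / (r * η)) ∧
      (mangoldtSeries K ((1 + η : ℝ) + t * Complex.I)).re ≤ 1 / r + 48 * A / r ∧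
      ∀ β : ℝ, β ≤ 1 → 1 + η - β < r → g (β + t * Complex.I) = 0 →
      (mangoldtSeries K ((1 + η : ℝ) + t * Complex.I)).re ≤
        1 / r + 48 * A / r + (1 + η - β) / r ^ 2 - 1 / (1 + η - β) := by
    intro t η hη0 hη1 ht
    set s₀ : ℂ := (1 + η : ℝ) + t * Complex.I with hs₀
    have hre : s₀.re = 1 + η := by simp [hs₀]
    have him : s₀.im = t := by simp [hs₀]
    have hL := hL1 t
    have hrη : 0 < r * η := mul_pos hr0 hη0
    have hq1 : 1 < 27 * B ^ 2 / (r * η) := by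
      rw [lt_div_iff₀ hrη]
      nlinarith
    refine ⟨Real.log (27 * B ^ 2 / (r * η)) + 3 * Real.log (|t| + 4), ?_, by linarith, ?_⟩
    · have := Real.log_pos hq1
      positivity
    set A := Real.log (27 * B ^ 2 / (r * η)) + 3 * Real.log (|t| + 4) with hAdef
    have hA0 : 0 < A := by
      have := Real.log_pos hq1
      positivity
    have hexp : Real.exp A = 27 * B ^ 2 / (r * η) * (|t| + 4) ^ 3 := by
      rw [hAdef, Real.exp_add, Real.exp_log (by positivity),
        show 3 * Real.log (|t| + 4) = ((3 : ℕ) : ℝ) * Real.log (|t| + 4) by norm_num,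
        Real.exp_nat_mul, Real.exp_log (by positivity)]
    have hs1 : 1 < s₀.re := by rw [hre]; linarith
    have hnorm : r ≤ ‖s₀ - 1‖ := by
      refine ht.trans ?_
      have := Complex.abs_im_le_norm (s₀ - 1)
      rwa [Complex.sub_im, him, Complex.one_im, sub_zero] at this
    have hg0 : r * η ≤ 27 * B * ‖g s₀‖ := by
      refine le_trans ?_ (hlow s₀ hs1 (by rw [hre]; linarith))
      rw [hre, add_sub_cancel_left]
      exact mul_le_mul_of_nonneg_right hnorm hη0.le
    have hmain := re_logDeriv_ge' hr0 hA0 g s₀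
      (fun z hz => hgd z (by
        have := (Complex.abs_re_le_norm (z - s₀)).trans hz
        rw [Complex.sub_re, abs_le, hre] at this
        linarith))
      (fun z hz => by
        refine (hdisc s₀ z (by linarith) (by rw [hre]; linarith) hz).trans ?_
        rw [hexp, him]
        calc B * (|t| + 4) ^ 3 = B / (r * η) * (|t| + 4) ^ 3 * (r * η) := by field_simp
          _ ≤ B / (r * η) * (|t| + 4) ^ 3 * (27 * B * ‖g s₀‖) := by gcongr
          _ = _ := by ring)
      (hne s₀ hs1)
      (fun z _ hz0 => by
        by_contra hlt
        exact hne z (by linarith) hz0)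
    have hM : (mangoldtSeries K s₀).re ≤ 1 / r - (deriv g s₀ / g s₀).re := by
      have h1 := congrArg Complex.re (hlog s₀ hs1)
      rw [Complex.sub_re] at h1
      have h2 : (1 / (s₀ - 1)).re ≤ 1 / r := by
        refine (Complex.re_le_norm _).trans ?_
        rw [norm_div, norm_one]
        exact one_div_le_one_div_of_le hr0 hnorm
      linarith
    refine ⟨by linarith [hmain.1], fun β hβ hβr hβ0 => ?_⟩
    have h3 := hmain.2 (1 + η - β) (by linarith) hβr (by
      rw [← hβ0]; congr 1; rw [hs₀]; push_cast; ring)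
    linarith
  -- Choice of `δ`: the terms of size `log |t|` must be dominated by a multiple of `1 / δ`.
  have hδ : ∃ δ : ℝ, 0 < δ ∧ δ ≤ 1 / 2 ∧ δ ≤ r / 4 ∧
      δ * (3 * C + 5 / r + 4 / r + 48 * (24 + 5 * Real.log (27 * B ^ 2 / (r * δ)) +
        5) / r) < 1 / 2 := by
    have h0 : Tendsto (fun x : ℝ => x * (3 * C + 5 / r + 4 / r + 48 * (24 +
        5 * (Real.log (27 * B ^ 2 / r) - Real.log x) + 5) / r)) (nhdsWithin 0 (Set.Ioi 0))
        (nhds 0) := by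
      have h1 : Tendsto (fun x : ℝ => Real.log x * x) (nhdsWithin 0 (Set.Ioi 0)) (nhds 0) :=
        by
        simpa using tendsto_log_mul_rpow_nhdsGT_zero one_pos
      have h2 : Tendsto (fun x : ℝ => x) (nhdsWithin (0 : ℝ) (Set.Ioi 0)) (nhds 0) :=
        tendsto_nhdsWithin_of_tendsto_nhds tendsto_id
      have h3 := (h2.mul_const (3 * C + 5 / r + 4 / r + 48 * (24 +
        5 * Real.log (27 * B ^ 2 / r) + 5) / r)).sub (h1.mul_const (48 * 5 / r))
      simp only [zero_mul, sub_zero] at h3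
      refine h3.congr fun x => ?_
      ring
    have h1 := h0.eventually (gt_mem_nhds (show (0 : ℝ) < 1 / 2 by norm_num))
    have h2 : ∀ᶠ x in nhdsWithin (0 : ℝ) (Set.Ioi 0), x < min (1 / 2) (r / 4) :=
      nhdsWithin_le_nhds (gt_mem_nhds (lt_min (by norm_num) (by positivity)))
    obtain ⟨δ, ⟨hδ1, hδ2⟩, hδ0⟩ := ((h1.and h2).and self_mem_nhdsWithin).exists
    refine ⟨δ, hδ0, hδ2.le.trans (min_le_left _ _), hδ2.le.trans (min_le_right _ _), ?_⟩
    have hδ0' : 0 < δ := hδ0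
    rw [← div_div, Real.log_div (by positivity) hδ0'.ne']
    exact hδ1
  obtain ⟨δ, hδ0, hδ1, hδr, hδmain⟩ := hδ
  have hzf : ∀ s : ℂ, 1 - δ / 10 / Real.log (|s.im| + 4) ≤ s.re → g s ≠ 0 := by
    intro s hs hgs
    set t := s.im with ht
    set β := s.re with hβ
    have hsβ : s = β + t * Complex.I := (Complex.re_add_im s).symm
    have hL := hL1 t
    set L := Real.log (|t| + 4) with hLdef
    have hL0 : 0 < L := by linarith
    have hβ1 : β ≤ 1 := by
      by_contra h
      exact hne s (by push Not at h; exact h) hgs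
    have hηδ : δ / L ≤ δ := div_le_self hδ0.le hL
    -- The 3-4-1 inequality is applied on `Re s = 1 + η`, at heights `0`, `t` and `2 t`.
    set η := δ / L with hη
    have hη0 : 0 < η := div_pos hδ0 hL0
    have hβη : 1 - β ≤ η / 10 := by
      have : δ / 10 / L = η / 10 := by rw [hη]; ring
      linarith
    have htr : r ≤ |t| := by
      by_contra hlt
      push Not at hlt
      refine hnear s ?_ hgs
      have h1 := Complex.norm_le_abs_re_add_abs_im (s - 1)
      rw [Complex.sub_re, Complex.sub_im, Complex.one_re, Complex.one_im, sub_zero, ← hβ, ← ht,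
        abs_of_nonpos (by linarith)] at h1
      linarith
    obtain ⟨A₁, hA₁0, hA₁, -, hA₁'⟩ := hA t η hη0 (by linarith) htr
    obtain ⟨A₂, hA₂0, hA₂, hA₂', -⟩ := hA (2 * t) η hη0 (by linarith)
      (by rw [abs_mul, abs_two]; linarith [abs_nonneg t])
    have h1 := hA₁' β hβ1 (by linarith) (by rw [← hsβ]; exact hgs)
    have h341 := three_four_one (idealMangoldt_nonneg K) (idealMangoldt_summable K) (1 + η) t
      (by linarith)
    change 0 ≤ 3 * (mangoldtSeries K ((1 + η : ℝ) : ℂ)).re +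
      4 * (mangoldtSeries K ((1 + η : ℝ) + t * Complex.I)).re +
      (mangoldtSeries K ((1 + η : ℝ) + (2 * t : ℝ) * Complex.I)).re at h341
    have h2 : (mangoldtSeries K ((1 + η : ℝ) : ℂ)).re ≤ 1 / η + C := by
      rw [hMre _ (by linarith)]
      have := hMb ((1 + η : ℝ) : ℂ) (by simp; linarith) (by simp; linarith)
      rwa [Complex.ofReal_re, add_sub_cancel_left] at this
    have hd1 : 1 + η - β ≤ 11 * η / 10 := by linarith
    have hd0 : 0 < 1 + η - β := by linarith
    have hinv : 10 / (11 * η) ≤ 1 / (1 + η - β) := by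
      rw [div_le_div_iff₀ (by positivity) hd0]
      linarith
    have hdr : (1 + η - β) / r ^ 2 ≤ 1 / r := by
      rw [div_le_div_iff₀ (by positivity) hr0]
      nlinarith
    have hL2 : Real.log (|2 * t| + 4) ≤ 2 * L := by
      rw [hLdef, show 2 * Real.log (|t| + 4) = ((2 : ℕ) : ℝ) * Real.log (|t| + 4) by norm_num,
        ← Real.log_pow]
      refine Real.log_le_log (by positivity) ?_
      rw [abs_mul, abs_two]
      nlinarith [abs_nonneg t]
    have hQ : Real.log (27 * B ^ 2 / (r * η)) ≤ Real.log (27 * B ^ 2 / (r * δ)) + L := by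
      have : 27 * B ^ 2 / (r * η) = 27 * B ^ 2 / (r * δ) * L := by
        rw [hη]; field_simp
      rw [this, Real.log_mul (by positivity) hL0.ne']
      have := Real.log_le_sub_one_of_pos hL0
      linarith
    set Q := Real.log (27 * B ^ 2 / (r * δ)) with hQdef
    have hQ0 : 0 ≤ Q := Real.log_nonneg (by
      rw [le_div_iff₀ (by positivity)]
      nlinarith)
    have hQL : Q ≤ Q * L := le_mul_of_one_le_right hQ0 hL
    have hsum : 4 * A₁ + A₂ ≤ (24 + 5 * Q + 5) * L := by linarith
    -- Combining everything: `40 / (11 η) ≤ 3 / η + E L` with `δ E < 1 / 2`.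
    have hcomb : 40 / (11 * η) ≤ 3 / η + (3 * C + 5 / r + 4 / r +
        48 * (24 + 5 * Q + 5) / r) * L := by
      have e1 : 4 * (10 / (11 * η)) = 40 / (11 * η) := by ring
      have e2 : 3 * (1 / η) = 3 / η := by ring
      have e3 : 48 * (4 * A₁ + A₂) / r ≤ 48 * (24 + 5 * Q + 5) / r * L := by
        rw [div_mul_eq_mul_div]
        refine div_le_div_of_nonneg_right ?_ hr0.le
        linarith
      have e4 : 48 * (4 * A₁ + A₂) / r = 4 * (48 * A₁ / r) + 48 * A₂ / r := by ring
      have e5 : 3 * C + 5 / r + 4 / r ≤ (3 * C + 5 / r + 4 / r) * L :=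
        le_mul_of_one_le_right (by positivity) hL
      have e6 : 5 / r = 5 * (1 / r) := by ring
      have e7 : 4 / r = 4 * (1 / r) := by ring
      rw [add_mul]
      linarith
    have hfin := mul_le_mul_of_nonneg_left hcomb hη0.le
    have e1 : η * (40 / (11 * η)) = 40 / 11 := by field_simp
    have e2 : ∀ E : ℝ, η * (3 / η + E * L) = 3 + δ * E := fun E => by
      rw [hη]; field_simp
    rw [e1, e2] at hfin
    linarith
  set c := δ / 10 with hc
  have hc0 : 0 < c := by positivity
  have hcr : c ≤ r / 40 := by rw [hc]; linarith
  have hUopen : IsOpen {s : ℂ | 1 - 2 * r < s.re} :=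
    isOpen_lt continuous_const Complex.continuous_re
  have hD : DifferentiableOn ℂ g {s : ℂ | 1 - 2 * r < s.re} := fun s hs =>
    (hgd s (le_of_lt hs)).differentiableWithinAt
  -- The region is shrunk by the factor `8` so that it lies well inside zero-free discs.
  refine ⟨c / 8, max 1 (24 * (7 + Real.log (27 * B ^ 2 * 16 / c ^ 2)) / (3 * c / 4) +
      (2 * (8 / (5 * c)) + C)), fun s => -(deriv g s / g s), by positivity,
      lt_max_of_lt_left one_pos, by linarith, ?_, ?_, ?_⟩
  · intro s hs
    have hL := hL1 s.im
    have hcL : c / Real.log (|s.im| + 4) ≤ c := div_le_self hc0.le hL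
    have hcL0 : 0 < c / Real.log (|s.im| + 4) := by positivity
    have e : c / 8 / Real.log (|s.im| + 4) = c / Real.log (|s.im| + 4) / 8 := by ring
    have hs' : s ∈ {s : ℂ | 1 - 2 * r < s.re} := by
      change 1 - 2 * r < s.re
      linarith
    exact ((((hD.deriv hUopen).differentiableAt (hUopen.mem_nhds hs')).div
      (hgd s (le_of_lt hs')) (hzf s (by linarith)))).neg
  · intro s hs hs2
    rw [norm_neg]
    set t := s.im with ht
    have hL := hL1 t
    set L := Real.log (|t| + 4) with hLdef
    have hL0 : 0 < L := by linarith
    have hLL : L ≤ L ^ 2 := by nlinarith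
    have hcL : c / L ≤ c := div_le_self hc0.le hL
    have hcL0 : 0 < c / L := by positivity
    have hQ1 : 1 < 27 * B ^ 2 * 16 / c ^ 2 := by
      rw [lt_div_iff₀ (by positivity)]
      nlinarith
    have hQ0 := Real.log_pos hQ1
    set Q := Real.log (27 * B ^ 2 * 16 / c ^ 2) with hQ
    have hC1 : 0 ≤ 24 * (7 + Q) / (3 * c / 4) := by positivity
    have hC2 : 0 ≤ 2 * (8 / (5 * c)) + C := by positivity
    refine le_trans ?_ (mul_le_mul_of_nonneg_right (le_max_right _ _) (by positivity))
    -- Near the line `Re s = 1` the disc of radius `3 c / (4 L)` about `1 + c / (4 L) + i t` is free of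
    -- zeros and its half contains `s`; further right the Dirichlet series is bounded trivially.
    rcases le_or_gt (s.re - 1) (5 / 8 * (c / L)) with hσ | hσ
    · set s₁ : ℂ := (1 + c / L / 4 : ℝ) + t * Complex.I with hs₁
      have hre : s₁.re = 1 + c / L / 4 := by simp [hs₁]
      have him : s₁.im = t := by simp [hs₁]
      have hR0 : 0 < 3 / 4 * (c / L) := by positivity
      have hL5 : ∀ u : ℝ, |u - t| ≤ 1 → Real.log (|u| + 4) ≤ 2 * L := fun u hu => by
        rw [hLdef, show 2 * Real.log (|t| + 4) = ((2 : ℕ) : ℝ) * Real.log (|t| + 4) by norm_num,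
          ← Real.log_pow]
        refine Real.log_le_log (by positivity) ?_
        have := abs_sub_abs_le_abs_sub u t
        nlinarith [abs_nonneg t]
      have hAexp : Real.exp (Q + 2 * Real.log L + 3 * L) =
          27 * B ^ 2 * 16 / c ^ 2 * L ^ 2 * (|t| + 4) ^ 3 := by
        rw [Real.exp_add, Real.exp_add, hQ, Real.exp_log (by positivity),
          show 2 * Real.log L = ((2 : ℕ) : ℝ) * Real.log L by norm_num, Real.exp_nat_mul,
          Real.exp_log hL0, hLdef,
          show 3 * Real.log (|t| + 4) = ((3 : ℕ) : ℝ) * Real.log (|t| + 4) by norm_num,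
          Real.exp_nat_mul, Real.exp_log (by positivity)]
      have hlogL0 := Real.log_nonneg hL
      have hlogL := Real.log_le_sub_one_of_pos hL0
      have hs₁1 : 1 < s₁.re := by rw [hre]; linarith
      have hg1 : (c / L / 4) * (c / L / 4) ≤ 27 * B * ‖g s₁‖ := by
        refine le_trans ?_ (hlow s₁ hs₁1 (by rw [hre]; linarith))
        rw [hre, add_sub_cancel_left]
        refine mul_le_mul_of_nonneg_right ?_ (by positivity)
        have := Complex.re_le_norm (s₁ - 1)
        rwa [Complex.sub_re, hre, Complex.one_re, add_sub_cancel_left] at this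
      have hb := norm_logDeriv_le' (f := g) (R := 3 / 4 * (c / L))
        (A := Q + 2 * Real.log L + 3 * L) (z := s) s₁ hR0 (by positivity)
        (fun z hz => hgd z (by
          have := (Complex.abs_re_le_norm (z - s₁)).trans hz.le
          rw [Complex.sub_re, abs_le, hre] at this
          linarith))
        (fun z hz => hzf z (by
          have h1 := (Complex.abs_re_le_norm (z - s₁)).trans hz.le
          have h2 := (Complex.abs_im_le_norm (z - s₁)).trans hz.le
          rw [Complex.sub_re, abs_le, hre] at h1
          rw [Complex.sub_im, him] at h2
          have h3 := hL5 z.im (by linarith)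
          have h4 : 0 < Real.log (|z.im| + 4) := by linarith [hL1 z.im]
          have h5 : c / (2 * L) ≤ c / Real.log (|z.im| + 4) :=
            div_le_div_of_nonneg_left hc0.le h4 h3
          have h6 : c / (2 * L) = c / L / 2 := by field_simp
          linarith))
        (fun z hz => by
          refine (hdisc s₁ z hs₁1.le (by rw [hre]; linarith) (by linarith)).trans ?_
          rw [hAexp, him]
          calc B * (|t| + 4) ^ 3 = B * 16 / c ^ 2 * L ^ 2 * (|t| + 4) ^ 3 *
                ((c / L / 4) * (c / L / 4)) := by field_simp; ring
            _ ≤ B * 16 / c ^ 2 * L ^ 2 * (|t| + 4) ^ 3 * (27 * B * ‖g s₁‖) := by gcongr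
            _ = _ := by ring)
        (by
          have h1 : s - s₁ = ((s.re - (1 + c / L / 4) : ℝ) : ℂ) := by
            apply Complex.ext
            · rw [Complex.sub_re, hre, Complex.ofReal_re]
            · rw [Complex.sub_im, him, Complex.ofReal_im, ← ht, sub_self]
          have e : c / 8 / L = c / L / 8 := by ring
          rw [h1, Complex.norm_real, Real.norm_eq_abs, abs_le]
          constructor <;> linarith)
      refine hb.trans ?_
      have h1 : 24 * (Q + 2 * Real.log L + 3 * L) / (3 / 4 * (c / L)) =
          24 * (Q + 2 * Real.log L + 3 * L) / (3 * c / 4) * L := by field_simp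
      rw [h1]
      have h2 : Q + 2 * Real.log L + 3 * L ≤ (7 + Q) * L := by nlinarith
      calc 24 * (Q + 2 * Real.log L + 3 * L) / (3 * c / 4) * L
          ≤ 24 * ((7 + Q) * L) / (3 * c / 4) * L := by gcongr
        _ = 24 * (7 + Q) / (3 * c / 4) * L ^ 2 := by ring
        _ ≤ _ := by
          refine mul_le_mul_of_nonneg_right ?_ (by positivity)
          linarith
    · have hs1 : 1 < s.re := by nlinarith
      rw [hlog s hs1]
      have h1 := hMb s hs1 (by linarith)
      have h3 : s.re - 1 ≤ ‖s - 1‖ := by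
        have := Complex.re_le_norm (s - 1)
        simpa using this
      have h2 : ‖1 / (s - 1)‖ ≤ 1 / (s.re - 1) := by
        rw [norm_div, norm_one]
        exact one_div_le_one_div_of_le (by linarith) h3
      have h4 : 1 / (s.re - 1) ≤ 8 / (5 * c) * L := by
        have : 8 / (5 * c) * L = 1 / (5 / 8 * (c / L)) := by field_simp
        rw [this]
        exact one_div_le_one_div_of_le (by positivity) hσ.le
      have h5 := norm_sub_le (1 / (s - 1)) (mangoldtSeries K s)
      have h6 : C ≤ C * L := le_mul_of_one_le_right hC0.le hL
      have h7 : (2 * (8 / (5 * c)) + C) * L ≤ (2 * (8 / (5 * c)) + C) * L ^ 2 :=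
        mul_le_mul_of_nonneg_left hLL hC2
      have h8 : 0 ≤ 24 * (7 + Q) / (3 * c / 4) * L ^ 2 := by positivity
      nlinarith
  · intro s hs
    change -(deriv g s / g s) = _
    rw [hlog s hs]
    ring

end ZeroFree

/-! ### Shifting the contour -/

section Contour

open MeasureTheory

lemma integrable_decay : Integrable fun y : ℝ => (1 + |y|) ^ (-(5 / 4) : ℝ) := by
  have := integrable_one_add_norm (E := ℝ) (μ := volume) (r := 5 / 4) (by simp; norm_num)
  simpa using this

/-- Shifting the line of integration to the left, up to height `exp (√log x)`, inside a
region of the classical zero-free shape. -/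
lemma contour_bound (c C₁ : ℝ) (H : ℂ → ℂ) (hc : 0 < c) (hc2 : c ≤ 1 / 2) (hC : 0 ≤ C₁)
    (hd : ∀ s : ℂ, 1 - c / Real.log (|s.im| + 4) ≤ s.re → DifferentiableAt ℂ H s)
    (hb : ∀ s : ℂ, 1 - c / Real.log (|s.im| + 4) ≤ s.re → s.re ≤ 2 →
      ‖H s‖ ≤ C₁ * (1 + |s.im|) ^ (-(3 / 2) : ℝ)) :
    ∃ C : ℝ, ∀ x : ℝ, Real.exp 4 ≤ x →
      ‖∫ y : ℝ, (x : ℂ) ^ (((1 + 1 / Real.log x : ℝ) : ℂ) + y * Complex.I) *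
        H (((1 + 1 / Real.log x : ℝ) : ℂ) + y * Complex.I)‖ ≤
        C * (x * Real.exp (-(c / 4) * Real.sqrt (Real.log x))) := by
  set J : ℝ := ∫ y : ℝ, (1 + |y|) ^ (-(5 / 4) : ℝ) with hJ
  refine ⟨C₁ * (Real.exp 1 * J + 2 * Real.exp 1 + J), fun x hx => ?_⟩
  have hx0 : 0 < x := (Real.exp_pos 4).trans_le hx
  have hx1 : 1 ≤ x := le_trans (Real.one_le_exp (by norm_num)) hx
  set L := Real.log x with hL
  have hL4 : 4 ≤ L := (Real.le_log_iff_exp_le hx0).2 hx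
  set R := Real.sqrt L with hR
  have hRsq : R * R = L := Real.mul_self_sqrt (by linarith)
  have hR2 : 2 ≤ R := by
    rw [hR]; exact Real.le_sqrt_of_sq_le (by linarith)
  -- The height `T = exp √L` balances the tails against the gain `x ^ (-c / log T)`.
  set T := Real.exp R with hT
  have hT3 : 3 ≤ T := by
    have := Real.add_one_le_exp R
    linarith
  set lT := Real.log (T + 4) with hlT
  have hlT1 : 1 ≤ lT := by
    rw [hlT, Real.le_log_iff_exp_le (by linarith)]
    linarith [Real.exp_one_lt_d9]
  have hlT2 : lT ≤ 2 * R := by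
    rw [hlT, Real.log_le_iff_le_exp (by linarith), two_mul, Real.exp_add]
    nlinarith
  set α := 1 - c / lT with hα
  -- With this abscissa `x ^ σ = e x`.
  set σ := 1 + 1 / L with hσ
  have hcl : c / lT ≤ 1 / 2 := (div_le_self hc.le hlT1).trans hc2
  have hcl0 : 0 < c / lT := by positivity
  have hL0 : 0 < 1 / L := by positivity
  have hL1 : 1 / L ≤ 1 / 4 := one_div_le_one_div_of_le (by norm_num) hL4
  have hασ : α ≤ σ := by rw [hα, hσ]; linarith
  have hreg : ∀ s : ℂ, |s.im| ≤ T → α ≤ s.re → 1 - c / Real.log (|s.im| + 4) ≤ s.re := by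
    intro s h1 h2
    refine le_trans ?_ h2
    have h4 : 0 < Real.log (|s.im| + 4) := Real.log_pos (by linarith [abs_nonneg s.im])
    have h3 : Real.log (|s.im| + 4) ≤ lT :=
      Real.log_le_log (by linarith [abs_nonneg s.im]) (by linarith)
    have := div_le_div_of_nonneg_left hc.le h4 h3
    rw [hα]; linarith
  have hregσ : ∀ s : ℂ, s.re = σ → 1 - c / Real.log (|s.im| + 4) ≤ s.re := by
    intro s hs
    have h4 : 0 < Real.log (|s.im| + 4) := Real.log_pos (by linarith [abs_nonneg s.im])
    have : 0 < c / Real.log (|s.im| + 4) := by positivity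
    rw [hs, hσ]; linarith
  have hxσ : x ^ σ = Real.exp 1 * x := by
    rw [hσ, Real.rpow_add hx0, Real.rpow_one, mul_comm]
    congr 1
    rw [Real.rpow_def_of_pos hx0, ← hL, mul_one_div_cancel (by linarith)]
  have hxα : x ^ α ≤ x * Real.exp (-(c / 4) * R) := by
    rw [Real.rpow_def_of_pos hx0, ← hL]
    have hxe : x = Real.exp L := (Real.exp_log hx0).symm
    calc _ ≤ Real.exp (L + -(c / 4) * R) := ?_
      _ = _ := by rw [Real.exp_add, ← hxe]
    rw [Real.exp_le_exp, hα]
    have h1 : c / (2 * R) ≤ c / lT := div_le_div_of_nonneg_left hc.le (by linarith) hlT2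
    have h2 : L * (c / (2 * R)) = c * R / 2 := by
      rw [← hRsq]; field_simp
    have h3 := mul_le_mul_of_nonneg_left h1 (by linarith : 0 ≤ L)
    nlinarith
  have hexpR : (T : ℝ) ^ (-(1 / 4) : ℝ) ≤ Real.exp (-(c / 4) * R) := by
    rw [hT, ← Real.exp_mul, Real.exp_le_exp]
    nlinarith
  set E := Real.exp (-(c / 4) * R) with hE
  have hE0 : 0 < E := Real.exp_pos _
  have hJ0 : 0 ≤ J := integral_nonneg fun y => by positivity
  set f : ℂ → ℂ := fun s => (x : ℂ) ^ s * H s with hf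
  have hfd : ∀ s : ℂ, 1 - c / Real.log (|s.im| + 4) ≤ s.re → DifferentiableAt ℂ f s := by
    intro s hs
    refine DifferentiableAt.mul ?_ (hd s hs)
    exact differentiableAt_id.const_cpow (Or.inl (by exact_mod_cast hx0.ne'))
  have hfb : ∀ s : ℂ, 1 - c / Real.log (|s.im| + 4) ≤ s.re → s.re ≤ σ →
      ‖f s‖ ≤ x ^ s.re * (C₁ * (1 + |s.im|) ^ (-(3 / 2) : ℝ)) := by
    intro s hs hs2
    rw [hf]
    simp only [norm_mul]
    rw [Complex.norm_cpow_eq_rpow_re_of_pos hx0]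
    refine mul_le_mul_of_nonneg_left (hb s hs (by linarith)) (by positivity)
  have hdec1 : ∀ y : ℝ, (1 + |y|) ^ (-(3 / 2) : ℝ) ≤ (1 + |y|) ^ (-(5 / 4) : ℝ) := fun y =>
    Real.rpow_le_rpow_of_exponent_le (by linarith [abs_nonneg y]) (by norm_num)
  have hdec2 : ∀ y : ℝ, T ≤ |y| → (1 + |y|) ^ (-(3 / 2) : ℝ) ≤ E * (1 + |y|) ^ (-(5 / 4) : ℝ) := by
    intro y hy
    have h1 : (1 + |y|) ^ (-(3 / 2) : ℝ) = (1 + |y|) ^ (-(1 / 4) : ℝ) * (1 + |y|) ^ (-(5 / 4) : ℝ) := by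
      rw [← Real.rpow_add (by linarith)]; norm_num
    rw [h1]
    refine mul_le_mul_of_nonneg_right (le_trans ?_ hexpR) (by positivity)
    exact Real.rpow_le_rpow_of_nonpos (by linarith) (by linarith) (by norm_num)
  have hcont : Continuous fun y : ℝ => f ((σ : ℂ) + y * Complex.I) := by
    rw [continuous_iff_continuousAt]
    intro y
    have h1 := (hfd ((σ : ℂ) + y * Complex.I) (hregσ _ (by simp))).continuousAt
    exact ContinuousAt.comp (f := fun y : ℝ => (σ : ℂ) + y * Complex.I) h1 (by fun_prop)
  have hbσ : ∀ y : ℝ, ‖f ((σ : ℂ) + y * Complex.I)‖ ≤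
      Real.exp 1 * x * (C₁ * (1 + |y|) ^ (-(3 / 2) : ℝ)) := by
    intro y
    have := hfb ((σ : ℂ) + y * Complex.I) (hregσ _ (by simp)) (by simp)
    simpa [hxσ] using this
  have hint : Integrable fun y : ℝ => f ((σ : ℂ) + y * Complex.I) := by
    refine (integrable_decay.const_mul (Real.exp 1 * x * C₁)).mono' hcont.aestronglyMeasurable
      (Eventually.of_forall fun y => (hbσ y).trans ?_)
    rw [← mul_assoc]
    exact mul_le_mul_of_nonneg_left (hdec1 y) (by positivity)
  -- the two tails
  have htail : ‖∫ y in (Set.Ioc (-T) T)ᶜ, f ((σ : ℂ) + y * Complex.I)‖ ≤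
      Real.exp 1 * x * C₁ * E * J := by
    have h1 : ‖∫ y in (Set.Ioc (-T) T)ᶜ, f ((σ : ℂ) + y * Complex.I)‖ ≤
        ∫ y in (Set.Ioc (-T) T)ᶜ, Real.exp 1 * x * C₁ * E * (1 + |y|) ^ (-(5 / 4) : ℝ) := by
      refine norm_integral_le_of_norm_le (integrable_decay.const_mul _).integrableOn ?_
      refine (ae_restrict_iff' measurableSet_Ioc.compl).2 (Eventually.of_forall fun y hy => ?_)
      refine (hbσ y).trans ?_
      have hy' : T ≤ |y| := by
        by_contra h
        push Not at h
        rw [abs_lt] at h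
        exact hy ⟨h.1, h.2.le⟩
      have := mul_le_mul_of_nonneg_left (hdec2 y hy')
        (by positivity : 0 ≤ Real.exp 1 * x * C₁)
      linarith
    refine h1.trans ?_
    rw [integral_const_mul]
    refine mul_le_mul_of_nonneg_left ?_ (by positivity)
    exact setIntegral_le_integral integrable_decay (Eventually.of_forall fun y => by positivity)
  have hhor : ∀ t : ℝ, |t| = T → ‖∫ u : ℝ in α..σ, f (u + t * Complex.I)‖ ≤
      Real.exp 1 * x * C₁ * E := by
    intro t ht
    have h1 : ∀ u ∈ Set.uIoc α σ, ‖f (u + t * Complex.I)‖ ≤ Real.exp 1 * x * C₁ * E := by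
      intro u hu
      rw [Set.uIoc_of_le hασ] at hu
      have h2 := hfb (u + t * Complex.I) (hreg _ (by simp [ht]) (by simpa using hu.1.le))
        (by simpa using hu.2)
      refine h2.trans ?_
      simp only [Complex.add_re, Complex.ofReal_re, Complex.mul_re, Complex.I_re, mul_zero,
        Complex.ofReal_im, Complex.I_im, mul_one, sub_self, add_zero, Complex.add_im,
        Complex.mul_im, zero_add, ht]
      have h3 : x ^ u ≤ Real.exp 1 * x := by
        rw [← hxσ]; exact Real.rpow_le_rpow_of_exponent_le hx1 hu.2
      have h4 : (1 + T) ^ (-(3 / 2) : ℝ) ≤ E := by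
        refine le_trans ?_ hexpR
        calc (1 + T) ^ (-(3 / 2) : ℝ) ≤ (1 + T) ^ (-(1 / 4) : ℝ) :=
              Real.rpow_le_rpow_of_exponent_le (by linarith) (by norm_num)
          _ ≤ T ^ (-(1 / 4) : ℝ) :=
              Real.rpow_le_rpow_of_nonpos (by linarith) (by linarith) (by norm_num)
      calc x ^ u * (C₁ * (1 + T) ^ (-(3 / 2) : ℝ)) ≤ (Real.exp 1 * x) * (C₁ * E) := by gcongr
        _ = _ := by ring
    refine (intervalIntegral.norm_integral_le_of_norm_le_const h1).trans ?_
    have h5 : |σ - α| ≤ 1 := by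
      rw [abs_of_nonneg (by linarith), hα, hσ]; linarith
    exact mul_le_of_le_one_right (by positivity) h5
  have hleft : ‖∫ y : ℝ in (-T)..T, f (α + y * Complex.I)‖ ≤ C₁ * (x * E) * J := by
    have h1 : ‖∫ y : ℝ in (-T)..T, f (α + y * Complex.I)‖ ≤
        ∫ y in (-T)..T, C₁ * (x * E) * (1 + |y|) ^ (-(5 / 4) : ℝ) := by
      refine intervalIntegral.norm_integral_le_of_norm_le (by linarith) ?_
        (integrable_decay.const_mul _).intervalIntegrable
      refine Eventually.of_forall fun y hy => ?_
      have hyT : |y| ≤ T := abs_le.2 ⟨hy.1.le, hy.2⟩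
      have h2 := hfb (α + y * Complex.I) (hreg _ (by simpa using hyT) (by simp))
        (by simpa using hασ)
      refine h2.trans ?_
      simp only [Complex.add_re, Complex.ofReal_re, Complex.mul_re, Complex.I_re, mul_zero,
        Complex.ofReal_im, Complex.I_im, mul_one, sub_self, add_zero, Complex.add_im,
        Complex.mul_im, zero_add]
      calc x ^ α * (C₁ * (1 + |y|) ^ (-(3 / 2) : ℝ))
          ≤ (x * E) * (C₁ * (1 + |y|) ^ (-(5 / 4) : ℝ)) := by
            refine mul_le_mul hxα (mul_le_mul_of_nonneg_left (hdec1 y) hC) (by positivity)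
              (by positivity)
        _ = _ := by ring
    refine h1.trans ?_
    rw [intervalIntegral.integral_const_mul, intervalIntegral.integral_of_le (by linarith)]
    refine mul_le_mul_of_nonneg_left ?_ (by positivity)
    exact setIntegral_le_integral integrable_decay (Eventually.of_forall fun y => by positivity)
  have hrect := Complex.integral_boundary_rect_eq_zero_of_differentiableOn f
    ⟨α, -T⟩ ⟨σ, T⟩ (fun s hs => by
      have h1 := hs.1
      have h2 := hs.2
      simp only [Set.mem_preimage] at h1 h2
      rw [Set.uIcc_of_le hασ] at h1
      rw [Set.uIcc_of_le (by linarith)] at h2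
      exact (hfd s (hreg s (abs_le.2 h2) h1.1)).differentiableWithinAt)
  simp only at hrect
  have hmid : ‖∫ y : ℝ in (-T)..T, f (σ + y * Complex.I)‖ ≤
      C₁ * (x * E) * J + 2 * (Real.exp 1 * x * C₁ * E) := by
    have h1 := hhor (-T) (by rw [abs_neg, abs_of_nonneg (by linarith)])
    have h2 := hhor T (abs_of_nonneg (by linarith))
    set A := ∫ y : ℝ in (-T)..T, f (σ + y * Complex.I)
    set B := ∫ y : ℝ in (-T)..T, f (α + y * Complex.I)
    set D := ∫ u : ℝ in α..σ, f (u + ((-T : ℝ) : ℂ) * Complex.I)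
    set D' := ∫ u : ℝ in α..σ, f (u + (T : ℂ) * Complex.I)
    have h3 : Complex.I * A = Complex.I * B + (D' - D) := by
      simp only [smul_eq_mul] at hrect
      linear_combination hrect
    have h4 : ‖A‖ = ‖Complex.I * A‖ := by simp
    have h5 : ‖Complex.I * B‖ = ‖B‖ := by simp
    rw [h4, h3]
    have := norm_add_le (Complex.I * B) (D' - D)
    have := norm_sub_le D' D
    linarith
  have hsplit := integral_add_compl (measurableSet_Ioc (a := -T) (b := T)) hint
  rw [← intervalIntegral.integral_of_le (by linarith)] at hsplit
  change ‖∫ y : ℝ, f ((σ : ℂ) + y * Complex.I)‖ ≤ _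
  rw [← hsplit]
  have := norm_add_le (∫ y : ℝ in (-T)..T, f (σ + y * Complex.I))
    (∫ y in (Set.Ioc (-T) T)ᶜ, f ((σ : ℂ) + y * Complex.I))
  have e : C₁ * (Real.exp 1 * J + 2 * Real.exp 1 + J) * (x * E) =
    C₁ * (x * E) * J + 2 * (Real.exp 1 * x * C₁ * E) + Real.exp 1 * x * C₁ * E * J := by ring
  rw [e]
  linarith

end Contour

/-! ### The Riesz mean -/

section Perron

open MeasureTheory NumberField

lemma HasMellin.congr_pos {f g : ℝ → ℂ} {s m : ℂ} (h : HasMellin f s m)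
    (hfg : ∀ t : ℝ, 0 < t → f t = g t) : HasMellin g s m := by
  refine ⟨?_, ?_⟩
  · refine IntegrableOn.congr_fun h.1 (fun t ht => ?_) measurableSet_Ioi
    rw [hfg t ht]
  · rw [← h.2]
    refine setIntegral_congr_fun measurableSet_Ioi (fun t ht => ?_)
    rw [hfg t ht]

/-- The Cesàro kernel `(1 - u)₊`. -/
def hat (u : ℝ) : ℂ := ((max 0 (1 - u) : ℝ) : ℂ)

/-- The kernel `(1 - u)₊ ^ 2 / (2 u)`, the image of the Cesàro kernel under the operator
corresponding to multiplication of the Mellin transform by `1 / (s - 1)`. -/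
def poleKernel (u : ℝ) : ℂ := ((max 0 (1 - u) ^ 2 / (2 * u) : ℝ) : ℂ)

lemma hat_mellin {s : ℂ} (hs : 0 < s.re) : HasMellin hat s (1 / (s * (s + 1))) := by
  have h0 := hasMellin_one_Ioc hs
  have h1 := hasMellin_cpow_Ioc 1 (s := s) (by simp; linarith)
  have h := hasMellin_sub h0.1 h1.1
  rw [h0.2, h1.2] at h
  have hs0 : s ≠ 0 := by rintro rfl; simp at hs
  have hs1 : s + 1 ≠ 0 := by
    intro h2
    have := congrArg Complex.re h2
    simp at this; linarith
  have e : 1 / s - 1 / (s + 1) = 1 / (s * (s + 1)) := by field_simp; ring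
  rw [e] at h
  refine h.congr_pos fun t ht => ?_
  by_cases h1 : t ≤ 1
  · simp [hat, Set.indicator, ht, h1]
  · have : 1 - t ≤ 0 := by linarith
    simp [hat, Set.indicator, h1, this]

lemma poleKernel_mellin {s : ℂ} (hs : 1 < s.re) :
    HasMellin poleKernel s (1 / ((s - 1) * (s * (s + 1)))) := by
  have h0 := hasMellin_one_Ioc (s := s) (by linarith)
  have h1 := hasMellin_cpow_Ioc 1 (s := s) (by simp; linarith)
  have h2 := hasMellin_cpow_Ioc (-1) (s := s) (by simp; linarith)
  have h3 := hasMellin_add h1.1 h2.1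
  rw [h1.2, h2.2] at h3
  have h4 := hasMellin_const_smul h3.1 (1 / 2 : ℂ)
  rw [h3.2] at h4
  have h := hasMellin_sub h4.1 h0.1
  rw [h4.2, h0.2] at h
  have hs0 : s ≠ 0 := by rintro rfl; simp at hs; linarith
  have hs1 : s + 1 ≠ 0 := by
    intro h2
    have := congrArg Complex.re h2
    simp at this; linarith
  have hs2 : s - 1 ≠ 0 := by
    intro h2
    have := congrArg Complex.re h2
    simp at this; linarith
  have e : (1 / 2 : ℂ) • (1 / (s + 1) + 1 / (s + -1)) - 1 / s = 1 / ((s - 1) * (s * (s + 1))) := by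
    rw [← sub_eq_add_neg s 1, smul_eq_mul]
    field_simp
    ring
  rw [e] at h
  refine h.congr_pos fun t ht => ?_
  have ht' : (t : ℂ) ≠ 0 := by exact_mod_cast ht.ne'
  by_cases h1 : t ≤ 1
  · have : (0 : ℝ) ≤ 1 - t := by linarith
    simp only [Set.indicator, Set.mem_Ioc, ht, h1, and_self, if_true, poleKernel,
      max_eq_right this, smul_eq_mul, Complex.cpow_one, Complex.cpow_neg_one]
    push_cast
    field_simp
    ring
  · have : 1 - t ≤ 0 := by linarith
    simp [poleKernel, Set.indicator, h1, this]

lemma continuous_hat : Continuous hat := by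
  unfold hat; fun_prop

variable (K : Type*) [Field K] [NumberField K]

lemma hat_eq_zero {u : ℝ} (h : 1 ≤ u) : hat u = 0 := by
  have : 1 - u ≤ 0 := by linarith
  simp [hat, this]

/-- The Cesàro means of `idealMangoldt`, as a function of the inverse `t` of the cut-off. -/
def smoothSum (t : ℝ) : ℂ := ∑' m : ℕ, (idealMangoldt K m : ℂ) * hat (m * t)

lemma smoothSum_eq {t : ℝ} {N : ℕ} (h : 1 ≤ (N : ℝ) * t) (ht : 0 < t) :
    smoothSum K t = ∑ m ∈ Finset.range N, (idealMangoldt K m : ℂ) * hat (m * t) := by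
  refine tsum_eq_sum fun m hm => ?_
  rw [Finset.mem_range, not_lt] at hm
  rw [hat_eq_zero, mul_zero]
  refine h.trans (mul_le_mul_of_nonneg_right (by exact_mod_cast hm) ht.le)

lemma smoothSum_continuousAt {t : ℝ} (ht : 0 < t) : ContinuousAt (smoothSum K) t := by
  obtain ⟨N, hN⟩ := exists_nat_ge (2 / t)
  have h : ContinuousAt (fun t : ℝ => ∑ m ∈ Finset.range N, (idealMangoldt K m : ℂ) * hat (m * t))
      t := by
    have := continuous_hat
    fun_prop
  refine h.congr ?_
  filter_upwards [lt_mem_nhds (half_lt_self ht)] with u hu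
  have hu0 : 0 < u := lt_trans (by positivity) hu
  refine (smoothSum_eq K ?_ hu0).symm
  have : 2 / t * (t / 2) ≤ N * u := mul_le_mul hN hu.le (by positivity) (by positivity)
  calc (1 : ℝ) = 2 / t * (t / 2) := by field_simp
    _ ≤ _ := this

lemma norm_hat_le {a u : ℝ} (ha : 0 ≤ a) (hu : 0 < u) : ‖hat u‖ ≤ u ^ (-a) := by
  rw [hat, Complex.norm_real, Real.norm_of_nonneg (le_max_left _ _)]
  refine max_le (by positivity) ?_
  by_cases h : u ≤ 1
  · exact le_trans (by linarith) (Real.one_le_rpow_of_pos_of_le_one_of_nonpos hu h (by linarith))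
  · exact le_trans (by linarith : 1 - u ≤ 0) (by positivity)

lemma smoothSum_norm_le {a : ℝ} (ha : 1 < a) :
    ∃ C : ℝ, ∀ t : ℝ, 0 < t → ‖smoothSum K t‖ ≤ C * t ^ (-a) := by
  have h := (idealMangoldt_summable K (a : ℂ) (by simpa using ha)).norm
  refine ⟨∑' m : ℕ, ‖LSeries.term (fun m => (idealMangoldt K m : ℂ)) a m‖, fun t ht => ?_⟩
  refine tsum_of_norm_bounded ((h.hasSum).mul_right (t ^ (-a))) fun m => ?_
  rw [LSeries.norm_term_eq]
  by_cases hm : m = 0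
  · subst hm
    have : idealMangoldt K 0 = 0 := by
      have h1 := idealMangoldt_le K 0
      have h2 := idealMangoldt_nonneg K 0
      simp at h1
      linarith
    simp [this]
  · have hm' : (0 : ℝ) < m := by exact_mod_cast Nat.pos_of_ne_zero hm
    rw [if_neg hm, norm_mul, Complex.ofReal_re, div_mul_eq_mul_div, mul_div_assoc]
    refine mul_le_mul_of_nonneg_left ?_ (norm_nonneg _)
    refine (norm_hat_le (by linarith : 0 ≤ a) (mul_pos hm' ht)).trans ?_
    rw [Real.mul_rpow hm'.le ht.le, Real.rpow_neg hm'.le, div_eq_inv_mul]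

lemma smoothSum_mellin {s : ℂ} (hs : 1 < s.re) :
    HasMellin (smoothSum K) s (mangoldtSeries K s * (1 / (s * (s + 1)))) := by
  have h0 : ((idealMangoldt K 0 : ℝ) : ℂ) = 0 := by
    have h1 := idealMangoldt_le K 0
    have h2 := idealMangoldt_nonneg K 0
    simp at h1
    have : idealMangoldt K 0 = 0 := by linarith
    simp [this]
  constructor
  · obtain ⟨C, hC⟩ := smoothSum_norm_le K (a := (1 + s.re) / 2) (by linarith)
    refine mellinConvergent_of_isBigO_rpow (a := s.re + 1) (b := (1 + s.re) / 2) ?_ ?_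
      (by linarith) ?_ (by linarith)
    · refine ContinuousOn.locallyIntegrableOn (fun t ht => ?_) measurableSet_Ioi
      exact (smoothSum_continuousAt K ht).continuousWithinAt
    · have : smoothSum K =ᶠ[atTop] fun _ => 0 := by
        filter_upwards [eventually_ge_atTop (1 : ℝ)] with t ht
        rw [smoothSum_eq K (N := 1) (by simpa using ht) (by linarith)]
        simp [h0]
      exact this.trans_isBigO (Asymptotics.isBigO_zero _ _)
    · refine Asymptotics.IsBigO.of_bound C ?_
      filter_upwards [self_mem_nhdsWithin] with t ht
      have ht' : (0 : ℝ) < t := ht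
      rw [Real.norm_of_nonneg (by positivity)]
      exact hC t ht
  · have hh := hat_mellin (s := s) (by linarith)
    have := mellin_dirichlet (fun m => (idealMangoldt K m : ℂ)) hat s h0 hh.1
      (idealMangoldt_summable K s hs)
    rw [hh.2] at this
    exact this

lemma smoothSum_inv {x : ℝ} (hx : 0 < x) : smoothSum K (1 / x) * x =
    ((∑ m ∈ Finset.range (⌊x⌋₊ + 1), idealMangoldt K m * (x - m) : ℝ) : ℂ) := by
  have hfl := Nat.lt_floor_add_one x
  rw [smoothSum_eq K (N := ⌊x⌋₊ + 1) (by
    rw [mul_one_div, le_div_iff₀ hx]; push_cast; linarith) (by positivity), Finset.sum_mul]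
  push_cast
  refine Finset.sum_congr rfl fun m hm => ?_
  have hm1 : (m : ℝ) ≤ x := by
    rw [Finset.mem_range, Nat.lt_succ_iff, Nat.le_floor_iff hx.le] at hm
    exact hm
  have h1 : (m : ℝ) * (1 / x) ≤ 1 := by rw [mul_one_div, div_le_one hx]; exact hm1
  have hx' : (x : ℂ) ≠ 0 := by exact_mod_cast hx.ne'
  rw [hat, max_eq_right (by linarith)]
  push_cast
  field_simp

lemma poleKernel_inv {x : ℝ} (hx : 1 ≤ x) :
    poleKernel (1 / x) * x = (((x - 1) ^ 2 / 2 : ℝ) : ℂ) := by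
  have h1 : 1 / x ≤ 1 := by rw [div_le_one (by linarith)]; exact hx
  have hx0 : x ≠ 0 := by linarith
  rw [poleKernel, max_eq_right (by linarith), ← Complex.ofReal_mul]
  congr 1
  field_simp

lemma log_sq_le (t : ℝ) (ht : 0 ≤ t) : Real.log (t + 4) ^ 2 ≤ 32 * (1 + t) ^ (1 / 2 : ℝ) := by
  have h1 := Real.log_le_rpow_div (x := t + 4) (by linarith) (ε := 1 / 4) (by norm_num)
  have h0 : 0 ≤ Real.log (t + 4) := Real.log_nonneg (by linarith)
  have h2 := pow_le_pow_left₀ h0 h1 2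
  have h3 : ((t + 4) ^ (1 / 4 : ℝ)) ^ 2 = (t + 4) ^ (1 / 2 : ℝ) := by
    rw [← Real.rpow_natCast, ← Real.rpow_mul (by linarith)]; norm_num
  have h4 : (t + 4) ^ (1 / 2 : ℝ) ≤ (4 * (1 + t)) ^ (1 / 2 : ℝ) :=
    Real.rpow_le_rpow (by linarith) (by linarith) (by norm_num)
  have h5 : (4 * (1 + t)) ^ (1 / 2 : ℝ) = 2 * (1 + t) ^ (1 / 2 : ℝ) := by
    rw [Real.mul_rpow (by norm_num) (by linarith)]
    congr 1
    rw [show (4 : ℝ) = 2 ^ (2 : ℝ) by norm_num, ← Real.rpow_mul (by norm_num)]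
    norm_num
  rw [div_pow, h3] at h2
  have h6 : (t + 4) ^ (1 / 2 : ℝ) / (1 / 4) ^ 2 = 16 * (t + 4) ^ (1 / 2 : ℝ) := by ring
  linarith

/-- The first Riesz mean of `idealMangoldt` with the classical error term. -/
theorem smoothed_psi : ∃ C c : ℝ, 0 < c ∧ ∀ x : ℝ, Real.exp 4 ≤ x →
    |∑ m ∈ Finset.range (⌊x⌋₊ + 1), idealMangoldt K m * (x - m) - (x - 1) ^ 2 / 2| ≤
      C * (x ^ 2 * Real.exp (-c * Real.sqrt (Real.log x))) := by
  obtain ⟨c, C, F, hc, hC, hc2, hFd, hFb, hF⟩ := zero_free_region K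
  set H : ℂ → ℂ := fun s => F s / (s * (s + 1)) with hH
  have hre : ∀ s : ℂ, 1 - c / Real.log (|s.im| + 4) ≤ s.re → 1 / 2 ≤ s.re := by
    intro s hs
    have h1 : 1 ≤ Real.log (|s.im| + 4) := by
      rw [Real.le_log_iff_exp_le (by positivity)]
      linarith [Real.exp_one_lt_d9, abs_nonneg s.im]
    have := (div_le_self hc.le h1).trans hc2
    linarith
  have hn : ∀ s : ℂ, 1 / 2 ≤ s.re → (1 + |s.im|) / 4 ≤ ‖s‖ := by
    intro s hs
    have h1 := Complex.abs_im_le_norm s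
    have h2 := (le_abs_self _).trans (Complex.abs_re_le_norm s)
    linarith
  have hn' : ∀ s : ℂ, 1 / 2 ≤ s.re → (1 + |s.im|) / 4 ≤ ‖s + 1‖ := by
    intro s hs
    have := hn (s + 1) (by simp; linarith)
    simpa using this
  have hne : ∀ s : ℂ, 1 / 2 ≤ s.re → s * (s + 1) ≠ 0 := by
    intro s hs
    have h1 := hn s hs
    have h2 := hn' s hs
    have h3 := abs_nonneg s.im
    exact mul_ne_zero (norm_pos_iff.1 (by linarith)) (norm_pos_iff.1 (by linarith))
  have hHd : ∀ s : ℂ, 1 - c / Real.log (|s.im| + 4) ≤ s.re → DifferentiableAt ℂ H s := by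
    intro s hs
    refine (hFd s hs).div (by fun_prop) (hne s (hre s hs))
  have hHb : ∀ s : ℂ, 1 - c / Real.log (|s.im| + 4) ≤ s.re → s.re ≤ 2 →
      ‖H s‖ ≤ (512 * C) * (1 + |s.im|) ^ (-(3 / 2) : ℝ) := by
    intro s hs hs2
    have h0 := hre s hs
    have h1 := hn s h0
    have h2 := hn' s h0
    set y := 1 + |s.im| with hy
    have hy0 : 0 < y := by positivity
    rw [hH]
    simp only [norm_div, norm_mul]
    have h3 : (y / 4) * (y / 4) ≤ ‖s‖ * ‖s + 1‖ :=
      mul_le_mul h1 h2 (by positivity) (by positivity)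
    have h4 := (hFb s hs hs2).trans
      (mul_le_mul_of_nonneg_left (log_sq_le |s.im| (abs_nonneg _)) hC.le)
    calc ‖F s‖ / (‖s‖ * ‖s + 1‖) ≤ (C * (32 * y ^ (1 / 2 : ℝ))) / ((y / 4) * (y / 4)) :=
          div_le_div₀ (by positivity) h4 (by positivity) h3
      _ = (512 * C) * (y ^ (1 / 2 : ℝ) * y ^ (-2 : ℝ)) := by
          rw [Real.rpow_neg hy0.le, Real.rpow_two]; field_simp; norm_num
      _ = _ := by rw [← Real.rpow_add hy0]; norm_num
  obtain ⟨B, hB⟩ := contour_bound c (512 * C) H hc hc2 (by positivity) hHd hHb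
  refine ⟨B / (2 * Real.pi), c / 4, by positivity, fun x hx => ?_⟩
  have hx0 : 0 < x := (Real.exp_pos 4).trans_le hx
  have hx1 : 1 ≤ x := le_trans (Real.one_le_exp (by norm_num)) hx
  have hL4 : 4 ≤ Real.log x := (Real.le_log_iff_exp_le hx0).2 hx
  set σ : ℝ := 1 + 1 / Real.log x with hσ
  have hL0 : 0 < 1 / Real.log x := by positivity
  have hL1 : 1 / Real.log x ≤ 1 / 4 := one_div_le_one_div_of_le (by norm_num) hL4
  have hσ1 : 1 < σ := by linarith
  -- After subtraction of `poleKernel` the Mellin transform is `H`, which has no pole at `s = 1`, so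
  -- that no residue arises when the contour is moved.
  set G : ℝ → ℂ := fun t => smoothSum K t - poleKernel t with hG
  have hGm : ∀ s : ℂ, 1 < s.re → HasMellin G s (H s) := by
    intro s hs
    have h1 := smoothSum_mellin K hs
    have h2 := poleKernel_mellin hs
    have h := hasMellin_sub h1.1 h2.1
    rw [h1.2, h2.2] at h
    convert h using 1
    rw [hH]
    simp only
    rw [hF s hs]
    have h3 := hne s (by linarith)
    have hs2 : s - 1 ≠ 0 := by
      intro h2
      have := congrArg Complex.re h2
      simp at this; linarith
    have h4 := left_ne_zero_of_mul h3
    have h5 := right_ne_zero_of_mul h3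
    field_simp
  have hregσ : ∀ y : ℝ, 1 - c / Real.log (|((σ : ℂ) + y * Complex.I).im| + 4) ≤
      ((σ : ℂ) + y * Complex.I).re := by
    intro y
    set s := (σ : ℂ) + y * Complex.I with hs
    have h4 : 0 < Real.log (|s.im| + 4) := Real.log_pos (by linarith [abs_nonneg s.im])
    have : 0 < c / Real.log (|s.im| + 4) := by positivity
    have h5 : s.re = σ := by simp [hs]
    linarith
  have hvert : Complex.VerticalIntegrable (mellin G) σ := by
    have h1 : Integrable fun y : ℝ => H ((σ : ℂ) + y * Complex.I) := by
      have hcont : Continuous fun y : ℝ => H ((σ : ℂ) + y * Complex.I) := by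
        rw [continuous_iff_continuousAt]
        intro y
        have h1 := (hHd _ (hregσ y)).continuousAt
        exact ContinuousAt.comp (f := fun y : ℝ => (σ : ℂ) + y * Complex.I) h1 (by fun_prop)
      refine (integrable_decay.const_mul (512 * C)).mono' hcont.aestronglyMeasurable
        (Eventually.of_forall fun y => ?_)
      refine (hHb _ (hregσ y) (by simp; linarith)).trans ?_
      refine mul_le_mul_of_nonneg_left ?_ (by positivity)
      simp only [Complex.add_im, Complex.ofReal_im, Complex.mul_im, Complex.ofReal_re,
        Complex.I_im, mul_one, Complex.I_re, mul_zero, add_zero, zero_add]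
      exact Real.rpow_le_rpow_of_exponent_le (by linarith [abs_nonneg y]) (by norm_num)
    refine h1.congr (Eventually.of_forall fun y => ?_)
    exact ((hGm _ (by simp; linarith)).2).symm
  have hcont : ContinuousAt G (1 / x) := by
    refine (smoothSum_continuousAt K (by positivity)).sub ?_
    unfold poleKernel
    have : ContinuousAt (fun u : ℝ => max 0 (1 - u) ^ 2 / (2 * u)) (1 / x) :=
      ContinuousAt.div (by fun_prop) (by fun_prop) (by positivity)
    exact Complex.continuous_ofReal.continuousAt.comp this
  have hinv := mellinInv_mellin_eq σ G (x := 1 / x) (by positivity)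
    ((hGm σ (by simpa using hσ1)).1) hvert hcont
  rw [mellinInv] at hinv
  have hint : (∫ y : ℝ, ((1 / x : ℝ) : ℂ) ^ (-((σ : ℂ) + y * Complex.I)) •
      mellin G ((σ : ℂ) + y * Complex.I)) =
      ∫ y : ℝ, (x : ℂ) ^ ((σ : ℂ) + y * Complex.I) * H ((σ : ℂ) + y * Complex.I) := by
    refine integral_congr_ae (Eventually.of_forall fun y => ?_)
    simp only
    rw [(hGm _ (by simp; linarith)).2, smul_eq_mul]
    congr 1
    rw [Complex.cpow_neg, one_div, Complex.ofReal_inv, Complex.inv_cpow, inv_inv]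
    rw [Complex.arg_ofReal_of_nonneg hx0.le]
    exact Real.pi_pos.ne
  rw [hint] at hinv
  have hfin : G (1 / x) * x = ((∑ m ∈ Finset.range (⌊x⌋₊ + 1), idealMangoldt K m * (x - m) -
      (x - 1) ^ 2 / 2 : ℝ) : ℂ) := by
    rw [hG]
    simp only
    rw [sub_mul, smoothSum_inv K hx0, poleKernel_inv hx1, ← Complex.ofReal_sub]
  rw [← Real.norm_eq_abs, ← Complex.norm_real, ← hfin, ← hinv, norm_mul, norm_smul,
    Complex.norm_real, Real.norm_of_nonneg hx0.le]
  have h1 := hB x hx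
  have h2 : ‖1 / (2 * Real.pi)‖ = 1 / (2 * Real.pi) := Real.norm_of_nonneg (by positivity)
  rw [h2]
  have h3 := mul_le_mul_of_nonneg_left h1 (by positivity : 0 ≤ 1 / (2 * Real.pi) * x)
  calc _ = 1 / (2 * Real.pi) * x * ‖∫ y : ℝ, (x : ℂ) ^ ((σ : ℂ) + y * Complex.I) *
        H ((σ : ℂ) + y * Complex.I)‖ := by ring
    _ ≤ _ := h3
    _ = _ := by ring

end Perron

/-! ### Removing the smoothing -/

section Unsmoothing

/-- The Riesz mean `∑_{m ≤ x} f m (x - m)` of a nonnegative sequence is convex, with subgradient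
`∑_{m ≤ x} f m`. -/
lemma riesz_convex (f : ℕ → ℝ) (hf : ∀ m, 0 ≤ f m) {x y : ℝ} (hy : 0 ≤ y) :
    ∑ m ∈ Finset.range (⌊x⌋₊ + 1), f m * (x - m) +
      (y - x) * ∑ m ∈ Finset.range (⌊x⌋₊ + 1), f m ≤
      ∑ m ∈ Finset.range (⌊y⌋₊ + 1), f m * (y - m) := by
  set N := max ⌊x⌋₊ ⌊y⌋₊ + 1 with hN
  have h1 : ∑ m ∈ Finset.range (⌊x⌋₊ + 1), f m * (x - m) +
      (y - x) * ∑ m ∈ Finset.range (⌊x⌋₊ + 1), f m =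
      ∑ m ∈ Finset.range (⌊x⌋₊ + 1), f m * (y - m) := by
    rw [Finset.mul_sum, ← Finset.sum_add_distrib]
    exact Finset.sum_congr rfl fun m _ => by ring
  have h2 : ∑ m ∈ Finset.range (⌊x⌋₊ + 1), f m * (y - m) ≤
      ∑ m ∈ Finset.range (⌊x⌋₊ + 1), f m * max 0 (y - m) :=
    Finset.sum_le_sum fun m _ => mul_le_mul_of_nonneg_left (le_max_right _ _) (hf m)
  have h3 : ∑ m ∈ Finset.range (⌊x⌋₊ + 1), f m * max 0 (y - m) ≤
      ∑ m ∈ Finset.range N, f m * max 0 (y - m) := by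
    refine Finset.sum_le_sum_of_subset_of_nonneg ?_
      fun m _ _ => mul_nonneg (hf m) (le_max_left _ _)
    rw [Finset.range_subset_range]
    omega
  have h4 : ∑ m ∈ Finset.range (⌊y⌋₊ + 1), f m * max 0 (y - m) =
      ∑ m ∈ Finset.range N, f m * max 0 (y - m) := by
    refine Finset.sum_subset ?_ fun m _ hm => ?_
    · rw [Finset.range_subset_range]
      omega
    · rw [Finset.mem_range, not_lt, Nat.succ_le_iff, Nat.floor_lt hy] at hm
      rw [max_eq_left (by linarith), mul_zero]
  have h5 : ∑ m ∈ Finset.range (⌊y⌋₊ + 1), f m * max 0 (y - m) =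
      ∑ m ∈ Finset.range (⌊y⌋₊ + 1), f m * (y - m) := by
    refine Finset.sum_congr rfl fun m hm => ?_
    rw [Finset.mem_range, Nat.lt_succ_iff, Nat.le_floor_iff hy] at hm
    rw [max_eq_right (by linarith)]
  linarith

/-- Passing from the Riesz mean to the summatory function of a nonnegative sequence, by
convexity of the former. -/
lemma unsmooth (f : ℕ → ℝ) (hf : ∀ m, 0 ≤ f m) (C c : ℝ) (hc : 0 < c)
    (h : ∀ x : ℝ, Real.exp 4 ≤ x →
      |∑ m ∈ Finset.range (⌊x⌋₊ + 1), f m * (x - m) - (x - 1) ^ 2 / 2| ≤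
        C * (x ^ 2 * Real.exp (-c * Real.sqrt (Real.log x)))) :
    ∃ C c : ℝ, 0 ≤ C ∧ 0 < c ∧ c ≤ 1 ∧ ∀ x : ℝ, Real.exp 5 ≤ x →
      |∑ m ∈ Finset.range (⌊x⌋₊ + 1), f m - x| ≤
        C * (x * Real.exp (-c * Real.sqrt (Real.log x))) := by
  set d := min c 1 with hd
  have hd0 : 0 < d := lt_min hc one_pos
  have hd1 : d ≤ 1 := min_le_right _ _
  refine ⟨16 * |C| + 2, d / 4, by positivity, by positivity, by linarith, fun x hx => ?_⟩
  have he5 : Real.exp 5 = Real.exp 4 * Real.exp 1 := by rw [← Real.exp_add]; norm_num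
  have he1 : 2 ≤ Real.exp 1 := by linarith [Real.exp_one_gt_d9]
  have hx4 : Real.exp 4 ≤ x / 2 := by nlinarith [Real.exp_pos 4]
  have hx0 : 0 < x := (Real.exp_pos 5).trans_le hx
  set L := Real.log x with hL
  have hL5 : 5 ≤ L := (Real.le_log_iff_exp_le hx0).2 hx
  set R := Real.sqrt L with hR
  have hRsq : R * R = L := Real.mul_self_sqrt (by linarith)
  have hR0 : 0 ≤ R := Real.sqrt_nonneg _
  have hR1 : 1 ≤ R := Real.one_le_sqrt.2 (by linarith)
  set E := Real.exp (-(d / 4) * R) with hE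
  have hE0 : 0 < E := Real.exp_pos _
  have hE1 : E ≤ 1 := by
    rw [hE, Real.exp_le_one_iff]
    have := mul_nonneg hd0.le hR0
    linarith
  -- the error at any point of `[x / 2, 2 x]`
  have herr : ∀ y : ℝ, x / 2 ≤ y → y ≤ 2 * x →
      |∑ m ∈ Finset.range (⌊y⌋₊ + 1), f m * (y - m) - (y - 1) ^ 2 / 2| ≤
        |C| * (4 * x ^ 2 * E ^ 2) := by
    intro y h1 h2
    refine (h y (hx4.trans h1)).trans ?_
    have hy0 : 0 < y := by linarith
    have h3 : R / 2 ≤ Real.sqrt (Real.log y) := by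
      refine Real.le_sqrt_of_sq_le ?_
      have h4 : Real.log (x / 2) ≤ Real.log y := Real.log_le_log (by linarith) h1
      rw [Real.log_div hx0.ne' (by norm_num)] at h4
      have := Real.log_two_lt_d9
      have e : (R / 2) ^ 2 = L / 4 := by rw [← hRsq]; ring
      rw [e]
      linarith
    have h4 : Real.exp (-c * Real.sqrt (Real.log y)) ≤ E ^ 2 := by
      rw [hE, ← Real.exp_nat_mul, Real.exp_le_exp]
      push_cast
      have h5 : d * (R / 2) ≤ c * Real.sqrt (Real.log y) :=
        mul_le_mul (min_le_left _ _) h3 (by linarith) hc.le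
      linarith
    have h5 : y ^ 2 ≤ 4 * x ^ 2 := by
      have := pow_le_pow_left₀ hy0.le h2 2
      linarith
    have h6 : y ^ 2 * Real.exp (-c * Real.sqrt (Real.log y)) ≤ 4 * x ^ 2 * E ^ 2 :=
      mul_le_mul h5 h4 (Real.exp_pos _).le (by positivity)
    exact mul_le_mul (le_abs_self C) h6 (by positivity) (abs_nonneg C)
  -- The error of the Riesz mean is `O(x² E²)`; difference quotients with step `t ≍ x E` lose `O(t)`
  -- from the curvature of the main term and `O(x² E² / t)` from the error.
  set t := x * E / 2 with ht
  have ht0 : 0 < t := by positivity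
  have htx : t ≤ x / 2 := by
    have := mul_le_mul_of_nonneg_left hE1 hx0.le
    linarith
  have hone : 1 ≤ x * E := by
    have hxe : x = Real.exp L := (Real.exp_log hx0).symm
    rw [hxe, hE, ← Real.exp_add, Real.one_le_exp_iff]
    have h1 : d * R ≤ 1 * R := mul_le_mul_of_nonneg_right hd1 hR0
    have h2 : 1 * R ≤ R * R := mul_le_mul_of_nonneg_right hR1 hR0
    linarith
  have a0 := abs_le.1 (herr x (by linarith) (by linarith))
  have a1 := abs_le.1 (herr (x + t) (by linarith) (by linarith))
  have a2 := abs_le.1 (herr (x - t) (by linarith) (by linarith))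
  have b1 := riesz_convex f hf (x := x) (y := x + t) (by linarith)
  have b2 := riesz_convex f hf (x := x) (y := x - t) (by linarith)
  set S := ∑ m ∈ Finset.range (⌊x⌋₊ + 1), f m with hS
  set W := ∑ m ∈ Finset.range (⌊x⌋₊ + 1), f m * (x - m) with hW
  have hCE : |C| * (4 * x ^ 2 * E ^ 2) = t * (8 * |C| * (x * E)) / 2 * 2 := by rw [ht]; ring
  have c1 : t * S ≤ t * (x - 1 + t / 2 + 16 * |C| * (x * E)) := by linarith [hCE]
  have c2 : t * (x - 1 - t / 2 - 16 * |C| * (x * E)) ≤ t * S := by linarith [hCE]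
  have d1 := le_of_mul_le_mul_left c1 ht0
  have d2 := le_of_mul_le_mul_left c2 ht0
  rw [abs_le]
  have e : (16 * |C| + 2) * (x * E) = 16 * |C| * (x * E) + 2 * (x * E) := by ring
  rw [e]
  constructor <;> linarith

end Unsmoothing

/-! ### Split primes -/

section Splitting

open NumberField IsDedekindDomain

lemma liesOver_iff (K : Type*) [Field K] {p : ℕ} (hp : p.Prime) {P : Ideal (𝓞 K)} (hP : P.IsPrime) :
    P.LiesOver (Ideal.span {(p : ℤ)}) ↔ (p : 𝓞 K) ∈ P := by
  rw [Ideal.liesOver_span_iff hP.ne_top (Nat.prime_iff_prime_int.1 hp)]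
  simp

variable (K : Type*) [Field K] [NumberField K]

lemma card_maximal_eq {p : ℕ} (hp : p.Prime) :
    Nat.card {P : Ideal (𝓞 K) // P.IsMaximal ∧ (p : 𝓞 K) ∈ P} =
      (Ideal.primesOver (Ideal.span {(p : ℤ)}) (𝓞 K)).ncard := by
  have h : {P : Ideal (𝓞 K) | P.IsMaximal ∧ (p : 𝓞 K) ∈ P} =
      Ideal.primesOver (Ideal.span {(p : ℤ)}) (𝓞 K) := by
    ext P
    constructor
    · rintro ⟨h1, h2⟩
      exact ⟨h1.isPrime, (liesOver_iff K hp h1.isPrime).2 h2⟩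
    · rintro ⟨h1, h2⟩
      have h3 := (liesOver_iff K hp h1).1 h2
      refine ⟨h1.isMaximal ?_, h3⟩
      rintro rfl
      rw [Ideal.mem_bot] at h3
      exact hp.ne_zero (by exact_mod_cast h3)
  rw [← h, ← Nat.card_coe_set_eq]
  rfl

lemma idealMangoldt_prime {p : ℕ} (hp : p.Prime) :
    idealMangoldt K p =
      {P : HeightOneSpectrum (𝓞 K) | Ideal.absNorm P.asIdeal = p}.ncard * Real.log p := by
  set A := {P : HeightOneSpectrum (𝓞 K) | Ideal.absNorm P.asIdeal = p} with hA
  have h1 : {x : HeightOneSpectrum (𝓞 K) × ℕ | Ideal.absNorm (primePow K x) = p} =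
      (fun P => (P, 0)) '' A := by
    ext ⟨P, j⟩
    simp only [Set.mem_ofPred_eq, Set.mem_image, Prod.mk.injEq, hA]
    constructor
    · intro h
      have h2 : j = 0 := by
        rw [primePow, map_pow] at h
        by_contra hj
        have := Nat.Prime.eq_one_of_pow (x := Ideal.absNorm P.asIdeal) (n := j + 1) (by
          rw [h]; exact hp)
        omega
      subst h2
      exact ⟨P, by simpa [primePow] using h, rfl, rfl⟩
    · rintro ⟨Q, hQ, rfl, rfl⟩
      simpa [primePow] using hQ
  have h2 : ∀ x ∈ (finite_primePow_norm (K := K) p).toFinset,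
      Real.log (Ideal.absNorm x.1.asIdeal) = Real.log p := by
    rintro x hx
    rw [Set.Finite.mem_toFinset] at hx
    have hx' : x ∈ (fun P : HeightOneSpectrum (𝓞 K) => (P, 0)) '' A := h1 ▸ hx
    obtain ⟨P, hP, rfl⟩ := hx'
    have : Ideal.absNorm P.asIdeal = p := hP
    simp only
    rw [this]
  rw [idealMangoldt, finsum_mem_eq_finite_toFinset_sum _ (finite_primePow_norm p),
    Finset.sum_congr rfl h2, Finset.sum_const, nsmul_eq_mul,
    ← Set.ncard_eq_toFinset_card _ (finite_primePow_norm p), h1,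
    Set.ncard_image_of_injective _ (fun P Q h => (Prod.mk.inj h).1)]

lemma ncard_above_eq {p : ℕ} (hp : p.Prime) :
    {P : HeightOneSpectrum (𝓞 K) | (p : 𝓞 K) ∈ P.asIdeal}.ncard =
      Nat.card {P : Ideal (𝓞 K) // P.IsMaximal ∧ (p : 𝓞 K) ∈ P} := by
  rw [← Nat.card_coe_set_eq]
  refine Nat.card_congr ⟨fun P => ⟨P.1.asIdeal, P.1.isMaximal, P.2⟩,
    fun P => ⟨⟨P.1, P.2.1.isPrime, ?_⟩, P.2.2⟩, fun _ => rfl, fun _ => rfl⟩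
  intro h
  have h3 := P.2.2
  rw [h, Ideal.mem_bot] at h3
  exact hp.ne_zero (by exact_mod_cast h3)

/-- Above a completely split prime all `[K : ℚ]` primes have norm `p`, also when ramification is not
excluded beforehand: the norms are at least `p` and multiply to a divisor of `p ^ [K : ℚ]`. -/
lemma idealMangoldt_of_split {p : ℕ} (hp : p.Prime) (h : SplitsCompletely K p) :
    idealMangoldt K p = Module.finrank ℚ K * Real.log p := by
  rw [idealMangoldt_prime K hp]
  congr 2
  have h1 := ncard_above_eq K hp
  rw [SplitsCompletely] at h
  rw [h] at h1
  set B := {P : HeightOneSpectrum (𝓞 K) | (p : 𝓞 K) ∈ P.asIdeal} with hB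
  have hBfin : B.Finite := Set.finite_of_ncard_pos (by rw [h1]; exact Module.finrank_pos)
  have h2 : {P : HeightOneSpectrum (𝓞 K) | Ideal.absNorm P.asIdeal = p} = B := by
    ext P
    simp only [Set.mem_ofPred_eq, hB]
    constructor
    · intro h
      refine mem_of_dvd_absNorm (j := 0) hp ?_
      simp [primePow, h]
    · intro hP
      -- all norms are at least `p`, and their product is at most `p ^ n`
      have h3 := Nat.le_of_dvd (pow_pos hp.pos _)
        (prod_absNorm_dvd K p hBfin.toFinset (fun P hP => by simpa [hB] using hP))
      have hge : ∀ Q ∈ hBfin.toFinset, p ≤ Ideal.absNorm Q.asIdeal := by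
        intro Q hQ
        obtain ⟨f, hf0, hf⟩ := absNorm_of_mem hp (P := Q) (by simpa [hB] using hQ)
        rw [hf]
        exact Nat.le_self_pow hf0.ne' p
      by_contra hne
      have hPm : P ∈ hBfin.toFinset := by simpa [hB] using hP
      have h5 : ∏ Q ∈ hBfin.toFinset, p < ∏ Q ∈ hBfin.toFinset, Ideal.absNorm Q.asIdeal :=
        Finset.prod_lt_prod (fun _ _ => hp.pos) hge
          ⟨P, hPm, lt_of_le_of_ne (hge P hPm) (Ne.symm hne)⟩
      rw [Finset.prod_const, ← Set.ncard_eq_toFinset_card _ hBfin, h1] at h5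
      omega
  rw [h2, h1]

/-- In a Galois extension, an unramified prime having a prime ideal of norm `p` above it splits
completely. -/
lemma idealMangoldt_of_not_split [IsGalois ℚ K] {p : ℕ} (hp : p.Prime)
    (hd : ¬ (p : ℤ) ∣ discr K) (h : ¬ SplitsCompletely K p) :
    idealMangoldt K p = 0 := by
  rw [idealMangoldt_prime K hp]
  suffices h0 : {P : HeightOneSpectrum (𝓞 K) | Ideal.absNorm P.asIdeal = p} = ∅ by
    rw [h0]; simp
  rw [Set.eq_empty_iff_forall_notMem]
  intro P hP
  have hP' : Ideal.absNorm P.asIdeal = p := hP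
  have hmem : (p : 𝓞 K) ∈ P.asIdeal := mem_of_dvd_absNorm (j := 0) hp (by simp [primePow, hP'])
  have hlies : P.asIdeal.LiesOver (Ideal.span {(p : ℤ)}) := (liesOver_iff K hp P.isPrime).2 hmem
  have hprime : P.asIdeal.IsPrime := P.isPrime
  have hpp : (Ideal.span {(p : ℤ)}).IsPrime := by
    rw [Ideal.span_singleton_prime (by exact_mod_cast hp.ne_zero)]
    exact Nat.prime_iff_prime_int.1 hp
  have hpm : (Ideal.span {(p : ℤ)}).IsMaximal := hpp.isMaximal (by simpa using hp.ne_zero)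
  have hunr : Algebra.IsUnramifiedAt ℤ P.asIdeal :=
    (not_dvd_discr_iff_forall_mem K (𝓞 K) (Nat.prime_iff_prime_int.1 hp)).1 hd P.asIdeal P.isPrime
      (by simpa using hmem)
  have he : P.asIdeal.ramificationIdx ℤ = 1 := Ideal.ramificationIdx_eq_one_of_isUnramifiedAt
  have hf : P.asIdeal.inertiaDeg ℤ = 1 := by
    have h1 := Ideal.pow_inertiaDeg p P.asIdeal
    rw [hP'] at h1
    exact Nat.pow_right_injective hp.two_le (by simpa using h1)
  have hmain := Ideal.ncard_primesOver_mul_ramificationIdxIn_mul_inertiaDegIn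
    (Ideal.span {(p : ℤ)}) (𝓞 K) Gal(K/ℚ)
  rw [Ideal.ramificationIdxIn_eq_ramificationIdx _ P.asIdeal Gal(K/ℚ),
    Ideal.inertiaDegIn_eq_inertiaDeg _ P.asIdeal Gal(K/ℚ), he, hf, mul_one, mul_one,
    IsGaloisGroup.card_eq_finrank Gal(K/ℚ) ℚ K] at hmain
  exact h (by rw [SplitsCompletely, card_maximal_eq K hp, hmain])

end Splitting

/-! ### Chebyshev form -/

section SplitTheta

open NumberField

variable (K : Type*) [Field K] [NumberField K]

/-- The weight `log p` on the primes that split completely. -/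
def splitLog (m : ℕ) : ℝ := if m.Prime ∧ SplitsCompletely K m then Real.log m else 0

lemma splitLog_nonneg (m : ℕ) : 0 ≤ splitLog K m := by
  unfold splitLog
  split_ifs
  · positivity
  · exact le_rfl

/-- Up to ramified primes and proper prime powers, `idealMangoldt` is supported on the primes that
split completely. -/
lemma abs_idealMangoldt_sub_le [IsGalois ℚ K] (m : ℕ) :
    |idealMangoldt K m - Module.finrank ℚ K * splitLog K m| ≤
      Module.finrank ℚ K * ((if m.Prime then 0 else ArithmeticFunction.vonMangoldt m) +
        if m ∈ (discr K).natAbs.divisors then Real.log m else 0) := by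
  have h1 := idealMangoldt_le K m
  have h2 := idealMangoldt_nonneg K m
  have h3 := ArithmeticFunction.vonMangoldt_nonneg (n := m)
  have h4 : (0 : ℝ) ≤ if m ∈ (discr K).natAbs.divisors then Real.log m else 0 := by
    split_ifs
    · positivity
    · exact le_rfl
  by_cases hp : m.Prime
  · by_cases hs : SplitsCompletely K m
    · rw [idealMangoldt_of_split K hp hs, splitLog, if_pos ⟨hp, hs⟩, sub_self, abs_zero, if_pos hp,
        zero_add]
      positivity
    · rw [splitLog, if_neg (fun h => hs h.2), mul_zero, sub_zero, abs_of_nonneg h2, if_pos hp,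
        zero_add]
      by_cases hd : (m : ℤ) ∣ discr K
      · rw [if_pos, ← ArithmeticFunction.vonMangoldt_apply_prime hp]
        · exact h1
        · rw [Nat.mem_divisors]
          exact ⟨Int.natCast_dvd.1 hd, Int.natAbs_ne_zero.2 (discr_ne_zero K)⟩
      · rw [idealMangoldt_of_not_split K hp hd hs]
        positivity
  · rw [splitLog, if_neg (fun h => hp h.1), mul_zero, sub_zero, abs_of_nonneg h2, if_neg hp]
    refine h1.trans (mul_le_mul_of_nonneg_left ?_ (by positivity))
    linarith

/-- Prime powers contribute `O(√x)` and the primes dividing the discriminant `O(1)`. -/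
lemma abs_sum_sub_le [IsGalois ℚ K] : ∃ C : ℝ, 0 ≤ C ∧ ∀ x : ℝ, 1 ≤ x →
    |∑ m ∈ Finset.range (⌊x⌋₊ + 1), idealMangoldt K m -
      Module.finrank ℚ K * ∑ m ∈ Finset.range (⌊x⌋₊ + 1), splitLog K m| ≤ C * Real.sqrt x := by
  obtain ⟨C, hC⟩ := Chebyshev.psi_sub_theta_le_mul_sqrt
  set n : ℝ := ((Module.finrank ℚ K : ℕ) : ℝ) with hn
  have hn0 : 0 ≤ n := by positivity
  set B : ℝ := ∑ m ∈ (discr K).natAbs.divisors, Real.log m with hB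
  have hB0 : 0 ≤ B := Finset.sum_nonneg fun m _ => by positivity
  refine ⟨n * (|C| + B), by positivity, fun x hx => ?_⟩
  have hsx : 1 ≤ Real.sqrt x := Real.one_le_sqrt.2 hx
  rw [Finset.mul_sum, ← Finset.sum_sub_distrib]
  refine (Finset.abs_sum_le_sum_abs _ _).trans ?_
  refine (Finset.sum_le_sum fun m _ => abs_idealMangoldt_sub_le K m).trans ?_
  rw [← Finset.mul_sum, mul_assoc]
  refine mul_le_mul_of_nonneg_left ?_ hn0
  rw [Finset.sum_add_distrib, add_mul]
  refine add_le_add ?_ ?_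
  · have h1 : ∑ m ∈ Finset.range (⌊x⌋₊ + 1),
        (if m.Prime then 0 else ArithmeticFunction.vonMangoldt m) =
        Chebyshev.psi x - Chebyshev.theta x := by
      rw [Chebyshev.psi_sub_theta_eq_sum_not_prime, Finset.sum_filter,
        Nat.range_succ_eq_Icc_zero, ← Finset.add_sum_Ioc_eq_sum_Icc (Nat.zero_le _)]
      simp
    rw [h1]
    exact (hC x).trans (mul_le_mul_of_nonneg_right (le_abs_self C) (by positivity))
  · have h1 : ∑ m ∈ Finset.range (⌊x⌋₊ + 1),
        (if m ∈ (discr K).natAbs.divisors then Real.log m else 0) ≤ B := by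
      rw [← Finset.sum_filter]
      refine Finset.sum_le_sum_of_subset_of_nonneg ?_ fun m _ _ => by positivity
      intro m hm
      exact (Finset.mem_filter.1 hm).2
    exact h1.trans (le_mul_of_one_le_right hB0 hsx)

lemma sqrt_le_mul_exp {c x : ℝ} (hc1 : c ≤ 1) (hx : Real.exp 4 ≤ x) :
    Real.sqrt x ≤ x * Real.exp (-c * Real.sqrt (Real.log x)) := by
  have hx0 : 0 < x := (Real.exp_pos 4).trans_le hx
  have hL4 : 4 ≤ Real.log x := (Real.le_log_iff_exp_le hx0).2 hx
  set R := Real.sqrt (Real.log x) with hR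
  have hRsq : R * R = Real.log x := Real.mul_self_sqrt (by linarith)
  have hR2 : 2 ≤ R := Real.le_sqrt_of_sq_le (by linarith)
  have h1 : Real.sqrt x = Real.exp (Real.log x / 2) := by
    rw [Real.sqrt_eq_rpow, Real.rpow_def_of_pos hx0]; congr 1; ring
  have h2 : x * Real.exp (-c * R) = Real.exp (Real.log x + -c * R) := by
    rw [Real.exp_add, Real.exp_log hx0]
  rw [h1, h2, Real.exp_le_exp, ← hRsq]
  have h3 : c * R ≤ 1 * R := mul_le_mul_of_nonneg_right hc1 (by linarith)
  have h4 : 2 * R ≤ R * R := mul_le_mul_of_nonneg_right hR2 (by linarith)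
  linarith

/-- The prime number theorem for the primes that split completely, in Chebyshev form. -/
theorem split_theta [IsGalois ℚ K] : ∃ C c : ℝ, 0 ≤ C ∧ 0 < c ∧ c ≤ 1 ∧ ∀ x : ℝ, 2 ≤ x →
    |∑ m ∈ Finset.range (⌊x⌋₊ + 1), splitLog K m - x / Module.finrank ℚ K| ≤
      C * (x * Real.exp (-c * Real.sqrt (Real.log x))) := by
  obtain ⟨C₀, c₀, hc₀, h₀⟩ := smoothed_psi K
  obtain ⟨C, c, hC, hc, hc1, h⟩ := unsmooth _ (idealMangoldt_nonneg K) C₀ c₀ hc₀ h₀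
  obtain ⟨D, hD, hD'⟩ := abs_sum_sub_le K
  set n : ℝ := ((Module.finrank ℚ K : ℕ) : ℝ) with hn
  have hn1 : 1 ≤ n := by
    rw [hn]; exact_mod_cast (Module.finrank_pos : 0 < Module.finrank ℚ K)
  refine ⟨C + D + 3 * Real.exp 3, c, by positivity, hc, hc1, fun x hx => ?_⟩
  have hx0 : 0 < x := by linarith
  set S := ∑ m ∈ Finset.range (⌊x⌋₊ + 1), splitLog K m with hS
  set E := Real.exp (-c * Real.sqrt (Real.log x)) with hE
  have hE0 : 0 < E := Real.exp_pos _
  rcases le_total (Real.exp 5) x with h5 | h5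
  · have h1 := h x h5
    have h2 := hD' x (by linarith)
    have h3 := sqrt_le_mul_exp hc1 (le_trans (Real.exp_le_exp.2 (by norm_num)) h5)
    have h4 : |n * S - x| ≤ (C + D) * (x * E) := by
      have h6 := mul_le_mul_of_nonneg_left h3 hD
      rw [abs_le] at h1 h2 ⊢
      constructor <;> linarith
    have h7 : S - x / n = (n * S - x) / n := by field_simp
    rw [h7, abs_div, abs_of_pos (by linarith : 0 < n)]
    refine (div_le_self (abs_nonneg _) hn1).trans (h4.trans ?_)
    refine mul_le_mul_of_nonneg_right ?_ (by positivity)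
    have := Real.exp_pos 3
    linarith
  · have hS0 : 0 ≤ S := Finset.sum_nonneg fun m _ => splitLog_nonneg K m
    have hSx : S ≤ 3 * x := by
      have h1 : S ≤ Chebyshev.theta x := by
        rw [Chebyshev.theta_eq_sum_Icc, Finset.sum_filter, ← Nat.range_succ_eq_Icc_zero]
        refine Finset.sum_le_sum fun m _ => ?_
        unfold splitLog
        by_cases hp : m.Prime
        · rw [if_pos hp]
          split_ifs
          · exact le_rfl
          · positivity
        · rw [if_neg hp, if_neg fun h => hp h.1]
      have h2 := Chebyshev.theta_le_log4_mul_x hx0.le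
      have h3 : Real.log 4 ≤ 3 := by
        have := Real.log_le_sub_one_of_pos (show (0 : ℝ) < 4 by norm_num)
        linarith
      have h4 := mul_le_mul_of_nonneg_right h3 hx0.le
      linarith
    have hxn : x / n ≤ x := div_le_self hx0.le hn1
    have hxn0 : 0 ≤ x / n := by positivity
    have h1 : |S - x / n| ≤ 3 * x := by
      rw [abs_le]; constructor <;> linarith
    have h2 : 1 ≤ Real.exp 3 * E := by
      rw [hE, ← Real.exp_add, Real.one_le_exp_iff]
      have h3 : Real.log x ≤ 5 := (Real.log_le_iff_le_exp hx0).2 h5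
      have h4 : Real.sqrt (Real.log x) ≤ 3 := Real.sqrt_le_iff.2 ⟨by norm_num, by linarith⟩
      have h6 := mul_le_mul hc1 h4 (Real.sqrt_nonneg _) zero_le_one
      linarith
    have h3 := mul_le_mul_of_nonneg_left h2 (by positivity : 0 ≤ 3 * x)
    have h4 : 0 ≤ (C + D) * (x * E) := by positivity
    linarith

end SplitTheta

/-! ### Partial summation -/

section PartialSummation

open MeasureTheory

lemma Li_eq {x : ℝ} (hx : 2 ≤ x) :
    Li x = x / Real.log x - 2 / Real.log 2 + ∫ t in (2 : ℝ)..x, 1 / Real.log t ^ 2 := by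
  have hlog : ∀ t ∈ Set.uIcc 2 x, Real.log t ≠ 0 ∧ t ≠ 0 := by
    intro t ht
    rw [Set.uIcc_of_le hx] at ht
    exact ⟨(Real.log_pos (by linarith [ht.1])).ne', by linarith [ht.1]⟩
  have hc : ContinuousOn Real.log (Set.uIcc 2 x) :=
    Real.continuousOn_log.mono fun t ht => (hlog t ht).2
  have i1 : IntervalIntegrable (fun t => 1 / Real.log t) volume 2 x :=
    (continuousOn_const.div hc fun t ht => (hlog t ht).1).intervalIntegrable
  have i2 : IntervalIntegrable (fun t => 1 / Real.log t ^ 2) volume 2 x :=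
    (continuousOn_const.div (hc.pow 2) fun t ht => pow_ne_zero 2 (hlog t ht).1).intervalIntegrable
  have h := intervalIntegral.integral_eq_sub_of_hasDerivAt (a := 2) (b := x)
    (f := fun t => t / Real.log t) (f' := fun t => 1 / Real.log t - 1 / Real.log t ^ 2)
    (fun t ht => by
      have h1 := (hasDerivAt_id t).div (Real.hasDerivAt_log (hlog t ht).2) (hlog t ht).1
      refine h1.congr_deriv ?_
      have := hlog t ht
      simp only [id]
      field_simp [this.1, this.2])
    (i1.sub i2)
  rw [intervalIntegral.integral_sub i1 i2] at h
  rw [Li]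
  linarith

variable (K : Type*) [Field K] [NumberField K]

lemma splitSum_integrable {x : ℝ} (hx : 2 ≤ x) :
    IntervalIntegrable (fun t => (∑ m ∈ Finset.range (⌊t⌋₊ + 1), splitLog K m) /
      (t * Real.log t ^ 2)) volume 2 x := by
  rw [intervalIntegrable_iff_integrableOn_Icc_of_le hx]
  simp_rw [Nat.range_succ_eq_Icc_zero, div_eq_inv_mul]
  refine integrableOn_mul_sum_Icc _ (by norm_num) <| ContinuousOn.integrableOn_Icc fun t ht =>
    ContinuousAt.continuousWithinAt ?_
  have h1 : t ≠ 0 := by linarith [ht.1]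
  have h2 : t * Real.log t ^ 2 ≠ 0 :=
    mul_ne_zero h1 (pow_ne_zero 2 (Real.log_pos (by linarith [ht.1])).ne')
  fun_prop

/-- Abel summation for the number of primes that split completely. -/
lemma countPrimes_eq {x : ℝ} (hx : 2 ≤ x) :
    (countPrimes x (SplitsCompletely K) : ℝ) =
      (∑ m ∈ Finset.range (⌊x⌋₊ + 1), splitLog K m) / Real.log x +
        ∫ t in (2 : ℝ)..x, (∑ m ∈ Finset.range (⌊t⌋₊ + 1), splitLog K m) /
          (t * Real.log t ^ 2) := by
  have h0 : (countPrimes x (SplitsCompletely K) : ℝ) =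
      ∑ m ∈ Finset.Icc 0 ⌊x⌋₊, (Real.log m)⁻¹ * splitLog K m := by
    rw [countPrimes, Finset.card_eq_sum_ones, Nat.range_succ_eq_Icc_zero, Finset.sum_filter]
    push_cast
    refine Finset.sum_congr rfl fun m _ => ?_
    unfold splitLog
    split_ifs with h
    · rw [inv_mul_cancel₀]
      exact (Real.log_pos (by exact_mod_cast h.1.one_lt)).ne'
    · simp
  rw [h0, sum_mul_eq_sub_integral_mul₁ (splitLog K) (f := fun t => (Real.log t)⁻¹)
    (by simp [splitLog]) (by simp [splitLog]), ← intervalIntegral.integral_of_le hx]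
  · simp_rw [Nat.range_succ_eq_Icc_zero]
    rw [sub_eq_add_neg, ← intervalIntegral.integral_neg]
    congr 1
    · rw [div_eq_inv_mul]
    · refine intervalIntegral.integral_congr fun t _ => ?_
      simp only [Real.deriv_inv_log_apply]
      field_simp
  · intro t ht
    have h1 : t ≠ 0 := by linarith [ht.1]
    have h2 : Real.log t ≠ 0 := (Real.log_pos (by linarith [ht.1])).ne'
    fun_prop
  · refine ContinuousOn.integrableOn_Icc fun t ht => ContinuousWithinAt.congr ?_
      (fun _ _ => Real.deriv_inv_log_apply) Real.deriv_inv_log_apply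
    have h1 : t ≠ 0 := by linarith [ht.1]
    have h2 : Real.log t ^ 2 ≠ 0 := pow_ne_zero 2 (Real.log_pos (by linarith [ht.1])).ne'
    exact ContinuousAt.continuousWithinAt (by fun_prop)

end PartialSummation

end

/-- the prime ideal theorem for primes splitting completely in a
normal number field `K`. -/
theorem stmt7 (K : Type*) [Field K] [NumberField K] [IsGalois ℚ K] :
    ∃ c₂ : ℝ, 0 < c₂ ∧
      (fun x : ℝ => (countPrimes x (SplitsCompletely K) : ℝ) -
          Li x / (Module.finrank ℚ K : ℝ)) =O[atTop]
        fun x : ℝ => x * Real.exp (-c₂ * Real.sqrt (Real.log x)) := by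
  obtain ⟨C, c, hC, hc, hc1, h⟩ := split_theta K
  refine ⟨c / 2, by positivity, ?_⟩
  set n : ℝ := ((Module.finrank ℚ K : ℕ) : ℝ) with hn
  have hn1 : 1 ≤ n := by
    rw [hn]; exact_mod_cast (Module.finrank_pos : 0 < Module.finrank ℚ K)
  set M : ℝ := C / Real.log 2 ^ 2 with hM
  have hl2 : 0 < Real.log 2 := Real.log_pos (by norm_num)
  have hM0 : 0 ≤ M := by positivity
  refine Asymptotics.IsBigO.of_bound (C + 2 * M + 2 / Real.log 2) ?_
  filter_upwards [eventually_ge_atTop (Real.exp 4)] with x hx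
  have hx0 : 0 < x := (Real.exp_pos 4).trans_le hx
  set L := Real.log x with hL
  have hL4 : 4 ≤ L := (Real.le_log_iff_exp_le hx0).2 hx
  set R := Real.sqrt L with hR
  have hRsq : R * R = L := Real.mul_self_sqrt (by linarith)
  have hR0 : 0 ≤ R := Real.sqrt_nonneg _
  have hx4 : 4 ≤ x := by linarith [Real.add_one_le_exp (4 : ℝ)]
  have hs2 : 2 ≤ Real.sqrt x := Real.le_sqrt_of_sq_le (by linarith)
  have hsx : Real.sqrt x ≤ x := Real.sqrt_le_iff.2 ⟨hx0.le, by linarith [mul_le_mul_of_nonneg_right hx4 hx0.le, sq x]⟩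
  set E := Real.exp (-(c / 2) * R) with hE
  have hE0 : 0 < E := Real.exp_pos _
  have hsE : Real.sqrt x ≤ x * E := sqrt_le_mul_exp (by linarith) hx
  rw [Real.norm_of_nonneg (by positivity : 0 ≤ x * E), Real.norm_eq_abs]
  set A : ℝ → ℝ := fun t => ∑ m ∈ Finset.range (⌊t⌋₊ + 1), splitLog K m with hA
  set g : ℝ → ℝ := fun t => A t / (t * Real.log t ^ 2) - 1 / n * (1 / Real.log t ^ 2) with hg
  have hi1 : ∀ y : ℝ, 2 ≤ y → IntervalIntegrable (fun t => 1 / n * (1 / Real.log t ^ 2))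
      MeasureTheory.volume 2 y := fun y hy =>
    (Chebyshev.intervalIntegrable_one_div_log_sq (by norm_num) (by linarith)).const_mul _
  have hig : ∀ y : ℝ, 2 ≤ y → IntervalIntegrable g MeasureTheory.volume 2 y := fun y hy =>
    (splitSum_integrable K hy).sub (hi1 y hy)
  have hgb : ∀ t : ℝ, 2 ≤ t → |g t| ≤ M * Real.exp (-c * Real.sqrt (Real.log t)) := by
    intro t ht
    have hlt : Real.log 2 ≤ Real.log t := Real.log_le_log (by norm_num) ht
    have hlt0 : 0 < Real.log t := hl2.trans_le hlt
    have ht0 : 0 < t := by linarith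
    have e : g t = (A t - t / n) / (t * Real.log t ^ 2) := by
      rw [hg]; field_simp
    rw [e, abs_div, abs_of_pos (by positivity : 0 < t * Real.log t ^ 2), div_le_iff₀ (by positivity)]
    refine (h t ht).trans ?_
    have h1 : C ≤ M * Real.log t ^ 2 := by
      rw [hM, div_mul_eq_mul_div, le_div_iff₀ (by positivity)]
      exact mul_le_mul_of_nonneg_left (pow_le_pow_left₀ hl2.le hlt 2) hC
    have h2 := mul_le_mul_of_nonneg_right h1
      (by positivity : 0 ≤ t * Real.exp (-c * Real.sqrt (Real.log t)))
    linarith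
  have hI : |∫ t in (2 : ℝ)..x, g t| ≤ 2 * M * (x * E) := by
    -- On `[2, √x]` the trivial bound suffices; on `[√x, x]` the factor `exp (-c √log t)` is at most
    -- `exp (-(c / 2) √log x)`, which is where the constant `c / 2` comes from.
    have hsplit := intervalIntegral.integral_add_adjacent_intervals (hig _ hs2)
      ((hig _ hs2).symm.trans (hig x (by linarith)))
    have b1 : |∫ t in (2 : ℝ)..Real.sqrt x, g t| ≤ M * Real.sqrt x := by
      have := intervalIntegral.norm_integral_le_of_norm_le_const (a := 2) (b := Real.sqrt x)
        (f := g) (C := M) (fun t ht => by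
          rw [Set.uIoc_of_le hs2] at ht
          refine (hgb t ht.1.le).trans (mul_le_of_le_one_right hM0 ?_)
          rw [Real.exp_le_one_iff]
          have := mul_nonneg hc.le (Real.sqrt_nonneg (Real.log t))
          linarith)
      rw [Real.norm_eq_abs, abs_of_nonneg (by linarith : 0 ≤ Real.sqrt x - 2)] at this
      refine this.trans (mul_le_mul_of_nonneg_left (by linarith) hM0)
    have b2 : |∫ t in Real.sqrt x..x, g t| ≤ M * E * x := by
      have := intervalIntegral.norm_integral_le_of_norm_le_const (a := Real.sqrt x) (b := x)
        (f := g) (C := M * E) (fun t ht => by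
          rw [Set.uIoc_of_le hsx] at ht
          refine (hgb t (by linarith [ht.1])).trans (mul_le_mul_of_nonneg_left ?_ hM0)
          rw [hE, Real.exp_le_exp]
          have h1 : Real.log (Real.sqrt x) ≤ Real.log t :=
            Real.log_le_log (by linarith) ht.1.le
          rw [Real.log_sqrt hx0.le] at h1
          have h2 : R / 2 ≤ Real.sqrt (Real.log t) := by
            refine Real.le_sqrt_of_sq_le ?_
            have e : (R / 2) ^ 2 = L / 4 := by rw [← hRsq]; ring
            rw [e]; linarith
          have h3 := mul_le_mul_of_nonneg_left h2 hc.le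
          linarith)
      rw [Real.norm_eq_abs, abs_of_nonneg (by linarith : 0 ≤ x - Real.sqrt x)] at this
      refine this.trans (mul_le_mul_of_nonneg_left (by linarith) (by positivity))
    rw [← hsplit]
    have b3 := mul_le_mul_of_nonneg_left hsE hM0
    refine (abs_add_le _ _).trans ?_
    linarith
  have hmain : (countPrimes x (SplitsCompletely K) : ℝ) - Li x / n =
      (A x - x / n) / L + (∫ t in (2 : ℝ)..x, g t) + 2 / Real.log 2 / n := by
    rw [countPrimes_eq K (by linarith), Li_eq (by linarith), hg,
      intervalIntegral.integral_sub (splitSum_integrable K (by linarith)) (hi1 x (by linarith)),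
      intervalIntegral.integral_const_mul]
    ring
  rw [hmain]
  have t1 : |(A x - x / n) / L| ≤ C * (x * E) := by
    rw [abs_div, abs_of_pos (by linarith : 0 < L)]
    refine (div_le_self (abs_nonneg _) (by linarith)).trans ((h x (by linarith)).trans ?_)
    refine mul_le_mul_of_nonneg_left (mul_le_mul_of_nonneg_left ?_ hx0.le) hC
    rw [hE, Real.exp_le_exp]
    have := mul_nonneg hc.le hR0
    linarith
  have t2 : |2 / Real.log 2 / n| ≤ 2 / Real.log 2 * (x * E) := by
    rw [abs_of_nonneg (by positivity)]
    refine (div_le_self (by positivity) hn1).trans ?_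
    exact le_mul_of_one_le_right (by positivity) (by linarith)
  refine (abs_add_le _ _).trans ?_
  have := abs_add_le ((A x - x / n) / L) (∫ t in (2 : ℝ)..x, g t)
  linarith
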